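/- arXiv:math/0306404 — 12 statements merged into one kernel-verified Lean document; each statement's English description precedes it below -/
import Mathlib

section
/- Let M be a self-adjoint operator on a complex Hilbert space H and let (P_n) be orthogonal projections with n-dimensional ranges L_n ⊆ Dom(M²) such that P_n x → x for every x ∈ H. If λ is an isolated eigenvalue of M of finite multiplicity and condition (H) holds (for every ψ with Mψ = λψ one has ‖P_n M P_n ψ − λψ‖ → 0 and ‖P_n M² P_n ψ − λ²ψ‖ → 0 as n → ∞), then λ belongs to the uniform limiting set Λ; that is, there exist z_n ∈ Spec₂(M|L_n) with z_n → λ. -/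
open Filter Topology

noncomputable section

variable {H : Type*} [NormedAddCommGroup H] [InnerProductSpace ℂ H] [CompleteSpace H]

/-- The compression `P T |_(ran P)` of a linear operator `T` to the range of `P`. -/
def compress (P : H →L[ℂ] H) (T : H →ₗ[ℂ] H) :
    LinearMap.range (P : H →ₗ[ℂ] H) →ₗ[ℂ] LinearMap.range (P : H →ₗ[ℂ] H) :=
  LinearMap.codRestrict (LinearMap.range (P : H →ₗ[ℂ] H))
    (((P : H →ₗ[ℂ] H).comp T).comp (LinearMap.range (P : H →ₗ[ℂ] H)).subtype)
    fun c => ⟨T c, rfl⟩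

/-- `(M - z)²` as a linear map. -/
def sqz (M : H →ₗ[ℂ] H) (z : ℂ) : H →ₗ[ℂ] H :=
  (M - z • LinearMap.id) ∘ₗ (M - z • LinearMap.id)

/-- The second order spectrum of `M` relative to the range of `P`:  the set of `z ∈ ℂ` for
which the compression of `(M - z)²` to the range of `P` is not invertible. -/
def spec2 (M : H →ₗ[ℂ] H) (P : H →L[ℂ] H) : Set ℂ :=
  {z | ¬ Function.Bijective (compress P (sqz M z))}

/-- The spectrum of the (possibly unbounded) operator obtained by restricting the linear map
`M` to the subspace `D`:  the complement of the resolvent set. -/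
def pspec (D : Submodule ℂ H) (M : H →ₗ[ℂ] H) : Set ℂ :=
  {z | ¬ ∃ R : H →L[ℂ] H, (∀ x ∈ D, R (M x - z • x) = x) ∧
      ∀ y : H, R y ∈ D ∧ M (R y) - z • R y = y}

/-- Maximum modulus argument for a quadratic pencil. -/
lemma pencil_bound {V : Type*} [NormedAddCommGroup V] [NormedSpace ℂ V] [CompleteSpace V]
    (A0 A1 : V →L[ℂ] V) (r c : ℝ) (hr : 0 < r) (hc : 0 < c)
    (hu : ∀ z : ℂ, ‖z‖ ≤ r → IsUnit (A0 - (2 * z) • A1 + (z ^ 2) • (1 : V →L[ℂ] V)))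
    (hlow : ∀ z : ℂ, ‖z‖ = r → ∀ v : V,
      c * ‖v‖ ≤ ‖(A0 - (2 * z) • A1 + (z ^ 2) • (1 : V →L[ℂ] V)) v‖) (u : V) :
    c * ‖u‖ ≤ ‖A0 u‖ := by
  set A : ℂ → (V →L[ℂ] V) := fun z => A0 - (2 * z) • A1 + (z ^ 2) • (1 : V →L[ℂ] V) with hA
  have hAd : Differentiable ℂ A := by
    rw [hA]; fun_prop
  have hd : ∀ z : ℂ, ‖z‖ ≤ r → DifferentiableAt ℂ (fun z => Ring.inverse (A z) (A0 u)) z := by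
    intro z hz
    obtain ⟨U, hU⟩ := hu z hz
    have h1 : DifferentiableAt ℂ (Ring.inverse : (V →L[ℂ] V) → _) (A z) := by
      have := differentiableAt_inverse (𝕜 := ℂ) (hu z hz)
      exact this
    have h2 : DifferentiableAt ℂ (fun z => Ring.inverse (A z)) z :=
      DifferentiableAt.comp z h1 (hAd z)
    exact h2.clm_apply (differentiableAt_const _)
  have hcancel : ∀ z : ℂ, ‖z‖ ≤ r → ∀ v, A z (Ring.inverse (A z) v) = v := by
    intro z hz v
    have := Ring.mul_inverse_cancel _ (hu z hz)
    exact congrArg (fun T : V →L[ℂ] V => T v) this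
  have hcancel' : ∀ z : ℂ, ‖z‖ ≤ r → ∀ v, Ring.inverse (A z) (A z v) = v := by
    intro z hz v
    have := Ring.inverse_mul_cancel _ (hu z hz)
    exact congrArg (fun T : V →L[ℂ] V => T v) this
  have hdc : DiffContOnCl ℂ (fun z => Ring.inverse (A z) (A0 u)) (Metric.ball 0 r) := by
    apply DifferentiableOn.diffContOnCl
    intro z hz
    rw [closure_ball _ hr.ne'] at hz
    exact (hd z (by simpa using hz)).differentiableWithinAt
  have hmax := Complex.norm_le_of_forall_mem_frontier_norm_le (C := ‖A0 u‖ / c)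
    Metric.isBounded_ball hdc (by
      intro z hz
      rw [frontier_ball _ hr.ne'] at hz
      have hz' : ‖z‖ = r := by simpa using hz
      have h := hlow z hz' (Ring.inverse (A z) (A0 u))
      have h3 := hcancel z hz'.le (A0 u)
      rw [le_div_iff₀ hc]
      change c * _ ≤ ‖A z _‖ at h
      rw [h3] at h
      linarith) (z := 0) (subset_closure (by simpa using hr))
  have h0 : A 0 = A0 := by simp [hA]
  have h4 := hcancel' 0 (by simpa using hr.le) u
  rw [h0] at h4
  simp only [h0, h4] at hmax
  rw [le_div_iff₀ hc] at hmax
  linarith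

/-- Pointwise convergence to zero on a finite-dimensional space is uniform. -/
lemma uniform_of_pointwise (E : Submodule ℂ H) [FiniteDimensional ℂ E]
    (T : ℕ → H →ₗ[ℂ] H) (hT : ∀ ψ ∈ E, Tendsto (fun n => T n ψ) atTop (𝓝 0))
    (δ : ℝ) (hδ : 0 < δ) : ∀ᶠ n in atTop, ∀ ψ ∈ E, ‖T n ψ‖ ≤ δ * ‖ψ‖ := by
  set b := stdOrthonormalBasis ℂ E
  have hsum : Tendsto (fun n => ∑ i, ‖T n (b i)‖) atTop (𝓝 0) := by
    have : Tendsto (fun n => ∑ i, ‖T n (b i)‖) atTop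
        (𝓝 (∑ i : Fin (Module.finrank ℂ E), (0 : ℝ))) := by
      apply tendsto_finsetSum
      intro i _
      exact tendsto_zero_iff_norm_tendsto_zero.1 (hT _ (b i).2)
    simpa using this
  filter_upwards [hsum.eventually (gt_mem_nhds hδ)] with n hn ψ hψ
  have hrepr : ψ = ∑ i, (inner ℂ (b i) (⟨ψ, hψ⟩ : E)) • (b i : H) := by
    have := congrArg (Subtype.val) (b.sum_repr' ⟨ψ, hψ⟩)
    simpa using this.symm
  have hco : ∀ i, ‖(inner ℂ (b i) (⟨ψ, hψ⟩ : E) : ℂ)‖ ≤ ‖ψ‖ := by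
    intro i
    have := norm_inner_le_norm (𝕜 := ℂ) (b i) (⟨ψ, hψ⟩ : E)
    simpa using this
  calc ‖T n ψ‖ = ‖∑ i, (inner ℂ (b i) (⟨ψ, hψ⟩ : E) : ℂ) • T n (b i : H)‖ := by
        conv_lhs => rw [hrepr]
        simp [map_sum]
    _ ≤ ∑ i, ‖ψ‖ * ‖T n (b i : H)‖ := by
        apply norm_sum_le_of_le
        intro i _
        rw [norm_smul]
        exact mul_le_mul_of_nonneg_right (hco i) (norm_nonneg _)
    _ = (∑ i, ‖T n (b i)‖) * ‖ψ‖ := by rw [← Finset.mul_sum, mul_comm]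
    _ ≤ δ * ‖ψ‖ := mul_le_mul_of_nonneg_right hn.le (norm_nonneg _)

/-- Spectral gap: on the orthogonal complement of the kernel, `N` is bounded below. -/
lemma gap (D : Submodule ℂ H) (N : H →ₗ[ℂ] H)
    (hsym : ∀ u ∈ D, ∀ v ∈ D, (inner ℂ (N u) v : ℂ) = inner ℂ u (N v))
    (ε : ℝ) (hε : 0 < ε) (hiso : ∀ z ∈ pspec D N, z ≠ 0 → ε ≤ ‖z‖) :
    ∀ v ∈ D, (∀ e ∈ D, N e = 0 → (inner ℂ e v : ℂ) = 0) → ε / 2 * ‖v‖ ≤ ‖N v‖ := by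
  set x : ℝ := ε / 4 with hx
  have hx0 : 0 < x := by positivity
  have hxC : (x : ℂ) ≠ 0 := by exact_mod_cast hx0.ne'
  have hres : ∀ z : ℂ, z ≠ 0 → ‖z‖ < ε → ∃ R : H →L[ℂ] H,
      (∀ x ∈ D, R (N x - z • x) = x) ∧ ∀ y : H, R y ∈ D ∧ N (R y) - z • R y = y := by
    intro z hz hz'
    by_contra h
    exact absurd (hiso z h hz) (not_le.2 hz')
  obtain ⟨R, hR1, hR2⟩ := hres x hxC (by
    rw [Complex.norm_real, Real.norm_of_nonneg hx0.le]; linarith)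
  have hRsa : IsSelfAdjoint R := by
    rw [ContinuousLinearMap.isSelfAdjoint_iff_isSymmetric]
    intro y y'
    change inner ℂ (R y) y' = inner ℂ y (R y')
    obtain ⟨h1, h2⟩ := hR2 y
    obtain ⟨h3, h4⟩ := hR2 y'
    conv_lhs => rw [← h4]
    conv_rhs => rw [← h2]
    rw [inner_sub_left, inner_sub_right, hsym _ h1 _ h3, inner_smul_left, inner_smul_right]
    simp
  have hspec : ∀ t ∈ spectrum ℝ R, t ≠ -(4 / ε) → |t| ≤ 4 / (3 * ε) := by
    intro t ht htne
    by_cases ht0 : t = 0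
    · subst ht0; simp; positivity
    have htC : (t : ℂ) ≠ 0 := by exact_mod_cast ht0
    set z : ℝ := x + 1 / t with hz
    have hzt : z - x = 1 / t := by rw [hz]; ring
    have hz0 : z ≠ 0 := by
      intro h
      apply htne
      rw [hz] at h
      have : 1 / t = - (ε / 4) := by rw [hx] at h; linarith
      field_simp at this ⊢
      linarith
    have hzp : (z : ℂ) ∈ pspec D N := by
      by_contra hcon
      have hcon' : ∃ R : H →L[ℂ] H, (∀ x ∈ D, R (N x - (z : ℂ) • x) = x) ∧
        ∀ y : H, R y ∈ D ∧ N (R y) - (z : ℂ) • R y = y := not_not.1 hcon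
      obtain ⟨Z, hZ1, hZ2⟩ := hcon'
      apply ht
      have e1 : ∀ y, R (Z y) = (t : ℂ) • (Z y - R y) := by
        intro y
        obtain ⟨h1, h2⟩ := hZ2 y
        have h3 := hR1 _ h1
        have h4 : N (Z y) - (x : ℂ) • Z y = y + (1 / t : ℂ) • Z y := by
          have : (1 / t : ℂ) = z - x := by rw [hz]; push_cast; ring
          rw [this, sub_smul, sub_eq_iff_eq_add.1 h2]
          abel
        rw [h4, map_add, map_smul] at h3
        have h5 : (1 / t : ℂ) • R (Z y) = Z y - R y :=
          eq_sub_iff_add_eq'.2 h3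
        rw [← h5, smul_smul]; field_simp; simp
      have e2 : ∀ y, Z (R y) = (t : ℂ) • (Z y - R y) := by
        intro y
        obtain ⟨h1, h2⟩ := hR2 y
        have h3 := hZ1 _ h1
        have h4 : N (R y) - (z : ℂ) • R y = y - (1 / t : ℂ) • R y := by
          have : (1 / t : ℂ) = z - x := by rw [hz]; push_cast; ring
          rw [this, sub_smul, sub_eq_iff_eq_add.1 h2]
          abel
        rw [h4, map_sub, map_smul] at h3
        have h5 : (1 / t : ℂ) • Z (R y) = Z y - R y :=
          eq_sub_iff_add_eq'.2 (sub_eq_iff_eq_add.1 h3).symm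
        rw [← h5, smul_smul]; field_simp; simp
      have key : ∀ w w' : H, w' = (t : ℂ) • w → w = (1 / t : ℂ) • w' := by
        intro w w' h; rw [h, smul_smul]; field_simp; simp
      let B : H →L[ℂ] H := (1 / t : ℂ) • (1 + (1 / t : ℂ) • Z)
      have hamap : ∀ y : H, (algebraMap ℝ (H →L[ℂ] H) t) y = (t : ℂ) • y := by
        intro y
        rw [Algebra.algebraMap_eq_smul_one]
        simp
      have hl : (algebraMap ℝ (H →L[ℂ] H) t - R) * B = 1 := by
        ext y
        simp only [B, mul_apply_eq_comp, sub_apply, hamap,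
          smul_apply, add_apply,
          one_apply_eq_self, map_smul, map_add, e1]
        match_scalars <;> field_simp <;> ring
      have hr : B * (algebraMap ℝ (H →L[ℂ] H) t - R) = 1 := by
        ext y
        simp only [B, mul_apply_eq_comp, sub_apply, hamap,
          smul_apply, add_apply,
          one_apply_eq_self, map_smul, map_sub, e2]
        match_scalars <;> field_simp <;> ring
      exact ⟨⟨_, B, hl, hr⟩, rfl⟩
    have h1 := hiso _ hzp (by exact_mod_cast hz0)
    rw [Complex.norm_real, Real.norm_eq_abs] at h1
    have h2 : 3 * ε / 4 ≤ |1 / t| := by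
      rw [← hzt]
      have := abs_sub_abs_le_abs_sub z x
      rw [abs_of_pos hx0] at this
      linarith
    rw [abs_div, abs_one] at h2
    have ht' : 0 < |t| := abs_pos.2 ht0
    rw [le_div_iff₀ ht'] at h2
    rw [le_div_iff₀ (by positivity)]
    linarith
  -- functional calculus
  let h : ℝ → ℝ := fun t => min 1 (3 * ε / 8 * |t + 4 / ε|)
  have hcont : Continuous h := by fun_prop
  have hh0 : h (-(4 / ε)) = 0 := by simp [h]
  have hh1 : ∀ t ∈ spectrum ℝ R, t ≠ -(4 / ε) → h t = 1 := by
    intro t ht htne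
    have h1 := hspec t ht htne
    apply min_eq_left
    have h2 : 8 / (3 * ε) ≤ |t + 4 / ε| := by
      have h3 : -(4 / (3 * ε)) ≤ t := (abs_le.1 h1).1
      refine le_trans ?_ (le_abs_self _)
      have : 4 / ε = 8 / (3 * ε) + 4 / (3 * ε) := by field_simp; norm_num
      linarith
    calc (1 : ℝ) = 3 * ε / 8 * (8 / (3 * ε)) := by field_simp
      _ ≤ _ := by gcongr
  set S : H →L[ℂ] H := cfc h R with hS
  have hSsa : IsSelfAdjoint S := cfc_predicate h R
  have hmul : (R + algebraMap ℝ (H →L[ℂ] H) (4 / ε)) * (1 - S) = 0 := by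
    have e1 : cfc (fun t : ℝ => t + 4 / ε) R = R + algebraMap ℝ (H →L[ℂ] H) (4 / ε) := by
      rw [cfc_add_const (4 / ε) (fun t : ℝ => t) R, cfc_id' ℝ R]
    have e2 : cfc (fun t : ℝ => 1 - h t) R = 1 - S := by
      rw [cfc_sub (fun _ => 1) h R, cfc_const_one ℝ R]
    rw [← e1, ← e2, ← cfc_mul _ _ R (by fun_prop) (by fun_prop)]
    rw [← cfc_const_zero ℝ R]
    apply cfc_congr
    intro t ht
    by_cases h' : t = -(4 / ε)
    · simp [h']
    · simp [hh1 t ht h']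
  have hrange : ∀ y, (1 - S) y ∈ D ∧ N ((1 - S) y) = 0 := by
    intro y
    set w := (1 - S) y
    have h1 : R w + ((4 / ε : ℝ) : ℂ) • w = 0 := by
      have := congrArg (fun T : H →L[ℂ] H => T y) hmul
      simp only [mul_apply_eq_comp, add_apply] at this
      rw [Algebra.algebraMap_eq_smul_one] at this
      rw [Complex.coe_smul]
      exact this
    have hxe : ((4 / ε : ℝ) : ℂ) = (x : ℂ)⁻¹ := by rw [hx]; push_cast; field_simp
    rw [hxe] at h1
    obtain ⟨h2, h3⟩ := hR2 w
    have h4 : w = -((x : ℂ) • R w) := by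
      rw [eq_neg_of_add_eq_zero_left h1, smul_neg, smul_smul, mul_inv_cancel₀ hxC]; simp
    have h5 : N (R w) = 0 := by
      have : N (R w) = w + (x : ℂ) • R w := by rw [← sub_eq_iff_eq_add]; exact h3
      rw [this]; nth_rewrite 1 [h4]; simp
    constructor
    · rw [h4]; exact D.neg_mem (D.smul_mem _ h2)
    · rw [h4]; simp [h5]
  intro v hv hperp
  have hSv : S v = v := by
    have hsa1 : IsSelfAdjoint (1 - S) := (IsSelfAdjoint.one _).sub hSsa
    rw [ContinuousLinearMap.isSelfAdjoint_iff_isSymmetric] at hsa1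
    have h1 : (inner ℂ ((1 - S) v) ((1 - S) v) : ℂ) = 0 := by
      have h2 : (inner ℂ ((1 - S) ((1 - S) v)) v : ℂ) = inner ℂ ((1 - S) v) ((1 - S) v) :=
        hsa1 _ _
      rw [← h2]
      exact hperp _ (hrange _).1 (hrange _).2
    have h3 := inner_self_eq_zero.1 h1
    simp only [sub_apply, one_apply_eq_self] at h3
    exact (sub_eq_zero.1 h3).symm
  have hSR : ‖S * R‖ ≤ 4 / (3 * ε) := by
    have : S * R = cfc (fun t : ℝ => h t * t) R := by
      rw [cfc_mul h (fun t => t) R (by fun_prop) (by fun_prop), cfc_id' ℝ R]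
    rw [this]
    apply norm_cfc_le (by positivity)
    intro t ht
    by_cases h' : t = -(4 / ε)
    · rw [h', hh0]; simp; positivity
    · rw [hh1 t ht h', one_mul]; exact hspec t ht h'
  have hfin : ‖v‖ ≤ 4 / (3 * ε) * (‖N v‖ + x * ‖v‖) := by
    calc ‖v‖ = ‖(S * R) (N v - (x : ℂ) • v)‖ := by
          rw [mul_apply_eq_comp, hR1 v hv, hSv]
      _ ≤ ‖S * R‖ * ‖N v - (x : ℂ) • v‖ := ContinuousLinearMap.le_opNorm _ _
      _ ≤ 4 / (3 * ε) * (‖N v‖ + x * ‖v‖) := by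
          gcongr
          refine (norm_sub_le _ _).trans ?_
          rw [norm_smul, Complex.norm_real, Real.norm_of_nonneg hx0.le]
  rw [div_mul_eq_mul_div, le_div_iff₀ (by positivity), hx] at hfin
  linarith

lemma inner_sqz (D : Submodule ℂ H) (N : H →ₗ[ℂ] H)
    (hsym : ∀ u ∈ D, ∀ v ∈ D, (inner ℂ (N u) v : ℂ) = inner ℂ u (N v)) (z : ℂ)
    (a b : H) (ha : a ∈ D) (hb : b ∈ D) (hNb : N b ∈ D) :
    (inner ℂ a (sqz N z b) : ℂ) = inner ℂ (N a - (starRingEnd ℂ z) • a) (N b - z • b) := by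
  have hw : N b - z • b ∈ D := D.sub_mem hNb (D.smul_mem _ hb)
  have : sqz N z b = N (N b - z • b) - z • (N b - z • b) := by simp [sqz]
  rw [this, inner_sub_right, ← hsym a ha _ hw, inner_sub_left, inner_smul_left, inner_smul_right,
    Complex.conj_conj]

lemma sqz_apply' (N : H →ₗ[ℂ] H) (z : ℂ) (b : H) :
    sqz N z b = N (N b) - (2 * z) • N b + (z ^ 2) • b := by
  simp only [sqz, LinearMap.comp_apply, LinearMap.sub_apply, LinearMap.smul_apply,
    LinearMap.id_apply, map_sub, map_smul]
  match_scalars <;> ring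

/-- Uniform lower bound on a small circle. -/
lemma low (D : Submodule ℂ H) (N : H →ₗ[ℂ] H)
    (hsym : ∀ u ∈ D, ∀ v ∈ D, (inner ℂ (N u) v : ℂ) = inner ℂ u (N v))
    (P : H →L[ℂ] H) (hPsa : IsSelfAdjoint P) (hPidem : IsIdempotentElem P)
    (hPdom : ∀ v ∈ LinearMap.range (P : H →ₗ[ℂ] H), v ∈ D ∧ N v ∈ D)
    [FiniteDimensional ℂ ↥(D ⊓ LinearMap.ker N)]
    (γ : ℝ) (hgap : ∀ v ∈ D, (∀ e ∈ D, N e = 0 → (inner ℂ e v : ℂ) = 0) → γ * ‖v‖ ≤ ‖N v‖)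
    (r : ℝ) (hr : 0 < r) (hr1 : r ≤ 1) (hrγ : 8 * r ≤ γ)
    (h0 : ∀ ψ ∈ D ⊓ LinearMap.ker N, ‖P ψ - ψ‖ ≤ r ^ 2 / 32 * ‖ψ‖)
    (h1 : ∀ ψ ∈ D ⊓ LinearMap.ker N, ‖P (N (P ψ))‖ ≤ r ^ 2 / 32 * ‖ψ‖)
    (h2 : ∀ ψ ∈ D ⊓ LinearMap.ker N, ‖P (N (N (P ψ)))‖ ≤ r ^ 2 / 32 * ‖ψ‖)
    (z : ℂ) (hz : ‖z‖ = r) (u : H) (hu : u ∈ LinearMap.range (P : H →ₗ[ℂ] H)) :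
    r ^ 2 / 8 * ‖u‖ ≤ ‖P (sqz N z u)‖ := by
  have hsymP : ∀ a b : H, (inner ℂ (P a) b : ℂ) = inner ℂ a (P b) := by
    rw [ContinuousLinearMap.isSelfAdjoint_iff_isSymmetric] at hPsa
    exact hPsa
  have hPP : ∀ a, P (P a) = P a := fun a =>
    congrArg (fun T : H →L[ℂ] H => T a) hPidem
  have hPu : P u = u := by
    obtain ⟨w, hw⟩ := hu
    rw [← hw]; exact hPP w
  obtain ⟨huD, huD2⟩ := hPdom u hu
  set E := D ⊓ LinearMap.ker N with hE
  set ψ : H := E.starProjection u with hψdef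
  have hψ : ψ ∈ E := Submodule.starProjection_apply_mem _ _
  have horth : ∀ e ∈ E, (inner ℂ e (u - ψ) : ℂ) = 0 := by
    intro e he
    exact (Submodule.mem_orthogonal E _).1 (Submodule.sub_starProjection_mem_orthogonal u) e he
  have hψu : (inner ℂ ψ u : ℂ) = (‖ψ‖ : ℂ) ^ 2 := by
    have := horth ψ hψ
    rw [inner_sub_right, sub_eq_zero] at this
    rw [this, inner_self_eq_norm_sq_to_K]; rfl
  -- step 1
  have s1 : r ^ 2 * ‖ψ‖ ≤ r ^ 2 / 8 * ‖u‖ + ‖P (sqz N z u)‖ := by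
    set zb := (starRingEnd ℂ) z with hzb
    have hzbn : ‖zb‖ = r := by rw [hzb, RCLike.norm_conj, hz]
    obtain ⟨hpD, hpD2⟩ := hPdom (P ψ) ⟨ψ, rfl⟩
    have e1 : (inner ℂ ψ (P (sqz N z u)) : ℂ) = inner ℂ (P (sqz N zb (P ψ))) u := by
      rw [← hsymP, hsymP _ u, hPu, inner_sqz D N hsym z _ _ hpD huD huD2,
        ← inner_conj_symm, ← inner_conj_symm (sqz N zb (P ψ)) u,
        inner_sqz D N hsym zb _ _ huD hpD hpD2, hzb, Complex.conj_conj]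
    set w := P (sqz N zb (P ψ)) - zb ^ 2 • ψ with hw
    have hwn : ‖w‖ ≤ r ^ 2 / 8 * ‖ψ‖ := by
      have : w = P (N (N (P ψ))) - (2 * zb) • P (N (P ψ)) + zb ^ 2 • (P ψ - ψ) := by
        rw [hw, sqz_apply', map_add, map_sub, map_smul, map_smul, hPP, smul_sub]; abel
      rw [this]
      refine (norm_add_le _ _).trans ?_
      have a1 := norm_sub_le (P (N (N (P ψ)))) ((2 * zb) • P (N (P ψ)))
      rw [norm_smul, norm_mul, hzbn] at a1
      rw [norm_smul, norm_pow, hzbn]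
      have b0 := h0 ψ hψ
      have b1 := h1 ψ hψ
      have b2 := h2 ψ hψ
      have c1 : ‖(2 : ℂ)‖ * r * ‖P (N (P ψ))‖ ≤ 2 * (r ^ 2 / 32 * ‖ψ‖) := by
        rw [Complex.norm_two]
        have : r * ‖P (N (P ψ))‖ ≤ 1 * (r ^ 2 / 32 * ‖ψ‖) :=
          mul_le_mul hr1 b1 (norm_nonneg _) zero_le_one
        linarith
      have c2 : r ^ 2 * ‖P ψ - ψ‖ ≤ 1 * (r ^ 2 / 32 * ‖ψ‖) :=
        mul_le_mul (pow_le_one₀ hr.le hr1) b0 (norm_nonneg _) zero_le_one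
      linarith
    have e2 : z ^ 2 * (‖ψ‖ : ℂ) ^ 2 = inner ℂ ψ (P (sqz N z u)) - inner ℂ w u := by
      rw [e1, hw, inner_sub_left, inner_smul_left, hψu, hzb]
      simp
    have e3 := congrArg norm e2
    rw [norm_mul, norm_pow, norm_pow, hz, Complex.norm_real, norm_norm] at e3
    have e4 := norm_sub_le (inner ℂ ψ (P (sqz N z u)) : ℂ) (inner ℂ w u)
    have e5 := norm_inner_le_norm (𝕜 := ℂ) ψ (P (sqz N z u))
    have e6 := norm_inner_le_norm (𝕜 := ℂ) w u
    have e7 : ‖w‖ * ‖u‖ ≤ r ^ 2 / 8 * ‖ψ‖ * ‖u‖ :=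
      mul_le_mul_of_nonneg_right hwn (norm_nonneg _)
    rcases (norm_nonneg ψ).eq_or_lt with h | h
    · rw [← h, mul_zero]; positivity
    · refine le_of_mul_le_mul_left ?_ h
      linarith
  -- step 2
  have s2 : γ * (‖u‖ - ‖ψ‖) ≤ ‖N u‖ := by
    have hψD : ψ ∈ D := hψ.1
    have hNψ : N ψ = 0 := hψ.2
    have := hgap (u - ψ) (D.sub_mem huD hψD) (fun e he he0 => horth e ⟨he, he0⟩)
    rw [map_sub, hNψ, sub_zero] at this
    refine le_trans ?_ this
    exact mul_le_mul_of_nonneg_left (norm_sub_norm_le _ _) (by linarith)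
  -- step 3
  have s3 : ‖N u‖ ^ 2 - 2 * r * ‖N u‖ * ‖u‖ - r ^ 2 * ‖u‖ ^ 2 ≤ ‖u‖ * ‖P (sqz N z u)‖ := by
    have e1 : (inner ℂ u (P (sqz N z u)) : ℂ) =
        (‖N u‖ : ℂ) ^ 2 - (z * inner ℂ (N u) u + z * inner ℂ u (N u) - z ^ 2 * (‖u‖ : ℂ) ^ 2) := by
      rw [← hsymP, hPu, inner_sqz D N hsym z _ _ huD huD huD2]
      simp only [inner_sub_left, inner_sub_right, inner_smul_left, inner_smul_right,
        Complex.conj_conj, inner_self_eq_norm_sq_to_K]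
      simp only [Complex.coe_algebraMap]
      ring
    have e2 := norm_inner_le_norm (𝕜 := ℂ) u (P (sqz N z u))
    rw [e1] at e2
    have e3 := norm_sub_norm_le ((‖N u‖ : ℂ) ^ 2)
      (z * inner ℂ (N u) u + z * inner ℂ u (N u) - z ^ 2 * (‖u‖ : ℂ) ^ 2)
    have e4 : ‖z * inner ℂ (N u) u + z * inner ℂ u (N u) - z ^ 2 * (‖u‖ : ℂ) ^ 2‖ ≤
        r * (‖N u‖ * ‖u‖) + r * (‖u‖ * ‖N u‖) + r ^ 2 * ‖u‖ ^ 2 := by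
      refine (norm_sub_le _ _).trans (add_le_add ((norm_add_le _ _).trans (add_le_add ?_ ?_)) ?_)
      · rw [norm_mul, hz]
        exact mul_le_mul_of_nonneg_left (norm_inner_le_norm _ _) hr.le
      · rw [norm_mul, hz]
        exact mul_le_mul_of_nonneg_left (norm_inner_le_norm _ _) hr.le
      · rw [norm_mul, norm_pow, norm_pow, hz, Complex.norm_real, norm_norm]
    have e5 : ‖(‖N u‖ : ℂ) ^ 2‖ = ‖N u‖ ^ 2 := by
      rw [norm_pow, Complex.norm_real, norm_norm]
    rw [e5] at e3
    linarith
  by_contra hcon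
  push Not at hcon
  set U := ‖u‖
  set q := ‖P (sqz N z u)‖
  set a := ‖N u‖
  set p := ‖ψ‖
  have hU : 0 < U := by
    by_contra h
    have hU0 : U = 0 := le_antisymm (not_lt.1 h) (norm_nonneg _)
    rw [hU0, mul_zero] at hcon
    exact absurd (norm_nonneg (P (sqz N z u))) (not_le.2 hcon)
  have hp : p ≤ U / 4 := by
    have : r ^ 2 * p ≤ r ^ 2 * (U / 4) := by linarith
    exact le_of_mul_le_mul_left this (by positivity)
  have ha : 6 * (r * U) ≤ a := by
    have : (8 * r) * (3 / 4 * U) ≤ γ * (U - p) :=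
      mul_le_mul hrγ (by linarith) (by positivity) (by linarith)
    linarith
  have hrU : 0 < r * U := by positivity
  have hb : (6 * (r * U)) * (4 * (r * U)) ≤ a * (a - 2 * (r * U)) :=
    mul_le_mul ha (by linarith) (by positivity) (by linarith)
  have hq : U * q < U * (r ^ 2 / 8 * U) := mul_lt_mul_of_pos_left hcon hU
  nlinarith [mul_pos hrU hrU]

lemma isUnit_of_not_mem_spec2 (N : H →ₗ[ℂ] H) (P : H →L[ℂ] H) (hPidem : IsIdempotentElem P)
    [FiniteDimensional ℂ (LinearMap.range (P : H →ₗ[ℂ] H))] :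
    ∃ A0 A1 : LinearMap.range (P : H →ₗ[ℂ] H) →L[ℂ] LinearMap.range (P : H →ₗ[ℂ] H),
      (∀ u, (A0 u : H) = P (N (N u))) ∧
      (∀ (z : ℂ) u, ((A0 - (2 * z) • A1 + (z ^ 2) • 1 :
        LinearMap.range (P : H →ₗ[ℂ] H) →L[ℂ] LinearMap.range (P : H →ₗ[ℂ] H)) u : H)
          = P (sqz N z u)) ∧
      ∀ z : ℂ, z ∉ spec2 N P → IsUnit (A0 - (2 * z) • A1 + (z ^ 2) • 1 :
        LinearMap.range (P : H →ₗ[ℂ] H) →L[ℂ] LinearMap.range (P : H →ₗ[ℂ] H)) := by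
  have hPP : ∀ a, P (P a) = P a := fun a =>
    congrArg (fun T : H →L[ℂ] H => T a) hPidem
  let A0 := LinearMap.toContinuousLinearMap (compress P (N ∘ₗ N))
  let A1 := LinearMap.toContinuousLinearMap (compress P N)
  have key : ∀ (z : ℂ) u, ((A0 - (2 * z) • A1 + (z ^ 2) • 1 :
        LinearMap.range (P : H →ₗ[ℂ] H) →L[ℂ] LinearMap.range (P : H →ₗ[ℂ] H)) u : H)
          = P (sqz N z u) := by
    intro z u
    have hPu : P (u : H) = u := by
      obtain ⟨w, hw⟩ := u.2
      rw [← hw]; exact hPP w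
    rw [sqz_apply', map_add, map_sub, map_smul, map_smul, hPu]
    rfl
  refine ⟨A0, A1, fun u => rfl, key, ?_⟩
  intro z hz
  have hb : Function.Bijective (compress P (sqz N z)) := not_not.1 hz
  have hf : ⇑(A0 - (2 * z) • A1 + (z ^ 2) • 1 :
        LinearMap.range (P : H →ₗ[ℂ] H) →L[ℂ] LinearMap.range (P : H →ₗ[ℂ] H)) =
        compress P (sqz N z) := by
    funext u
    apply Subtype.ext
    rw [key]
    rfl
  rw [ContinuousLinearMap.isUnit_iff_bijective, hf]
  exact hb

lemma spec2_nonempty (N : H →ₗ[ℂ] H) (P : H →L[ℂ] H) (hPidem : IsIdempotentElem P)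
    [FiniteDimensional ℂ (LinearMap.range (P : H →ₗ[ℂ] H))]
    (hpos : 1 ≤ Module.finrank ℂ (LinearMap.range (P : H →ₗ[ℂ] H))) : (spec2 N P).Nonempty := by
  by_contra hne
  rw [Set.not_nonempty_iff_eq_empty] at hne
  obtain ⟨A0, A1, -, -, hA⟩ := isUnit_of_not_mem_spec2 N P hPidem
  have : CompleteSpace (LinearMap.range (P : H →ₗ[ℂ] H)) := FiniteDimensional.complete ℂ _
  have : Nontrivial (LinearMap.range (P : H →ₗ[ℂ] H)) :=
    Module.nontrivial_of_finrank_pos (R := ℂ) hpos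
  obtain ⟨u, hu⟩ := exists_ne (0 : LinearMap.range (P : H →ₗ[ℂ] H))
  have hu' : 0 < ‖u‖ := norm_pos_iff.2 hu
  set c : ℝ := ‖A0 u‖ / ‖u‖ + 1 with hc
  have hc1 : 1 ≤ c := by
    have : 0 ≤ ‖A0 u‖ / ‖u‖ := by positivity
    linarith
  set r : ℝ := 2 * ‖A1‖ + ‖A0‖ + c with hr
  have n0 := norm_nonneg A0
  have n1 := norm_nonneg A1
  have hr1 : 1 ≤ r := by linarith
  have := pencil_bound A0 A1 r c (by linarith) (by linarith)
    (fun z _ => hA z (by rw [hne]; exact Set.notMem_empty z)) (by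
      intro z hz v
      have e1 : (A0 - (2 * z) • A1 + (z ^ 2) • 1 :
          LinearMap.range (P : H →ₗ[ℂ] H) →L[ℂ] LinearMap.range (P : H →ₗ[ℂ] H)) v
          = (z ^ 2) • v - ((2 * z) • A1 v - A0 v) := by
        change A0 v - (2 * z) • A1 v + (z ^ 2) • v = _
        abel
      rw [e1]
      have e2 := norm_sub_norm_le ((z ^ 2) • v) ((2 * z) • A1 v - A0 v)
      have e3 := norm_sub_le ((2 * z) • A1 v) (A0 v)
      rw [norm_smul, norm_mul, Complex.norm_two, hz] at e3
      rw [norm_smul, norm_pow, hz] at e2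
      have e4 : ‖A1 v‖ ≤ ‖A1‖ * ‖v‖ := A1.le_opNorm v
      have e5 : ‖A0 v‖ ≤ ‖A0‖ * ‖v‖ := A0.le_opNorm v
      have e6 : 2 * r * ‖A1 v‖ ≤ 2 * r * (‖A1‖ * ‖v‖) :=
        mul_le_mul_of_nonneg_left e4 (by linarith)
      have e7 : (c + 2 * r * ‖A1‖ + ‖A0‖) * ‖v‖ ≤ r ^ 2 * ‖v‖ := by
        apply mul_le_mul_of_nonneg_right _ (norm_nonneg _)
        have f1 : ‖A0‖ * 1 ≤ ‖A0‖ * r := mul_le_mul_of_nonneg_left hr1 n0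
        have f2 : c * 1 ≤ c * r := mul_le_mul_of_nonneg_left hr1 (by linarith)
        have : r ^ 2 = 2 * r * ‖A1‖ + ‖A0‖ * r + c * r := by
          rw [pow_two]; nth_rewrite 1 [hr]; ring
        linarith
      linarith) u
  rw [hc, add_mul, div_mul_cancel₀ _ hu'.ne'] at this
  linarith

/-- Selecting a convergent sequence. -/
lemma choose_seq (S : ℕ → Set ℂ) (hne : ∀ n, 1 ≤ n → (S n).Nonempty)
    (hsmall : ∀ r > 0, ∀ᶠ n in atTop, ∃ z ∈ S n, ‖z‖ ≤ r) :
    ∃ zs : ℕ → ℂ, (∀ n, 1 ≤ n → zs n ∈ S n) ∧ Tendsto zs atTop (𝓝 0) := by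
  have : ∀ n : ℕ, ∃ z : ℂ, 1 ≤ n → z ∈ S n ∧
      dist 0 z < Metric.infDist 0 (S n) + 1 / ((n : ℝ) + 1) := by
    intro n
    by_cases hn : 1 ≤ n
    · obtain ⟨z, hz, h⟩ := (Metric.infDist_lt_iff (x := (0 : ℂ)) (hne n hn)).1
        (lt_add_of_pos_right (Metric.infDist 0 (S n)) (by positivity : 0 < 1 / ((n : ℝ) + 1)))
      exact ⟨z, fun _ => ⟨hz, h⟩⟩
    · exact ⟨0, fun h => absurd h hn⟩
  choose zs hzs using this
  refine ⟨zs, fun n hn => (hzs n hn).1, ?_⟩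
  rw [Metric.tendsto_nhds]
  intro e he
  have hlim := (tendsto_one_div_add_atTop_nhds_zero_nat (𝕜 := ℝ)).eventually
    (gt_mem_nhds (half_pos he))
  filter_upwards [hsmall (e / 2) (half_pos he), hlim, eventually_ge_atTop 1] with n h1 h2 h3
  obtain ⟨z, hz, hzr⟩ := h1
  have h4 := Metric.infDist_le_dist_of_mem (x := (0 : ℂ)) hz
  rw [dist_zero_left] at h4
  have h5 := (hzs n h3).2
  rw [dist_comm]
  linarith

/-- **Theorem 1**:  if `λ` is an isolated eigenvalue of finite multiplicity of the self-adjoint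
operator `M` (with domain `D`) and condition (H) holds, then `λ` belongs to the uniform
limiting set `Λ` of the second order spectra `Spec₂(M|L_n)`, where `L_n = ran P_n` is an
`n`-dimensional subspace of `Dom M²` and `P_n x → x` for every `x`. -/
theorem isolated_eigenvalue_mem_limit_of_secondOrderSpectra
    (D : Submodule ℂ H) (M : H →ₗ[ℂ] H)
    -- `M` restricted to `D` is a (densely defined) self-adjoint operator:
    (hdense : Dense (D : Set H))
    (hsym : ∀ u ∈ D, ∀ v ∈ D, (inner ℂ (M u) v : ℂ) = inner ℂ u (M v))
    (hsa : ∀ x y : H, (∀ u ∈ D, (inner ℂ (M u) x : ℂ) = inner ℂ u y) → x ∈ D ∧ M x = y)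
    -- `P n` is an orthogonal projection with `n`-dimensional range contained in `Dom M²`:
    (P : ℕ → H →L[ℂ] H)
    (hPsa : ∀ n, IsSelfAdjoint (P n))
    (hPidem : ∀ n, IsIdempotentElem (P n))
    (hPfin : ∀ n, FiniteDimensional ℂ (LinearMap.range (P n : H →ₗ[ℂ] H)))
    (hPdim : ∀ n, Module.finrank ℂ (LinearMap.range (P n : H →ₗ[ℂ] H)) = n)
    (hPdom : ∀ n, ∀ v ∈ LinearMap.range (P n : H →ₗ[ℂ] H), v ∈ D ∧ M v ∈ D)
    (hPlim : ∀ x : H, Tendsto (fun n => P n x) atTop (𝓝 x))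
    -- `λ` is an isolated eigenvalue of `M` of finite multiplicity:
    (l : ℝ)
    (heig : ∃ ψ, ψ ≠ 0 ∧ ψ ∈ D ∧ M ψ = (l : ℂ) • ψ)
    (hfinmult : FiniteDimensional ℂ
      ↥(D ⊓ LinearMap.ker (M - (l : ℂ) • LinearMap.id)))
    (hiso : ∃ ε > 0, ∀ z ∈ pspec D M, z ≠ (l : ℂ) → ε ≤ ‖z - (l : ℂ)‖)
    -- condition (H):
    (hH : ∀ ψ, ψ ∈ D → M ψ = (l : ℂ) • ψ →
      Tendsto (fun n => ‖P n (M (P n ψ)) - (l : ℂ) • ψ‖) atTop (𝓝 0) ∧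
      Tendsto (fun n => ‖P n (M (M (P n ψ))) - ((l : ℂ) ^ 2) • ψ‖) atTop (𝓝 0)) :
    -- conclusion: `λ ∈ Λ`
    ∃ zs : ℕ → ℂ, (∀ n, 1 ≤ n → zs n ∈ spec2 M (P n)) ∧
      Tendsto zs atTop (𝓝 (l : ℂ)) := by
  set N : H →ₗ[ℂ] H := M - (l : ℂ) • LinearMap.id with hN
  have hNa : ∀ x, N x = M x - (l : ℂ) • x := fun x => by simp [hN]
  have hsymN : ∀ u ∈ D, ∀ v ∈ D, (inner ℂ (N u) v : ℂ) = inner ℂ u (N v) := by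
    intro u hu v hv
    rw [hNa, hNa, inner_sub_left, inner_sub_right, hsym u hu v hv, inner_smul_left,
      inner_smul_right]
    simp
  have hdomN : ∀ n, ∀ v ∈ LinearMap.range (P n : H →ₗ[ℂ] H), v ∈ D ∧ N v ∈ D := by
    intro n v hv
    obtain ⟨h1, h2⟩ := hPdom n v hv
    exact ⟨h1, by rw [hNa]; exact D.sub_mem h2 (D.smul_mem _ h1)⟩
  obtain ⟨ε, hε, hiso⟩ := hiso
  have hisoN : ∀ z ∈ pspec D N, z ≠ 0 → ε ≤ ‖z‖ := by
    intro z hz hz0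
    have := hiso (z + l) (by
      intro ⟨R, h1, h2⟩
      apply hz
      refine ⟨R, fun x hx => ?_, fun y => ⟨(h2 y).1, ?_⟩⟩
      · rw [hNa, sub_sub, ← add_smul, add_comm (l : ℂ) z]; exact h1 x hx
      · rw [hNa, sub_sub, ← add_smul, add_comm (l : ℂ) z]; exact (h2 y).2) (by simpa using hz0)
    simpa using this
  have hgap := gap D N hsymN ε hε hisoN
  have hspec : ∀ n z, z ∈ spec2 N (P n) → z + l ∈ spec2 M (P n) := by
    intro n z hz
    have : sqz M (z + l) = sqz N z := by
      ext x
      simp only [sqz_apply', hNa, map_sub, map_smul]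
      match_scalars <;> ring
    change ¬ Function.Bijective (compress (P n) (sqz M (z + l)))
    rw [this]
    exact hz
  have hT1 : ∀ ψ ∈ D ⊓ LinearMap.ker N, Tendsto (fun n => P n (N (P n ψ))) atTop (𝓝 0) ∧
      Tendsto (fun n => P n (N (N (P n ψ)))) atTop (𝓝 0) := by
    intro ψ hψ
    have hMψ : M ψ = (l : ℂ) • ψ := by
      have : N ψ = 0 := hψ.2
      rw [hNa, sub_eq_zero] at this
      exact this
    obtain ⟨a1, a2⟩ := hH ψ hψ.1 hMψ
    have b1 := tendsto_iff_norm_sub_tendsto_zero.2 a1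
    have b2 := tendsto_iff_norm_sub_tendsto_zero.2 a2
    have b0 := hPlim ψ
    have hPP : ∀ n a, P n (P n a) = P n a := fun n a =>
      congrArg (fun T : H →L[ℂ] H => T a) (hPidem n)
    constructor
    · have := b1.sub (b0.const_smul (l : ℂ))
      rw [sub_self] at this
      refine this.congr fun n => ?_
      rw [hNa, map_sub, map_smul, hPP]
    · have := (b2.sub (b1.const_smul (2 * (l : ℂ)))).add (b0.const_smul ((l : ℂ) ^ 2))
      have hz : (l : ℂ) ^ 2 • ψ - (2 * (l : ℂ)) • (l : ℂ) • ψ + (l : ℂ) ^ 2 • ψ = 0 := by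
        match_scalars; ring
      rw [hz] at this
      refine this.congr fun n => ?_
      simp only [hNa, map_sub, map_smul, hPP]
      match_scalars <;> ring
  have hsmall : ∀ r > 0, r ≤ 1 → 8 * r ≤ ε / 2 →
      ∀ᶠ n in atTop, ∃ z ∈ spec2 N (P n), ‖z‖ ≤ r := by
    intro r hr hr1 hrε
    have hδ : 0 < r ^ 2 / 32 := by positivity
    have u0 := uniform_of_pointwise (D ⊓ LinearMap.ker N)
      (fun n => (P n : H →ₗ[ℂ] H) - LinearMap.id) (by
        intro ψ _
        have := (hPlim ψ).sub_const ψ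
        rw [sub_self] at this
        exact this) _ hδ
    have u1 := uniform_of_pointwise (D ⊓ LinearMap.ker N)
      (fun n => (P n : H →ₗ[ℂ] H) ∘ₗ N ∘ₗ (P n : H →ₗ[ℂ] H)) (fun ψ hψ => (hT1 ψ hψ).1) _ hδ
    have u2 := uniform_of_pointwise (D ⊓ LinearMap.ker N)
      (fun n => (P n : H →ₗ[ℂ] H) ∘ₗ N ∘ₗ N ∘ₗ (P n : H →ₗ[ℂ] H))
      (fun ψ hψ => (hT1 ψ hψ).2) _ hδ
    obtain ⟨ψ, hψ0, hψD, hψM⟩ := heig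
    have hψE : ψ ∈ D ⊓ LinearMap.ker N := ⟨hψD, by
      change N ψ = 0
      rw [hNa, hψM, sub_self]⟩
    have hlt : ∀ᶠ n in atTop, ‖P n (N (N (P n ψ)))‖ < r ^ 2 / 8 * ‖P n ψ‖ := by
      have t1 := (hT1 ψ hψE).2.norm
      have t2 := ((hPlim ψ).norm).const_mul (r ^ 2 / 8)
      rw [norm_zero] at t1
      refine t1.eventually_lt t2 ?_
      have := norm_pos_iff.2 hψ0
      positivity
    filter_upwards [u0, u1, u2, hlt] with n v0 v1 v2 hn
    by_contra hcon
    push Not at hcon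
    have := hPfin n
    have : CompleteSpace (LinearMap.range (P n : H →ₗ[ℂ] H)) := FiniteDimensional.complete ℂ _
    obtain ⟨A0, A1, hA0, hA, hAu⟩ := isUnit_of_not_mem_spec2 N (P n) (hPidem n)
    have := pencil_bound A0 A1 r (r ^ 2 / 8) hr (by positivity)
      (fun z hz => hAu z (fun h => absurd (hcon z h) (not_lt.2 hz))) (by
        intro z hz v
        have := low D N hsymN (P n) (hPsa n) (hPidem n) (hdomN n) (ε / 2) hgap r hr hr1 hrε
          v0 v1 v2 z hz v v.2
        rw [← hA] at this
        exact this) ⟨P n ψ, ψ, rfl⟩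
    rw [Submodule.coe_norm, Submodule.coe_norm, hA0] at this
    exact absurd this (not_le.2 hn)
  obtain ⟨zs, h1, h2⟩ := choose_seq (fun n => spec2 N (P n))
    (fun n hn => by
      have := hPfin n
      exact spec2_nonempty N (P n) (hPidem n) (by rw [hPdim n]; exact hn))
    (by
      intro r hr
      have hr' : 0 < min r (min 1 (ε / 16)) := by positivity
      have m1 : min r (min 1 (ε / 16)) ≤ 1 := (min_le_right _ _).trans (min_le_left _ _)
      have m2 : min r (min 1 (ε / 16)) ≤ ε / 16 := (min_le_right _ _).trans (min_le_right _ _)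
      filter_upwards [hsmall _ hr' m1 (by linarith)] with n ⟨z, hz, hzr⟩
      exact ⟨z, hz, hzr.trans (min_le_left _ _)⟩)
  refine ⟨fun n => zs n + l, fun n hn => hspec n _ (h1 n hn), ?_⟩
  have := h2.add_const (l : ℂ)
  rwa [zero_add] at this

end
end

section
/- Let M be a bounded self-adjoint operator on a complex Hilbert space H and let (P_n) be orthogonal projections with n-dimensional ranges L_n such that P_n x → x for every x ∈ H. Then every isolated eigenvalue λ of M of finite multiplicity belongs to the uniform limiting set Λ: there exist z_n ∈ Spec₂(M|L_n) with z_n → λ. -/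
open Filter Topology

noncomputable section

variable {H : Type*} [NormedAddCommGroup H] [InnerProductSpace ℂ H] [CompleteSpace H]

theorem G_isUnit (M P : H →L[ℂ] H) (hid : IsIdempotentElem P) (z : ℂ)
    (hz : z ∉ spec2 (M : H →ₗ[ℂ] H) P) :
    IsUnit (P * ((M - z • 1) * (M - z • 1)) * P + (1 - P)) := by
  have hb : Function.Bijective (compress P (sqz (M : H →ₗ[ℂ] H) z)) := by
    by_contra h
    exact hz h
  have hPP : ∀ x, P (P x) = P x := fun x => by
    have := congrArg (fun T : H →L[ℂ] H => T x) hid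
    simpa using this
  have hc : ∀ x : LinearMap.range (P : H →ₗ[ℂ] H),
      ((compress P (sqz (M : H →ₗ[ℂ] H) z) x : LinearMap.range (P : H →ₗ[ℂ] H)) : H)
        = P (((M - z • 1) * (M - z • 1)) (x : H)) := fun x => rfl
  rw [ContinuousLinearMap.isUnit_iff_bijective]
  constructor
  · rw [injective_iff_map_eq_zero]
    intro u hu
    have h1 : P (((M - z • 1) * (M - z • 1)) (P u)) + (u - P u) = 0 := hu
    have h2 : P (((M - z • 1) * (M - z • 1)) (P u)) = 0 := by
      have := congrArg P h1
      rw [map_add, map_sub, hPP, hPP, sub_self, add_zero, map_zero] at this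
      exact this
    have h3 : u = P u := by
      rw [h2, zero_add] at h1
      exact sub_eq_zero.mp h1
    have h4 : (⟨P u, ⟨u, rfl⟩⟩ : LinearMap.range (P : H →ₗ[ℂ] H)) = 0 := by
      apply hb.1
      rw [map_zero]
      apply Subtype.ext
      rw [hc]
      exact h2
    rw [h3]
    exact congrArg Subtype.val h4
  · intro y
    obtain ⟨x, hx⟩ := hb.2 ⟨P y, ⟨y, rfl⟩⟩
    have hx' : P (((M - z • 1) * (M - z • 1)) (x : H)) = P y := by
      rw [← hc, hx]
    obtain ⟨x', hx2⟩ := x.2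
    have hPx : P (x : H) = x := by
      rw [← hx2]; exact hPP x'
    refine ⟨x + (y - P y), ?_⟩
    have e : P ((x : H) + (y - P y)) = x := by
      rw [map_add, map_sub, hPP, sub_self, add_zero, hPx]
    change P (((M - z • 1) * (M - z • 1)) (P ((x : H) + (y - P y))))
      + (((x : H) + (y - P y)) - P ((x : H) + (y - P y))) = y
    rw [e, hx']
    abel

theorem max_principle (M P : H →L[ℂ] H) (hid : IsIdempotentElem P) (a : ℂ) (δ c : ℝ)
    (hδ : 0 < δ) (hc : 0 < c)
    (hz : ∀ z ∈ Metric.closedBall a δ, z ∉ spec2 (M : H →ₗ[ℂ] H) P)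
    (hb : ∀ z, ‖z - a‖ = δ → ∀ u, P u = u →
      c * ‖u‖ ≤ ‖P (((M - z • 1) * (M - z • 1)) u)‖)
    (u : H) (hu : P u = u) : c * ‖u‖ ≤ ‖P (((M - a • 1) * (M - a • 1)) u)‖ := by
  have hPP : ∀ x, P (P x) = P x := fun x => by
    have := congrArg (fun T : H →L[ℂ] H => T x) hid
    simpa using this
  set G : ℂ → H →L[ℂ] H := fun z => P * ((M - z • 1) * (M - z • 1)) * P + (1 - P) with hG
  have hGu : ∀ z ∈ Metric.closedBall a δ, IsUnit (G z) := fun z h =>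
    G_isUnit M P hid z (hz z h)
  set w := G a u with hw
  have hwe : w = P (((M - a • 1) * (M - a • 1)) u) := by
    change P (((M - a • 1) * (M - a • 1)) (P u)) + (u - P u) = _
    rw [hu, sub_self, add_zero]
  have hPw : P w = w := by rw [hwe, hPP]
  set g : ℂ → H := fun z => (Ring.inverse (G z)) w with hg
  have hGd : Differentiable ℂ G := by
    intro z
    simp only [hG]
    fun_prop
  have hgd : ∀ z ∈ Metric.closedBall a δ, DifferentiableAt ℂ g z := by
    intro z h
    obtain ⟨v, hv⟩ := hGu z h
    have h1 : DifferentiableAt ℂ (Ring.inverse : (H →L[ℂ] H) → _) (G z) := by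
      rw [← hv]; exact differentiableAt_inverse (𝕜 := ℂ) v.isUnit
    exact (h1.comp z (hGd z)).clm_apply (differentiableAt_const w)
  have hGg : ∀ z ∈ Metric.closedBall a δ, G z (g z) = w := by
    intro z h
    have := Ring.mul_inverse_cancel _ (hGu z h)
    have := congrArg (fun T : H →L[ℂ] H => T w) this
    simpa using this
  have hga : g a = u := by
    have := Ring.inverse_mul_cancel _ (hGu a (Metric.mem_closedBall_self hδ.le))
    have := congrArg (fun T : H →L[ℂ] H => T u) this
    simpa using this
  have hbd : ∀ z ∈ frontier (Metric.ball a δ), ‖g z‖ ≤ ‖w‖ / c := by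
    intro z h
    rw [frontier_ball a hδ.ne'] at h
    have hcl := Metric.sphere_subset_closedBall h
    have h1 := hGg z hcl
    have h1' : P (((M - z • 1) * (M - z • 1)) (P (g z))) + (g z - P (g z)) = w := h1
    have h2 : P (((M - z • 1) * (M - z • 1)) (P (g z))) = w := by
      have := congrArg P h1'
      rw [map_add, map_sub, hPP, hPP, sub_self, add_zero, hPw] at this
      exact this
    have h3 : P (g z) = g z := by
      rw [h2] at h1'
      exact (sub_eq_zero.mp (by simpa using h1')).symm
    have h4 := hb z (by simpa [dist_eq_norm] using h) (g z) h3
    rw [h3] at h2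
    rw [h2] at h4
    rw [le_div_iff₀ hc]; linarith
  have hd : DiffContOnCl ℂ g (Metric.ball a δ) := by
    apply DifferentiableOn.diffContOnCl
    rw [closure_ball a hδ.ne']
    exact fun z h => (hgd z h).differentiableWithinAt
  have := Complex.norm_le_of_forall_mem_frontier_norm_le Metric.isBounded_ball hd hbd
    (subset_closure (Metric.mem_ball_self hδ))
  rw [hga, le_div_iff₀ hc] at this
  rw [← hwe]; linarith

theorem spec2_nonempty_s1 (M P : H →L[ℂ] H) (hid : IsIdempotentElem P)
    (hsa : IsSelfAdjoint P) (u : H) (hu : P u = u)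
    (hu0 : u ≠ 0) : (spec2 (M : H →ₗ[ℂ] H) P).Nonempty := by
  by_contra hne
  rw [Set.not_nonempty_iff_eq_empty] at hne
  have hP1 : ∀ x, ‖P x‖ ≤ ‖x‖ := by
    intro x
    have h := (isStarProjection_iff P).2 ⟨hid, hsa⟩
    have h1 : ‖P‖ ≤ 1 := h.norm_le
    calc _ ≤ ‖P‖ * ‖x‖ := P.le_opNorm x
      _ ≤ 1 * ‖x‖ := by gcongr
      _ = _ := one_mul _
  set m := ‖M‖ with hm
  have hm0 : 0 ≤ m := norm_nonneg _
  have key := max_principle M P hid 0 (4 * m + 1) (7*m^2+6*m+1) (by positivity) (by positivity)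
    (by simp [hne]) (by
      intro z hz v hv
      rw [sub_zero] at hz
      have e : P (((M - z • 1) * (M - z • 1)) v) = z^2 • v - ((2 * z) • P (M v) - P (M (M v))) := by
        simp [hv]
        module
      rw [e]
      have h1 := norm_sub_norm_le (z^2 • v) ((2 * z) • P (M v) - P (M (M v)))
      have h2 := norm_sub_le ((2 * z) • P (M v)) (P (M (M v)))
      rw [norm_smul, norm_mul, hz] at h2
      rw [norm_smul, norm_pow, hz] at h1
      have h3 : ‖P (M v)‖ ≤ m * ‖v‖ := (hP1 _).trans (M.le_opNorm v)
      have h4 : ‖P (M (M v))‖ ≤ m * (m * ‖v‖) :=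
        (hP1 _).trans ((M.le_opNorm _).trans (by gcongr; exact M.le_opNorm v))
      have h5 : ‖(2:ℂ)‖ * (4*m+1) * ‖P (M v)‖ ≤ 2 * (4*m+1) * (m * ‖v‖) := by
        rw [Complex.norm_ofNat]; gcongr
      nlinarith) u hu
  have h4 : ‖P (((M - (0:ℂ) • 1) * (M - (0:ℂ) • 1)) u)‖ ≤ m * (m * ‖u‖) := by
    simp only [zero_smul, sub_zero]
    exact (hP1 _).trans ((M.le_opNorm _).trans (by gcongr; exact M.le_opNorm u))
  have : 0 < ‖u‖ := norm_pos_iff.2 hu0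
  nlinarith [mul_nonneg hm0 this.le, mul_nonneg (sq_nonneg m) this.le]

/-- lower bound off the kernel -/
theorem gap_s1 (M : H →L[ℂ] H) (hM : IsSelfAdjoint M) (l : ℝ)
    (hiso : ∃ ε > 0, ∀ z ∈ spectrum ℂ M, z ≠ (l : ℂ) → ε ≤ ‖z - (l : ℂ)‖) :
    ∃ ε > 0, ∀ u : H, (∀ k : H, (M - (l : ℂ) • 1) k = 0 → inner ℂ k u = 0) →
      ε * ‖u‖ ≤ ‖(M - (l : ℂ) • 1) u‖ := by
  obtain ⟨ε, hε, hs⟩ := hiso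
  have hn : IsStarNormal M := hM.isStarNormal
  have hf : ContinuousOn (fun z : ℂ => (z - l)⁻¹) (spectrum ℂ M) := by
    intro z hz
    by_cases h : z = l
    · have : 𝓝[spectrum ℂ M] z ≤ pure z := by
        rw [Filter.le_pure_iff]
        filter_upwards [self_mem_nhdsWithin, mem_nhdsWithin_of_mem_nhds (Metric.ball_mem_nhds z hε)]
          with x hx hx2
        by_contra hne
        have hne' : x ≠ l := by rw [← h]; exact hne
        have := hs x hx hne'
        rw [Metric.mem_ball, dist_eq_norm, h] at hx2
        linarith
      exact (tendsto_pure_nhds _ z).mono_left this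
    · exact ContinuousAt.continuousWithinAt
        (ContinuousAt.inv₀ (by fun_prop) (sub_ne_zero.2 h))
  have hg : ContinuousOn (fun z : ℂ => z - l) (spectrum ℂ M) := by fun_prop
  set B : H →L[ℂ] H := M - (l : ℂ) • 1 with hB
  have hBsa : IsSelfAdjoint B := by
    apply hM.sub
    have : (l : ℂ) • (1 : H →L[ℂ] H) = (l : ℝ) • 1 := by
      ext x; simp
    rw [this]
    exact (IsSelfAdjoint.all l).smul (IsSelfAdjoint.one _)
  have hBc : cfc (fun z : ℂ => z - l) M = B := by
    rw [cfc_sub (fun z : ℂ => z) (fun _ => (l : ℂ)) M, cfc_id' ℂ M, cfc_const (l : ℂ) M,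
      Algebra.algebraMap_eq_smul_one]
  set C := cfc (fun z : ℂ => (z - l)⁻¹) M with hC
  have hBCB : B * (B * C) = B := by
    have h1 : B * C = cfc (fun z : ℂ => (z - l) * (z - l)⁻¹) M := by
      rw [← hBc, hC, cfc_mul _ _ M hg hf]
    rw [h1, ← hBc, ← cfc_mul _ (fun z : ℂ => (z - l) * (z - l)⁻¹) M hg (hg.mul hf)]
    congr 1
    ext z
    by_cases h : z - l = 0
    · simp [h]
    · field_simp
  have hcomm : B * C = C * B := by
    rw [← hBc, hC, ← cfc_mul _ _ M hg hf, ← cfc_mul _ _ M hf hg]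
    congr 1; ext z; ring
  refine ⟨(‖C‖ + 1)⁻¹, by positivity, fun u hu => ?_⟩
  have hsym : ∀ x y, inner ℂ (B x) y = inner ℂ x (B y) := fun x y => by
    have := hBsa.isSymmetric
    exact this x y
  set d := u - B (C u) with hd
  have hBd : B d = 0 := by
    have := congrArg (fun T : H →L[ℂ] H => T u) hBCB
    have h' : B (B (C u)) = B u := this
    rw [hd, map_sub, h', sub_self]
  have hd0 : d = 0 := by
    have h1 : inner ℂ d d = 0 := by
      conv_lhs => rw [hd]
      rw [← hd, inner_sub_right, hu d hBd, ← hsym, hBd, inner_zero_left, sub_zero]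
    exact inner_self_eq_zero.1 h1
  have hu2 : u = C (B u) := by
    have h1 : B (C u) = C (B u) := congrArg (fun T : H →L[ℂ] H => T u) hcomm
    rw [← h1]; exact sub_eq_zero.1 hd0
  have h3 : ‖u‖ ≤ (‖C‖ + 1) * ‖B u‖ := by
    calc ‖u‖ = ‖C (B u)‖ := by rw [← hu2]
      _ ≤ ‖C‖ * ‖B u‖ := C.le_opNorm _
      _ ≤ _ := by gcongr; linarith
  rw [inv_mul_le_iff₀ (by positivity)]
  exact h3

/-- Strong convergence is uniform on finite-dimensional subspaces. -/
theorem unif_fin (P : ℕ → H →L[ℂ] H) (hPlim : ∀ x : H, Tendsto (fun n => P n x) atTop (𝓝 x))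
    (K : Submodule ℂ H) [FiniteDimensional ℂ K] (a : ℝ) (ha : 0 < a) :
    ∀ᶠ n in atTop, ∀ v ∈ K, ‖P n v - v‖ ≤ a * ‖v‖ := by
  let b := stdOrthonormalBasis ℂ K
  have h : Tendsto (fun n => ∑ i, ‖P n (b i : H) - b i‖) atTop (𝓝 0) := by
    have : Tendsto (fun n => ∑ i, ‖P n (b i : H) - b i‖) atTop
        (𝓝 (∑ i : Fin (Module.finrank ℂ K), (0 : ℝ))) := by
      apply tendsto_finsetSum
      intro i _
      exact tendsto_iff_norm_sub_tendsto_zero.1 (hPlim (b i))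
    simpa using this
  filter_upwards [h.eventually (gt_mem_nhds ha)] with n hn v hv
  have hv' : v = ∑ i, (b.repr ⟨v, hv⟩ i) • (b i : H) := by
    have := congrArg (Subtype.val) (b.sum_repr ⟨v, hv⟩)
    simpa using this.symm
  have hr : ∀ i, ‖b.repr ⟨v, hv⟩ i‖ ≤ ‖v‖ := by
    intro i
    rw [b.repr_apply_apply]
    refine (norm_inner_le_norm _ _).trans ?_
    rw [b.norm_eq_one, one_mul]
    rfl
  calc ‖P n v - v‖ = ‖∑ i, (b.repr ⟨v, hv⟩ i) • (P n (b i : H) - b i)‖ := by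
        conv_lhs => rw [hv']
        simp only [map_sum, map_smul, smul_sub, Finset.sum_sub_distrib]
    _ ≤ ∑ i, ‖(b.repr ⟨v, hv⟩ i) • (P n (b i : H) - b i)‖ := norm_sum_le _ _
    _ ≤ ∑ i, ‖v‖ * ‖P n (b i : H) - b i‖ := by
        gcongr with i
        rw [norm_smul]
        gcongr
        exact hr i
    _ = ‖v‖ * ∑ i, ‖P n (b i : H) - b i‖ := by rw [Finset.mul_sum]
    _ ≤ ‖v‖ * a := by gcongr
    _ = _ := mul_comm _ _

theorem stability (B P : H →L[ℂ] H) (hB : IsSelfAdjoint B) (hsa : IsSelfAdjoint P)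
    (K : Submodule ℂ H) [FiniteDimensional ℂ K] (hK : ∀ k, k ∈ K ↔ B k = 0)
    (ε δ a : ℝ) (hε : 0 < ε) (hδ : 0 < δ) (hδε : 4 * δ ≤ ε)
    (hgap : ∀ u : H, (∀ k : H, B k = 0 → inner ℂ k u = 0) → ε * ‖u‖ ≤ ‖B u‖)
    (hP : ∀ v ∈ K, ‖P v - v‖ ≤ a * ‖v‖)
    (ha : (δ ^ 2 + 7 / 16 * ε ^ 2) * (a * (‖B‖ + δ) ^ 2) ≤ 7 / 16 * ε ^ 2 * δ ^ 2 / 2)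
    (ha0 : 0 ≤ a)
    (w : ℂ) (hw : ‖w‖ = δ) (u : H) (hu : P u = u) :
    7 / 16 * ε ^ 2 * δ ^ 2 / 2 / (2 * δ ^ 2 + 7 / 16 * ε ^ 2) * ‖u‖ ≤
      ‖P (((B - w • 1) * (B - w • 1)) u)‖ := by
  have hBs : ∀ x y, inner ℂ (B x) y = inner ℂ x (B y) := fun x y => hB.isSymmetric x y
  have hPs : ∀ x y, inner ℂ (P x) y = inner ℂ x (P y) := fun x y => hsa.isSymmetric x y
  set T := (B - w • 1) * (B - w • 1) with hT
  have hTx : ∀ x, T x = B (B x) - (2 * w) • B x + w ^ 2 • x := by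
    intro x
    simp [hT]
    module
  have hTn : ∀ x, ‖T x‖ ≤ (‖B‖ + δ) ^ 2 * ‖x‖ := by
    have h1 : ∀ x, ‖(B - w • 1) x‖ ≤ (‖B‖ + δ) * ‖x‖ := by
      intro x
      have : (B - w • 1) x = B x - w • x := by simp
      rw [this]
      have h1 := norm_sub_le (B x) (w • x)
      rw [norm_smul, hw] at h1
      have := B.le_opNorm x
      linarith
    intro x
    calc ‖T x‖ ≤ (‖B‖ + δ) * ‖(B - w • 1) x‖ := h1 _
      _ ≤ (‖B‖ + δ) * ((‖B‖ + δ) * ‖x‖) := by gcongr; exact h1 x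
      _ = _ := by ring
  set q : H := K.starProjection u with hq
  have hqK : q ∈ K := by rw [hq]; exact K.starProjection_apply_mem u
  have hBq : B q = 0 := (hK q).1 hqK
  set v := u - q with hv
  have hvK : ∀ k ∈ K, inner ℂ k v = 0 := by
    have h : v ∈ Kᗮ := K.sub_starProjection_mem_orthogonal u
    exact fun k hk => (Submodule.mem_orthogonal K v).1 h k hk
  have huqv : u = q + v := by rw [hv]; abel
  have hqv : inner ℂ q v = 0 := hvK q hqK
  have hvq : inner ℂ v q = 0 := by rw [← inner_conj_symm, hqv, map_zero]
  have hqq : inner ℂ q q = ((‖q‖ ^ 2 : ℝ) : ℂ) := by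
    rw [inner_self_eq_norm_sq_to_K]; push_cast; rfl
  have hvv : inner ℂ v v = ((‖v‖ ^ 2 : ℝ) : ℂ) := by
    rw [inner_self_eq_norm_sq_to_K]; push_cast; rfl
  have hpyth : ‖u‖ ^ 2 = ‖q‖ ^ 2 + ‖v‖ ^ 2 := by
    have := norm_add_sq_eq_norm_sq_add_norm_sq_of_inner_eq_zero q v hqv
    rw [← huqv] at this
    nlinarith
  have hqB : ∀ y, inner ℂ q (B y) = 0 := fun y => by rw [← hBs, hBq, inner_zero_left]
  have hqT : inner ℂ q (T u) = w ^ 2 * ((‖q‖ ^ 2 : ℝ) : ℂ) := by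
    rw [hTx, inner_add_right, inner_sub_right, inner_smul_right, inner_smul_right, hqB, hqB,
      huqv, inner_add_right, hqv, hqq]
    ring
  set r := P (T u) with hr
  have e1 : δ ^ 2 * ‖q‖ ≤ ‖r‖ + a * (‖B‖ + δ) ^ 2 * ‖u‖ := by
    have h1 : inner ℂ q (T u) = inner ℂ q r - inner ℂ (P q - q) (T u) := by
      rw [hr, ← hPs, inner_sub_left]; ring
    have h2 : ‖(inner ℂ q (T u) : ℂ)‖ = δ ^ 2 * ‖q‖ ^ 2 := by
      rw [hqT, norm_mul, norm_pow, hw, Complex.norm_real, Real.norm_of_nonneg (by positivity)]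
    have h3 : ‖(inner ℂ q (T u) : ℂ)‖ ≤ ‖q‖ * ‖r‖ + (a * ‖q‖) * ((‖B‖ + δ) ^ 2 * ‖u‖) := by
      rw [h1]
      refine (norm_sub_le _ _).trans (add_le_add (norm_inner_le_norm _ _) ?_)
      refine (norm_inner_le_norm _ _).trans ?_
      exact mul_le_mul (hP q hqK) (hTn u) (norm_nonneg _) (by positivity)
    rw [h2] at h3
    rcases (norm_nonneg q).eq_or_lt with h0 | h0
    · rw [← h0]; simp only [mul_zero]; positivity
    · refine le_of_mul_le_mul_left ?_ h0
      linarith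
  have hBv : ε * ‖v‖ ≤ ‖B v‖ := hgap v (fun k hk => hvK k ((hK k).2 hk))
  have e2 : 7 / 16 * ε ^ 2 * ‖v‖ ^ 2 ≤ ‖u‖ * ‖r‖ + δ ^ 2 * ‖q‖ ^ 2 := by
    have hTq : T q = w ^ 2 • q := by rw [hTx, hBq]; simp
    have h1 : inner ℂ u r = w ^ 2 * ((‖q‖ ^ 2 : ℝ) : ℂ) + inner ℂ v (T v) := by
      have : inner ℂ u r = inner ℂ u (T u) := by rw [hr, ← hPs, hu]
      rw [this]
      conv_lhs => rw [huqv, inner_add_left, ← huqv, hqT]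
      congr 1
      rw [huqv, map_add, hTq, inner_add_right, inner_smul_right, hvq]
      ring
    have h2 : inner ℂ v (T v) = ((‖B v‖ ^ 2 : ℝ) : ℂ) - (2 * w) * inner ℂ v (B v)
        + w ^ 2 * ((‖v‖ ^ 2 : ℝ) : ℂ) := by
      rw [hTx, inner_add_right, inner_sub_right, inner_smul_right, inner_smul_right, ← hBs, hvv,
        inner_self_eq_norm_sq_to_K]
      push_cast; rfl
    have h3 : ((‖B v‖ ^ 2 : ℝ) : ℂ) = inner ℂ u r - w ^ 2 * ((‖q‖ ^ 2 : ℝ) : ℂ)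
        + (2 * w) * inner ℂ v (B v) - w ^ 2 * ((‖v‖ ^ 2 : ℝ) : ℂ) := by
      rw [h1, h2]; ring
    have h4 : ‖B v‖ ^ 2 ≤ ‖u‖ * ‖r‖ + δ ^ 2 * ‖q‖ ^ 2 + 2 * δ * (‖v‖ * ‖B v‖)
        + δ ^ 2 * ‖v‖ ^ 2 := by
      have h5 : ‖B v‖ ^ 2 = ‖((‖B v‖ ^ 2 : ℝ) : ℂ)‖ := by
        rw [Complex.norm_real, Real.norm_of_nonneg (by positivity)]
      rw [h5, h3]
      refine (norm_sub_le _ _).trans (add_le_add ((norm_add_le _ _).trans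
        (add_le_add ((norm_sub_le _ _).trans (add_le_add (norm_inner_le_norm _ _) ?_)) ?_)) ?_)
      · rw [norm_mul, norm_pow, hw, Complex.norm_real, Real.norm_of_nonneg (by positivity)]
      · rw [norm_mul, norm_mul, hw, Complex.norm_ofNat]
        gcongr
        exact norm_inner_le_norm _ _
      · rw [norm_mul, norm_pow, hw, Complex.norm_real, Real.norm_of_nonneg (by positivity)]
    have h6 : 4 * (δ * ‖v‖) ≤ ‖B v‖ := by
      nlinarith [norm_nonneg v]
    have h7 : 0 ≤ δ * ‖v‖ := by positivity
    have h8 : 0 ≤ ε * ‖v‖ := by positivity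
    have h9 : (ε * ‖v‖) ^ 2 ≤ ‖B v‖ ^ 2 := by gcongr
    nlinarith [mul_le_mul_of_nonneg_right h6 (norm_nonneg (B v)), mul_le_mul_of_nonneg_right h6 h7]
  have hqu : ‖q‖ ≤ ‖u‖ := by
    apply le_of_sq_le_sq _ (norm_nonneg _)
    nlinarith [sq_nonneg ‖v‖]
  rcases (norm_nonneg u).eq_or_lt with h0 | h0
  · rw [← h0]; simp only [mul_zero]; positivity
  set κ := 7 / 16 * ε ^ 2 with hκ
  have hκ0 : 0 < κ := by positivity
  have e3 : κ * ‖u‖ ≤ ‖r‖ + (δ ^ 2 + κ) * ‖q‖ := by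
    refine le_of_mul_le_mul_left ?_ h0
    have : ‖q‖ ^ 2 ≤ ‖u‖ * ‖q‖ := by nlinarith [norm_nonneg q]
    have := mul_le_mul_of_nonneg_left this (by positivity : 0 ≤ δ ^ 2 + κ)
    nlinarith
  rw [div_mul_eq_mul_div, div_le_iff₀ (by positivity)]
  have e4 := mul_le_mul_of_nonneg_left e1 (by positivity : 0 ≤ δ ^ 2 + κ)
  have e5 := mul_le_mul_of_nonneg_left e3 (by positivity : 0 ≤ δ ^ 2)
  have e6 := mul_le_mul_of_nonneg_right ha h0.le
  nlinarith

/-- Every isolated eigenvalue `λ` of finite multiplicity of a *bounded* self-adjoint operator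
`M` belongs to the uniform limiting set `Λ` of the second order spectra `Spec₂(M|L_n)`,
where `L_n = ran P_n` is an `n`-dimensional subspace and `P_n x → x` for every `x`. -/
theorem isolated_eigenvalue_mem_limit_of_secondOrderSpectra_of_bounded
    (M : H →L[ℂ] H) (hM : IsSelfAdjoint M)
    (P : ℕ → H →L[ℂ] H)
    (hPsa : ∀ n, IsSelfAdjoint (P n))
    (hPidem : ∀ n, IsIdempotentElem (P n))
    (hPfin : ∀ n, FiniteDimensional ℂ (LinearMap.range (P n : H →ₗ[ℂ] H)))
    (hPdim : ∀ n, Module.finrank ℂ (LinearMap.range (P n : H →ₗ[ℂ] H)) = n)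
    (hPlim : ∀ x : H, Tendsto (fun n => P n x) atTop (𝓝 x))
    -- `λ` is an isolated eigenvalue of `M` of finite multiplicity:
    (l : ℝ)
    (heig : ∃ ψ, ψ ≠ 0 ∧ M ψ = (l : ℂ) • ψ)
    (hfinmult : FiniteDimensional ℂ
      ↥(LinearMap.ker ((M : H →ₗ[ℂ] H) - (l : ℂ) • LinearMap.id)))
    (hiso : ∃ ε > 0, ∀ z ∈ spectrum ℂ M, z ≠ (l : ℂ) → ε ≤ ‖z - (l : ℂ)‖) :
    -- conclusion: `λ ∈ Λ`
    ∃ zs : ℕ → ℂ, (∀ n, 1 ≤ n → zs n ∈ spec2 (M : H →ₗ[ℂ] H) (P n)) ∧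
      Tendsto zs atTop (𝓝 (l : ℂ)) := by
  obtain ⟨ε, hε, hgap⟩ := gap_s1 M hM l hiso
  obtain ⟨ψ, hψ0, hψ⟩ := heig
  set B : H →L[ℂ] H := M - (l : ℂ) • 1 with hB
  have hBsa : IsSelfAdjoint B := by
    apply hM.sub
    have : (l : ℂ) • (1 : H →L[ℂ] H) = (l : ℝ) • 1 := by
      ext x; simp
    rw [this]
    exact (IsSelfAdjoint.all l).smul (IsSelfAdjoint.one _)
  set K := LinearMap.ker ((M : H →ₗ[ℂ] H) - (l : ℂ) • LinearMap.id) with hKdef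
  have hK : ∀ k, k ∈ K ↔ B k = 0 := fun k => LinearMap.mem_ker
  have hBψ : B ψ = 0 := by simp [hB, hψ]
  have hP1 : ∀ n x, ‖P n x‖ ≤ ‖x‖ := by
    intro n x
    have h := (isStarProjection_iff (P n)).2 ⟨hPidem n, hPsa n⟩
    have h1 : ‖P n‖ ≤ 1 := h.norm_le
    calc _ ≤ ‖P n‖ * ‖x‖ := (P n).le_opNorm x
      _ ≤ 1 * ‖x‖ := by gcongr
      _ = _ := one_mul _
  have hPP : ∀ n x, P n (P n x) = P n x := fun n x => by
    have := congrArg (fun T : H →L[ℂ] H => T x) (hPidem n)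
    simpa using this
  have hne : ∀ n, 1 ≤ n → (spec2 (M : H →ₗ[ℂ] H) (P n)).Nonempty := by
    intro n hn
    have := hPfin n
    have hnt : Nontrivial (LinearMap.range (P n : H →ₗ[ℂ] H)) := by
      apply Module.nontrivial_of_finrank_pos (R := ℂ)
      rw [hPdim n]; omega
    obtain ⟨⟨u, x, hx⟩, hu0⟩ := exists_ne (0 : LinearMap.range (P n : H →ₗ[ℂ] H))
    refine spec2_nonempty_s1 M (P n) (hPidem n) (hPsa n) u ?_ ?_
    · rw [← hx]; exact hPP n x
    · intro h
      exact hu0 (Subtype.ext h)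
  have main : ∀ δ₀ > 0, ∀ᶠ n in atTop, ∃ z ∈ spec2 (M : H →ₗ[ℂ] H) (P n), dist (l : ℂ) z ≤ δ₀ := by
    intro δ₀ hδ₀
    set δ := min δ₀ (ε / 4) with hδd
    have hδ : 0 < δ := by positivity
    have hδ1 : δ ≤ δ₀ := min_le_left _ _
    have hδ2 : 4 * δ ≤ ε := by
      have := min_le_right δ₀ (ε / 4)
      linarith
    set c := 7 / 16 * ε ^ 2 * δ ^ 2 / 2 / (2 * δ ^ 2 + 7 / 16 * ε ^ 2) with hc
    have hc0 : 0 < c := by positivity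
    have hm : 0 < ‖B‖ + δ := by positivity
    set a := 7 / 16 * ε ^ 2 * δ ^ 2 / 2 / ((δ ^ 2 + 7 / 16 * ε ^ 2) * (‖B‖ + δ) ^ 2) with ha
    have ha0 : 0 < a := by positivity
    have ha1 : (δ ^ 2 + 7 / 16 * ε ^ 2) * (a * (‖B‖ + δ) ^ 2) ≤ 7 / 16 * ε ^ 2 * δ ^ 2 / 2 := by
      apply le_of_eq
      rw [ha]
      field_simp
    have t1 : Tendsto (fun n => c * ‖P n ψ‖) atTop (𝓝 (c * ‖ψ‖)) := (hPlim ψ).norm.const_mul c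
    have t2 : Tendsto (fun n => ‖B (B (P n ψ))‖) atTop (𝓝 ‖B (B ψ)‖) :=
      ((((B.continuous.comp B.continuous).tendsto ψ).comp (hPlim ψ))).norm
    have hlt : ‖B (B ψ)‖ < c * ‖ψ‖ := by
      rw [hBψ, map_zero, norm_zero]
      have := norm_pos_iff.2 hψ0
      positivity
    filter_upwards [unif_fin P hPlim K a ha0, t2.eventually_lt t1 hlt] with n hn1 hn2
    by_contra hcon
    push Not at hcon
    have key := max_principle M (P n) (hPidem n) l δ c hδ hc0 (by
      intro z hz hz2
      have h1 := hcon z hz2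
      rw [Metric.mem_closedBall, dist_comm] at hz
      linarith) (by
      intro z hz u hu
      have h1 := stability B (P n) hBsa (hPsa n) K hK ε δ a hε hδ hδ2 hgap hn1 ha1 ha0.le
        (z - l) hz u hu
      have h2 : B - (z - (l : ℂ)) • (1 : H →L[ℂ] H) = M - z • 1 := by
        rw [hB]; module
      rw [h2] at h1
      exact h1) (P n ψ) (hPP n ψ)
    have h3 := hP1 n (((M - (l : ℂ) • 1) * (M - (l : ℂ) • 1)) (P n ψ))
    have h4 : ((M - (l : ℂ) • 1) * (M - (l : ℂ) • 1)) (P n ψ) = B (B (P n ψ)) := rfl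
    rw [h4] at h3 key
    linarith
  have hch : ∀ n : ℕ, ∃ z, 1 ≤ n → z ∈ spec2 (M : H →ₗ[ℂ] H) (P n) ∧
      dist (l : ℂ) z < Metric.infDist (l : ℂ) (spec2 (M : H →ₗ[ℂ] H) (P n)) + 1 / ((n : ℝ) + 1) := by
    intro n
    by_cases hn : 1 ≤ n
    · have hpos : 0 < 1 / ((n : ℝ) + 1) := by positivity
      obtain ⟨z, hz, hz2⟩ := (Metric.infDist_lt_iff (hne n hn)).1
        (lt_add_of_pos_right (Metric.infDist (l : ℂ) (spec2 (M : H →ₗ[ℂ] H) (P n))) hpos)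
      exact ⟨z, fun _ => ⟨hz, hz2⟩⟩
    · exact ⟨0, fun h => absurd h hn⟩
  choose zs hzs using hch
  refine ⟨zs, fun n hn => (hzs n hn).1, ?_⟩
  rw [Metric.tendsto_nhds]
  intro η hη
  have t3 := (tendsto_one_div_add_atTop_nhds_zero_nat (𝕜 := ℝ)).eventually (gt_mem_nhds (half_pos hη))
  filter_upwards [main (η / 2) (half_pos hη), t3, eventually_ge_atTop 1] with n h1 h2 h3
  obtain ⟨z, hz, hz2⟩ := h1
  have h4 := (hzs n h3).2
  have h5 := Metric.infDist_le_dist_of_mem (x := (l : ℂ)) hz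
  rw [dist_comm]
  linarith

end
end

section
/- Let M be a self-adjoint operator, L_n ⊆ Dom(M²) an n-dimensional subspace with orthogonal projection P_n, and σ_n(z) := inf{‖P_n(M−z)² v‖/‖v‖ : 0 ≠ v ∈ L_n}. Then the only local minima of σ_n are the points where it vanishes: if z₀ ∈ ℂ satisfies σ_n(z₀) > 0, then every neighbourhood of z₀ contains a point z with σ_n(z) < σ_n(z₀). -/
open Filter Topology

noncomputable section

variable {H : Type*} [NormedAddCommGroup H] [InnerProductSpace ℂ H] [CompleteSpace H]

/-- `σ_n(z) = inf {‖P (M - z)² v‖ / ‖v‖ : 0 ≠ v ∈ ran P}`. -/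
def sigma2 (M : H →ₗ[ℂ] H) (P : H →L[ℂ] H) (z : ℂ) : ℝ :=
  sInf {r : ℝ | ∃ v, v ∈ LinearMap.range (P : H →ₗ[ℂ] H) ∧ v ≠ 0 ∧ r = ‖P (sqz M z v)‖ / ‖v‖}

theorem sigma_core {L : Type*} [NormedAddCommGroup L] [InnerProductSpace ℂ L]
    [FiniteDimensional ℂ L] (A1 A2 : L →L[ℂ] L) (z₀ : ℂ) (ε : ℝ) (hε : 0 < ε)
    (s : ℝ) (hz₀ : 0 < s) (v0 : L) (hv0' : ‖v0‖ = 1)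
    (hw : ‖(A2 - (2 * z₀) • A1 + (z₀ ^ 2) • (1 : L →L[ℂ] L)) v0‖ ≤ s)
    (hlow : ∀ z, ‖z - z₀‖ < ε → ∀ u : L,
      s * ‖u‖ ≤ ‖(A2 - (2 * z) • A1 + (z ^ 2) • (1 : L →L[ℂ] L)) u‖) : False := by
  have : CompleteSpace L := FiniteDimensional.complete ℂ L
  let T : ℂ → (L →L[ℂ] L) := fun z => A2 - (2 * z) • A1 + (z ^ 2) • 1
  change ‖T z₀ v0‖ ≤ s at hw
  change ∀ z, ‖z - z₀‖ < ε → ∀ u : L, s * ‖u‖ ≤ ‖T z u‖ at hlow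
  have hunit : ∀ z, ‖z - z₀‖ < ε → IsUnit (T z) := by
    intro z hz
    have hinj : Function.Injective (T z : L →ₗ[ℂ] L) := by
      rw [← LinearMap.ker_eq_bot, LinearMap.ker_eq_bot']
      intro u hu
      have hu' : T z u = 0 := hu
      have h1 := hlow z hz u
      rw [hu', norm_zero] at h1
      have : ‖u‖ ≤ 0 := by
        by_contra hh
        push Not at hh
        nlinarith [mul_pos hz₀ hh]
      exact norm_le_zero_iff.1 this
    let e := (LinearEquiv.ofInjectiveEndo (T z : L →ₗ[ℂ] L) hinj).toContinuousLinearEquiv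
    have he : (e : L →L[ℂ] L) = T z := by
      ext u; rfl
    rw [← he]
    exact ⟨ContinuousLinearEquiv.toUnit e, rfl⟩
  let w := T z₀ v0
  let F : ℂ → L := fun z => Ring.inverse (T z) w
  have hTF : ∀ z, ‖z - z₀‖ < ε → T z (F z) = w := by
    intro z hz
    exact congrArg (fun Q : L →L[ℂ] L => Q w) (Ring.mul_inverse_cancel _ (hunit z hz))
  have hball : ∀ᶠ z in 𝓝 z₀, ‖z - z₀‖ < ε := by
    filter_upwards [Metric.ball_mem_nhds z₀ hε] with z hz
    simpa [dist_eq_norm] using hz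
  have hF0 : F z₀ = v0 := by
    exact congrArg (fun Q : L →L[ℂ] L => Q v0)
      (Ring.inverse_mul_cancel _ (hunit z₀ (by simpa using hε)))
  have hmax : IsLocalMax (norm ∘ F) z₀ := by
    filter_upwards [hball] with z hz
    simp only [Function.comp, hF0, hv0']
    have h1 := hlow z hz (F z)
    rw [hTF z hz] at h1
    have h3 : s * ‖F z‖ ≤ s * 1 := by
      calc s * ‖F z‖ ≤ ‖w‖ := h1
        _ ≤ s * 1 := by simpa using hw
    exact le_of_mul_le_mul_left h3 hz₀
  have hdT : Differentiable ℂ T := by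
    intro z
    change DifferentiableAt ℂ (fun z : ℂ => A2 - (2 * z) • A1 + (z ^ 2) • (1 : L →L[ℂ] L)) z
    have h1 : DifferentiableAt ℂ (fun z : ℂ => (2 * z) • A1) z :=
      (differentiableAt_id.const_mul 2).smul_const A1
    have h2 : DifferentiableAt ℂ (fun z : ℂ => (z ^ 2) • (1 : L →L[ℂ] L)) z :=
      (differentiableAt_id.pow 2).smul_const _
    exact ((differentiableAt_const A2).sub h1).add h2
  have hd : ∀ᶠ z in 𝓝 z₀, DifferentiableAt ℂ F z := by
    filter_upwards [hball] with z hz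
    obtain ⟨U, hU⟩ := hunit z hz
    have h1 : DifferentiableAt ℂ (Ring.inverse : (L →L[ℂ] L) → _) (T z) := by
      rw [← hU]
      exact (hasFDerivAt_ringInverse (𝕜 := ℂ) U).differentiableAt
    have h2 : DifferentiableAt ℂ (fun z => Ring.inverse (T z)) z := h1.comp z (hdT z)
    exact h2.clm_apply (differentiableAt_const w)
  letI : InnerProductSpace ℝ L := InnerProductSpace.rclikeToReal ℂ L
  have : StrictConvexSpace ℝ L := inferInstance
  have hconst := Complex.eventually_eq_of_isLocalMax_norm hd hmax
  have hconst' : ∀ᶠ z in 𝓝 z₀, T z v0 = w := by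
    filter_upwards [hconst, hball] with z hz hz'
    rw [← hTF z hz', hz, hF0]
  obtain ⟨δ, hδ, hδb⟩ := Metric.eventually_nhds_iff.1 hconst'
  let t : ℂ := ((δ / 2 : ℝ) : ℂ)
  have htn : ‖t‖ = δ / 2 := by
    simp only [t, Complex.norm_real, Real.norm_eq_abs]
    exact abs_of_pos (by positivity)
  have ht0 : t ≠ 0 := by
    rw [← norm_pos_iff, htn]; positivity
  have hp := hδb (y := z₀ + t) (by rw [dist_eq_norm]; simp [htn]; linarith)
  have hm := hδb (y := z₀ - t) (by rw [dist_eq_norm]; simp [htn]; linarith)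
  have hT' : ∀ z, T z v0 = A2 v0 - (2 * z) • A1 v0 + (z ^ 2) • v0 := fun z => rfl
  have key : T (z₀ + t) v0 + T (z₀ - t) v0 - (2 : ℂ) • T z₀ v0 = (2 * t ^ 2) • v0 := by
    simp only [hT']
    module
  rw [hp, hm] at key
  have hz : (2 * t ^ 2) • v0 = 0 := by
    rw [← key]
    change w + w - (2 : ℂ) • w = 0
    module
  rcases smul_eq_zero.1 hz with h | h
  · exact ht0 (by simpa using h)
  · rw [h] at hv0'
    simp at hv0'

/-- The only local minima of `σ_n` are the points where it vanishes:  if `σ_n(z₀) > 0` then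
every neighbourhood of `z₀` contains a point `z` with `σ_n(z) < σ_n(z₀)`. -/
theorem sigma_no_positive_local_minimum
    (D : Submodule ℂ H) (M : H →ₗ[ℂ] H)
    -- `M` restricted to `D` is a (densely defined) self-adjoint operator:
    (hdense : Dense (D : Set H))
    (hsym : ∀ u ∈ D, ∀ v ∈ D, (inner ℂ (M u) v : ℂ) = inner ℂ u (M v))
    (hsa : ∀ x y : H, (∀ u ∈ D, (inner ℂ (M u) x : ℂ) = inner ℂ u y) → x ∈ D ∧ M x = y)
    -- `P` is an orthogonal projection with finite-dimensional range contained in `Dom M²`: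
    (P : H →L[ℂ] H)
    (hPsa : IsSelfAdjoint P)
    (hPidem : IsIdempotentElem P)
    (hPfin : FiniteDimensional ℂ (LinearMap.range (P : H →ₗ[ℂ] H)))
    (hPdom : ∀ v ∈ LinearMap.range (P : H →ₗ[ℂ] H), v ∈ D ∧ M v ∈ D)
    (z₀ : ℂ) (hz₀ : 0 < sigma2 M P z₀) :
    ∀ ε > 0, ∃ z : ℂ, ‖z - z₀‖ < ε ∧ sigma2 M P z < sigma2 M P z₀ := by
  intro ε hε
  by_contra hcon
  push Not at hcon
  set L := LinearMap.range (P : H →ₗ[ℂ] H) with hL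
  have hPL : ∀ v ∈ L, P v = v := by
    rintro v ⟨x, rfl⟩
    exact congrArg (fun Q : H →L[ℂ] H => Q x) hPidem
  let R : H →ₗ[ℂ] L := (P : H →ₗ[ℂ] H).rangeRestrict
  let A1 : L →L[ℂ] L := LinearMap.toContinuousLinearMap (R ∘ₗ M ∘ₗ L.subtype)
  let A2 : L →L[ℂ] L := LinearMap.toContinuousLinearMap (R ∘ₗ M ∘ₗ M ∘ₗ L.subtype)
  let T : ℂ → (L →L[ℂ] L) := fun z => A2 - (2 * z) • A1 + (z ^ 2) • 1
  have hT : ∀ z (u : L), ((T z u : L) : H) = P (sqz M z u) := by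
    intro z u
    have h1 : ((A1 u : L) : H) = P (M u) := rfl
    have h2 : ((A2 u : L) : H) = P (M (M u)) := rfl
    have h3 : T z u = A2 u - (2 * z) • A1 u + (z ^ 2) • u := rfl
    rw [h3]
    simp only [Submodule.coe_add, Submodule.coe_sub, Submodule.coe_smul, h1, h2, sqz,
      LinearMap.comp_apply, LinearMap.sub_apply, LinearMap.smul_apply, LinearMap.id_apply,
      map_sub, map_smul, hPL u u.2]
    module
  have hbdd : ∀ z, BddBelow {r : ℝ | ∃ v, v ∈ L ∧ v ≠ 0 ∧ r = ‖P (sqz M z v)‖ / ‖v‖} := by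
    intro z
    refine ⟨0, ?_⟩
    rintro r ⟨v, -, -, rfl⟩
    positivity
  have hlow : ∀ z (u : L), sigma2 M P z * ‖u‖ ≤ ‖T z u‖ := by
    intro z u
    by_cases hu : u = 0
    · simp [hu]
    have hu' : 0 < ‖u‖ := norm_pos_iff.2 hu
    rw [← le_div_iff₀ hu']
    refine csInf_le (hbdd z) ⟨u, u.2, by simpa using hu, ?_⟩
    rw [← hT]; rfl
  set s := sigma2 M P z₀ with hs
  have hne : Nontrivial L := by
    by_contra hn
    rw [not_nontrivial_iff_subsingleton] at hn
    have : {r : ℝ | ∃ v, v ∈ L ∧ v ≠ 0 ∧ r = ‖P (sqz M z₀ v)‖ / ‖v‖} = ∅ := by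
      ext r
      simp only [Set.mem_ofPred_eq, Set.mem_empty_iff_false, iff_false]
      rintro ⟨v, hv, hv0, -⟩
      exact hv0 (congrArg Subtype.val (Subsingleton.elim (⟨v, hv⟩ : L) 0))
    have h0 : s = sInf {r : ℝ | ∃ v, v ∈ L ∧ v ≠ 0 ∧ r = ‖P (sqz M z₀ v)‖ / ‖v‖} := rfl
    rw [this, Real.sInf_empty] at h0
    exact hz₀.ne' h0
  have : ProperSpace L := FiniteDimensional.proper ℂ L
  obtain ⟨v0, hv0, hmin⟩ := (isCompact_sphere (0 : L) 1).exists_isMinOn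
    (f := fun u : L => ‖T z₀ u‖)
    (by
      obtain ⟨x, hx⟩ := exists_ne (0 : L)
      refine ⟨(‖x‖ : ℂ)⁻¹ • x, ?_⟩
      have : ‖x‖ ≠ 0 := norm_ne_zero_iff.2 hx
      simp only [mem_sphere_zero_iff_norm, norm_smul, norm_inv, Complex.norm_real, norm_norm]
      exact inv_mul_cancel₀ this)
    (by fun_prop)
  have hv0' : ‖v0‖ = 1 := by simpa using hv0
  have hw : ‖T z₀ v0‖ ≤ s := by
    refine le_csInf ⟨_, v0, v0.2, ?_, rfl⟩ ?_
    · intro h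
      have : ‖(v0 : H)‖ = 1 := hv0'
      simp [h] at this
    rintro r ⟨v, hv, hvne, rfl⟩
    have hvn : 0 < ‖v‖ := norm_pos_iff.2 hvne
    let u : L := ⟨v, hv⟩
    have hun : ‖u‖ = ‖v‖ := rfl
    have h1 : ((‖v‖ : ℂ)⁻¹ • u) ∈ Metric.sphere (0 : L) 1 := by
      simp [norm_smul, hun, hvn.ne']
    have h2 := isMinOn_iff.1 hmin _ h1
    simp only [map_smul, norm_smul, norm_inv, Complex.norm_real, norm_norm] at h2
    have h3 : ‖P (sqz M z₀ v)‖ = ‖T z₀ u‖ := by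
      have := hT z₀ u
      rw [show sqz M z₀ v = sqz M z₀ (u : H) from rfl, ← this]; rfl
    rw [h3, div_eq_inv_mul]
    exact h2
  refine sigma_core A1 A2 z₀ ε hε s hz₀ v0 hv0' hw ?_
  intro z hz u
  exact (mul_le_mul_of_nonneg_right (hcon z hz) (norm_nonneg u)).trans (hlow z u)

end
end

section
/- Let M be a self-adjoint operator, L_n ⊆ Dom(M²) a finite-dimensional subspace with orthogonal projection P_n. If |z| > 3·max{‖P_n M² |L_n‖, ‖P_n M |L_n‖, 1}, then the operator P_n(M−z)²|L_n : L_n → L_n is invertible and ‖[P_n(M−z)²|L_n]^{-1}‖ ≤ (9/2)|z|^{-2}. -/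
open Filter Topology

noncomputable section

variable {H : Type*} [NormedAddCommGroup H] [InnerProductSpace ℂ H] [CompleteSpace H]

/-- If `|z| > 3 max{‖P M²|L‖, ‖P M|L‖, 1}` then the compression of `(M-z)²` to `L = ran P` is
invertible, with inverse of norm at most `(9/2)|z|⁻²`. -/
theorem norm_inv_compression_le
    (D : Submodule ℂ H) (M : H →ₗ[ℂ] H)
    -- `M` restricted to `D` is a (densely defined) self-adjoint operator:
    (hdense : Dense (D : Set H))
    (hsym : ∀ u ∈ D, ∀ v ∈ D, (inner ℂ (M u) v : ℂ) = inner ℂ u (M v))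
    (hsa : ∀ x y : H, (∀ u ∈ D, (inner ℂ (M u) x : ℂ) = inner ℂ u y) → x ∈ D ∧ M x = y)
    -- `P` is an orthogonal projection with finite-dimensional range contained in `Dom M²`:
    (P : H →L[ℂ] H)
    (hPsa : IsSelfAdjoint P)
    (hPidem : IsIdempotentElem P)
    [FiniteDimensional ℂ ↥(LinearMap.range (P : H →ₗ[ℂ] H))]
    (hPdom : ∀ v ∈ LinearMap.range (P : H →ₗ[ℂ] H), v ∈ D ∧ M v ∈ D)
    (z : ℂ)
    (hz : 3 * max (max ‖LinearMap.toContinuousLinearMap (compress P (M ∘ₗ M))‖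
        ‖LinearMap.toContinuousLinearMap (compress P M)‖) 1 < ‖z‖) :
    ∃ S : ↥(LinearMap.range (P : H →ₗ[ℂ] H)) →L[ℂ] ↥(LinearMap.range (P : H →ₗ[ℂ] H)),
      (∀ v, S (compress P (sqz M z) v) = v) ∧
      (∀ v, compress P (sqz M z) (S v) = v) ∧
      ‖S‖ ≤ (9 / 2) / ‖z‖ ^ 2 := by
  have key : ∀ v, (2 / 9 * ‖z‖ ^ 2) * ‖v‖ ≤ ‖compress P (sqz M z) v‖ := by
    intro v
    obtain ⟨h12, h3⟩ : _ ∧ _ := max_le_iff.mp (le_of_eq (rfl :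
      max (max ‖LinearMap.toContinuousLinearMap (compress P (M ∘ₗ M))‖
        ‖LinearMap.toContinuousLinearMap (compress P M)‖) 1 = _))
    obtain ⟨h1, h2⟩ := max_le_iff.mp h12
    have hA := (LinearMap.toContinuousLinearMap (compress P (M ∘ₗ M))).le_opNorm v
    have hB := (LinearMap.toContinuousLinearMap (compress P M)).le_opNorm v
    simp only [LinearMap.coe_toContinuousLinearMap'] at hA hB
    have hv : P (v : H) = v := by
      obtain ⟨w, hw⟩ := v.2
      have : P (P w) = P w := by
        have := congrArg (fun f : H →L[ℂ] H => f w) hPidem.eq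
        simpa using this
      rw [← hw]
      exact this
    have heq : z ^ 2 • v = compress P (sqz M z) v - compress P (M ∘ₗ M) v
        + (2 * z) • compress P M v := by
      apply Subtype.ext
      change z ^ 2 • (v : H) = P ((M (M v - z • (v : H))) - z • (M v - z • (v : H)))
        - P (M (M v)) + (2 * z) • P (M v)
      simp only [map_sub, map_smul, hv]
      module
    have hn : ‖z‖ ^ 2 * ‖v‖ ≤ ‖compress P (sqz M z) v‖ + ‖compress P (M ∘ₗ M) v‖
        + 2 * ‖z‖ * ‖compress P M v‖ := by
      have e : ‖z ^ 2 • v‖ = ‖z‖ ^ 2 * ‖v‖ := by rw [norm_smul, norm_pow]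
      have e2 : ‖(2 * z) • compress P M v‖ = 2 * ‖z‖ * ‖compress P M v‖ := by
        rw [norm_smul, norm_mul]; simp
      rw [← e, ← e2, heq]
      exact (norm_add_le _ _).trans (add_le_add_left (norm_sub_le _ _) _)
    have hv0 := norm_nonneg v
    have hz3 : 3 ≤ ‖z‖ := by linarith
    have a1 : ‖compress P (M ∘ₗ M) v‖ ≤ ‖z‖ ^ 2 / 9 * ‖v‖ :=
      hA.trans (mul_le_mul_of_nonneg_right (by nlinarith) hv0)
    have b1 : ‖compress P M v‖ ≤ ‖z‖ / 3 * ‖v‖ :=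
      hB.trans (mul_le_mul_of_nonneg_right (by linarith) hv0)
    have b2 := mul_le_mul_of_nonneg_left b1 (by positivity : 0 ≤ 2 * ‖z‖)
    nlinarith
  have hzpos : 0 < ‖z‖ := by
    have := le_max_right (max ‖LinearMap.toContinuousLinearMap (compress P (M ∘ₗ M))‖
        ‖LinearMap.toContinuousLinearMap (compress P M)‖) 1
    linarith
  have hinj : Function.Injective (compress P (sqz M z)) := by
    rw [injective_iff_map_eq_zero]
    intro v h
    have h1 := key v
    rw [h, norm_zero] at h1
    have : ‖v‖ ≤ 0 := by
      by_contra hc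
      push Not at hc
      have : 0 < (2 / 9 * ‖z‖ ^ 2) * ‖v‖ := by positivity
      linarith
    exact norm_le_zero_iff.mp this
  let e := LinearEquiv.ofInjectiveEndo (compress P (sqz M z)) hinj
  have he : ∀ v, e v = compress P (sqz M z) v := fun v => rfl
  refine ⟨LinearMap.toContinuousLinearMap e.symm.toLinearMap, ?_, ?_, ?_⟩
  · intro v
    exact e.symm_apply_apply v
  · intro v
    exact e.apply_symm_apply v
  · refine ContinuousLinearMap.opNorm_le_bound _ (by positivity) fun v => ?_
    have h1 := key (e.symm v)
    rw [← he, e.apply_symm_apply] at h1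
    change ‖e.symm v‖ ≤ _
    rw [div_mul_eq_mul_div, le_div_iff₀ (by positivity)]
    linarith

end
end

section
/- Let M be a bounded self-adjoint operator on a complex Hilbert space H and (P_n) orthogonal projections with n-dimensional ranges L_n such that P_n x → x for all x ∈ H. Then Λ ⊆ Σ: if z ∈ ℂ is such that there exist z_n ∈ Spec₂(M|L_n) with z_n → z, then σ_n(z) → 0 as n → ∞. -/
open Filter Topology

noncomputable section

variable {H : Type*} [NormedAddCommGroup H] [InnerProductSpace ℂ H] [CompleteSpace H]

/-- For a bounded self-adjoint operator, `Λ ⊆ Σ`:  if `z_n ∈ Spec₂(M|L_n)` and `z_n → z`,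
then `σ_n(z) → 0`. -/
theorem limit_of_spec2_mem_Sigma
    (M : H →L[ℂ] H) (hM : IsSelfAdjoint M)
    (P : ℕ → H →L[ℂ] H)
    (hPsa : ∀ n, IsSelfAdjoint (P n))
    (hPidem : ∀ n, IsIdempotentElem (P n))
    (hPfin : ∀ n, FiniteDimensional ℂ (LinearMap.range (P n : H →ₗ[ℂ] H)))
    (hPdim : ∀ n, Module.finrank ℂ (LinearMap.range (P n : H →ₗ[ℂ] H)) = n)
    (hPlim : ∀ x : H, Tendsto (fun n => P n x) atTop (𝓝 x))
    (z : ℂ) (zs : ℕ → ℂ)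
    (hzs : ∀ n, 1 ≤ n → zs n ∈ spec2 (M : H →ₗ[ℂ] H) (P n))
    (hlim : Tendsto zs atTop (𝓝 z)) :
    Tendsto (fun n => sigma2 (M : H →ₗ[ℂ] H) (P n) z) atTop (𝓝 0) := by
  have hP1 : ∀ n, ‖P n‖ ≤ 1 := by
    intro n
    exact IsStarProjection.norm_le (P n) ⟨hPidem n, hPsa n⟩
  have hub : Tendsto (fun n => ‖zs n - z‖ * (2 * ‖M‖ + ‖z‖ + ‖zs n‖)) atTop (𝓝 0) := by
    have h1 : Tendsto (fun n => ‖zs n - z‖) atTop (𝓝 0) := by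
      simpa using (hlim.sub_const z).norm
    have h2 : Tendsto (fun n => 2 * ‖M‖ + ‖z‖ + ‖zs n‖) atTop (𝓝 (2 * ‖M‖ + ‖z‖ + ‖z‖)) :=
      hlim.norm.const_add _
    simpa using h1.mul h2
  refine tendsto_of_tendsto_of_tendsto_of_le_of_le' tendsto_const_nhds hub ?_ ?_
  · refine Eventually.of_forall fun n => Real.sInf_nonneg ?_
    rintro r ⟨v, -, -, rfl⟩
    positivity
  · filter_upwards [eventually_ge_atTop 1] with n hn
    have hb := hzs n hn
    have := hPfin n
    have hni : ¬ Function.Injective (compress (P n) (sqz (M : H →ₗ[ℂ] H) (zs n))) :=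
      fun hi => hb ⟨hi, LinearMap.injective_iff_surjective.1 hi⟩
    rw [injective_iff_map_eq_zero] at hni
    push Not at hni
    obtain ⟨⟨v, hv⟩, h0, hne⟩ := hni
    have hv0 : v ≠ 0 := fun h => hne (Subtype.ext h)
    have hPv : P n (sqz (M : H →ₗ[ℂ] H) (zs n) v) = 0 := congrArg Subtype.val h0
    have hbdd : BddBelow {r : ℝ | ∃ v, v ∈ LinearMap.range (P n : H →ₗ[ℂ] H) ∧ v ≠ 0 ∧
        r = ‖P n (sqz (M : H →ₗ[ℂ] H) z v)‖ / ‖v‖} := by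
      refine ⟨0, ?_⟩
      rintro r ⟨v, -, -, rfl⟩
      positivity
    refine (csInf_le hbdd ⟨v, hv, hv0, rfl⟩).trans ?_
    rw [div_le_iff₀ (norm_pos_iff.2 hv0)]
    have hid : sqz (M : H →ₗ[ℂ] H) z v = sqz (M : H →ₗ[ℂ] H) (zs n) v
        + (zs n - z) • ((2 : ℂ) • M v - z • v - zs n • v) := by
      simp only [sqz, LinearMap.comp_apply, LinearMap.sub_apply, LinearMap.smul_apply,
        LinearMap.id_apply, ContinuousLinearMap.coe_coe, map_sub, map_smul]
      module
    rw [hid, map_add, hPv, zero_add]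
    have hw : ‖(2 : ℂ) • M v - z • v - zs n • v‖ ≤ (2 * ‖M‖ + ‖z‖ + ‖zs n‖) * ‖v‖ := by
      have e1 := norm_sub_le ((2 : ℂ) • M v - z • v) (zs n • v)
      have e2 := norm_sub_le ((2 : ℂ) • M v) (z • v)
      have e3 := M.le_opNorm v
      simp only [norm_smul, Complex.norm_ofNat] at e1 e2
      linarith
    calc _ ≤ 1 * ‖(zs n - z) • ((2 : ℂ) • M v - z • v - zs n • v)‖ :=
          (P n).le_of_opNorm_le (hP1 n) _
      _ ≤ _ := by
          rw [one_mul, norm_smul, mul_assoc]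
          gcongr

end
end

section
/- Let M be a bounded self-adjoint operator on a complex Hilbert space H and (P_n) orthogonal projections with n-dimensional ranges L_n such that P_n x → x for all x ∈ H. If λ ∈ Spec M, then σ_n(λ) → 0 as n → ∞; that is, Spec M ⊆ Σ ∩ ℝ. -/
open Filter Topology

noncomputable section

variable {H : Type*} [NormedAddCommGroup H] [InnerProductSpace ℂ H] [CompleteSpace H]

/-- For a bounded self-adjoint operator `M`, every spectral point `λ` satisfies
`σ_n(λ) → 0`; that is, `Spec M ⊆ Σ ∩ ℝ`. -/
theorem spectrum_subset_Sigma
    (M : H →L[ℂ] H) (hM : IsSelfAdjoint M)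
    (P : ℕ → H →L[ℂ] H)
    (hPsa : ∀ n, IsSelfAdjoint (P n))
    (hPidem : ∀ n, IsIdempotentElem (P n))
    (hPfin : ∀ n, FiniteDimensional ℂ (LinearMap.range (P n : H →ₗ[ℂ] H)))
    (hPdim : ∀ n, Module.finrank ℂ (LinearMap.range (P n : H →ₗ[ℂ] H)) = n)
    (hPlim : ∀ x : H, Tendsto (fun n => P n x) atTop (𝓝 x))
    (l : ℂ) (hl : l ∈ spectrum ℂ M) :
    Tendsto (fun n => sigma2 (M : H →ₗ[ℂ] H) (P n) l) atTop (𝓝 0) := by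
  have hlre : l = (l.re : ℂ) := hM.mem_spectrum_eq_re hl
  set A : H →L[ℂ] H := M - l • ContinuousLinearMap.id ℂ H with hA
  have hAsa : IsSelfAdjoint A := by
    refine hM.sub ?_
    rw [hlre]
    refine IsSelfAdjoint.smul ?_ (IsSelfAdjoint.one (H →L[ℂ] H))
    rw [isSelfAdjoint_iff]
    exact Complex.conj_ofReal _
  have hAnu : ¬ IsUnit A := by
    intro h
    refine hl ?_
    have : algebraMap ℂ (H →L[ℂ] H) l - M = -A := by
      rw [hA, Algebra.algebraMap_eq_smul_one, neg_sub]
      rfl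
    rw [spectrum.mem_resolventSet_iff, this]
    exact h.neg
  have hsqz : ∀ v, sqz (M : H →ₗ[ℂ] H) l v = A (A v) := fun v => rfl
  have hsym : ∀ x y, inner ℂ (A x) y = inner ℂ x (A y) :=
    fun x y => hAsa.isSymmetric x y
  -- approximate eigenvectors of `A`
  have key : ∀ c : ℝ, 0 < c → ∃ x : H, ‖A x‖ < c * ‖x‖ := by
    intro c hc
    by_contra! hcon
    apply hAnu
    have h2 : IsUnit (A * A) := by
      refine ContinuousLinearMap.isUnit_of_forall_le_norm_inner_map (A * A)
        (c := ⟨c ^ 2, by positivity⟩) (pow_pos hc 2) ?_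
      intro x
      have : inner ℂ ((A * A) x) x = inner ℂ (A x) (A x) := hsym (A x) x
      rw [this, inner_self_eq_norm_sq_to_K, norm_pow]
      have h3 := hcon x
      have h4 : 0 ≤ c * ‖x‖ := by positivity
      have h5 : (c * ‖x‖) ^ 2 ≤ ‖A x‖ ^ 2 := by gcongr
      have h6 : ‖((‖A x‖ : ℝ) : ℂ)‖ = ‖A x‖ := by simp
      change ‖x‖ ^ 2 * c ^ 2 ≤ ‖((‖A x‖ : ℝ) : ℂ)‖ ^ 2
      rw [h6]
      linarith [mul_pow c ‖x‖ 2, mul_comm (c ^ 2) (‖x‖ ^ 2)]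
    exact ((Commute.refl A).isUnit_mul_iff.mp h2).1
  have hbdd : ∀ n, ∀ r ∈ {r : ℝ | ∃ v, v ∈ LinearMap.range (P n : H →ₗ[ℂ] H) ∧ v ≠ 0 ∧
      r = ‖P n (sqz (M : H →ₗ[ℂ] H) l v)‖ / ‖v‖}, 0 ≤ r := by
    rintro n r ⟨v, -, -, rfl⟩
    positivity
  rw [Metric.tendsto_atTop']
  intro ε hε
  have hK : 0 < ‖A‖ + 1 := by positivity
  obtain ⟨x, hx⟩ := key (ε / (‖A‖ + 1)) (by positivity)
  have hx0 : x ≠ 0 := by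
    rintro rfl
    simp at hx
  have hxn : 0 < ‖x‖ := norm_pos_iff.mpr hx0
  have hAx : ‖A (A x)‖ / ‖x‖ < ε := by
    rw [div_lt_iff₀ hxn]
    calc ‖A (A x)‖ ≤ ‖A‖ * ‖A x‖ := A.le_opNorm _
      _ ≤ (‖A‖ + 1) * ‖A x‖ := by gcongr; linarith
      _ < (‖A‖ + 1) * (ε / (‖A‖ + 1) * ‖x‖) := by gcongr
      _ = ε * ‖x‖ := by field_simp
  have hlim : Tendsto (fun n => ‖A (A (P n x))‖ / ‖P n x‖) atTop (𝓝 (‖A (A x)‖ / ‖x‖)) := by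
    refine Tendsto.div ?_ (hPlim x).norm hxn.ne'
    exact (((A.continuous.comp A.continuous).tendsto x).comp (hPlim x)).norm
  have hev : ∀ᶠ n in atTop, dist (sigma2 (M : H →ₗ[ℂ] H) (P n) l) 0 < ε := by
    filter_upwards [hlim.eventually (gt_mem_nhds hAx), (hPlim x).eventually_ne hx0] with n h1 h2
    have h0 : 0 ≤ sigma2 (M : H →ₗ[ℂ] H) (P n) l := Real.sInf_nonneg (hbdd n)
    rw [Real.dist_eq, sub_zero, abs_of_nonneg h0]
    refine lt_of_le_of_lt ?_ h1
    have h3 : sigma2 (M : H →ₗ[ℂ] H) (P n) l ≤ ‖P n (A (A (P n x)))‖ / ‖P n x‖ :=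
      csInf_le ⟨0, hbdd n⟩ ⟨P n x, ⟨x, rfl⟩, h2, rfl⟩
    refine h3.trans ?_
    have hP1 : ‖P n‖ ≤ 1 := IsStarProjection.norm_le (P n) ⟨hPidem n, hPsa n⟩
    gcongr
    exact (P n).le_of_opNorm_le hP1 _ |>.trans (one_mul _).le
  obtain ⟨N, hN⟩ := eventually_atTop.mp hev
  exact ⟨N, fun n hn => hN n hn.le⟩

end
end

section
/- Let M be a self-adjoint operator on a complex Hilbert space H and L_n ⊆ Dom(M²) finite-dimensional subspaces with orthogonal projections P_n. If λ ∈ ℝ and λ ∉ Spec M, then there exists b > 0, independent of n, such that σ_n(λ) ≥ b for all n; consequently Σ ∩ ℝ ⊆ Spec M. (In particular, dist(λ, Spec M)² is such a lower bound, since the numerical range of P_n(M−λ)²|L_n is contained in the numerical range of (M−λ)² ⊆ [dist(λ, Spec M)², ∞).) -/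
open Filter Topology

noncomputable section

variable {H : Type*} [NormedAddCommGroup H] [InnerProductSpace ℂ H] [CompleteSpace H]

/-- If `λ ∈ ℝ` and `λ ∉ Spec M`, then there is `b > 0` independent of `n` with
`σ_n(λ) ≥ b` for all `n`; consequently `λ ∉ Σ`, i.e. `Σ ∩ ℝ ⊆ Spec M`. -/
theorem sigma_bounded_below_of_not_mem_spectrum
    (D : Submodule ℂ H) (M : H →ₗ[ℂ] H)
    -- `M` restricted to `D` is a (densely defined) self-adjoint operator:
    (hdense : Dense (D : Set H))
    (hsym : ∀ u ∈ D, ∀ v ∈ D, (inner ℂ (M u) v : ℂ) = inner ℂ u (M v))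
    (hsa : ∀ x y : H, (∀ u ∈ D, (inner ℂ (M u) x : ℂ) = inner ℂ u y) → x ∈ D ∧ M x = y)
    -- `P n` is an orthogonal projection with finite-dimensional nontrivial range `⊆ Dom M²`:
    (P : ℕ → H →L[ℂ] H)
    (hPsa : ∀ n, IsSelfAdjoint (P n))
    (hPidem : ∀ n, IsIdempotentElem (P n))
    (hPfin : ∀ n, FiniteDimensional ℂ (LinearMap.range (P n : H →ₗ[ℂ] H)))
    (hPne : ∀ n, LinearMap.range (P n : H →ₗ[ℂ] H) ≠ ⊥)
    (hPdom : ∀ n, ∀ v ∈ LinearMap.range (P n : H →ₗ[ℂ] H), v ∈ D ∧ M v ∈ D)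
    (l : ℝ) (hl : (l : ℂ) ∉ pspec D M) :
    (∃ b > 0, ∀ n, b ≤ sigma2 M (P n) (l : ℂ)) ∧
    ¬ Tendsto (fun n => sigma2 M (P n) (l : ℂ)) atTop (𝓝 0) := by
  have key : ∃ b > 0, ∀ n, b ≤ sigma2 M (P n) (l : ℂ) := by
    have hl' : ∃ R : H →L[ℂ] H, (∀ x ∈ D, R (M x - (l : ℂ) • x) = x) ∧
        ∀ y : H, R y ∈ D ∧ M (R y) - (l : ℂ) • R y = y := by
      by_contra h
      exact hl h
    obtain ⟨R, hR, -⟩ := hl'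
    have hC : 0 < ‖R‖ + 1 := by positivity
    refine ⟨1 / (‖R‖ + 1) ^ 2, by positivity, fun n => ?_⟩
    unfold sigma2
    apply le_csInf
    · obtain ⟨v, hv, hv0⟩ := Submodule.exists_mem_ne_zero_of_ne_bot (hPne n)
      exact ⟨_, v, hv, hv0, rfl⟩
    · rintro r ⟨v, hv, hv0, rfl⟩
      obtain ⟨hvD, hMvD⟩ := hPdom n v hv
      have hPv : P n v = v := by
        obtain ⟨u, rfl⟩ := hv
        have := congrArg (fun T : H →L[ℂ] H => T u) (hPidem n).eq
        simpa using this
      set w : H := M v - (l : ℂ) • v with hw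
      have hwD : w ∈ D := D.sub_mem hMvD (D.smul_mem _ hvD)
      have hsq : sqz M (l : ℂ) v = M w - (l : ℂ) • w := by
        simp [sqz, hw]
      have h1 : (inner ℂ (P n (sqz M (l : ℂ) v)) v : ℂ) = inner ℂ w w := by
        have h2 : (inner ℂ (P n (sqz M (l : ℂ) v)) v : ℂ) = inner ℂ (sqz M (l : ℂ) v) (P n v) :=
          (ContinuousLinearMap.isSelfAdjoint_iff_isSymmetric.mp (hPsa n)) _ _
        rw [h2, hPv, hsq, inner_sub_left, hsym w hwD v hvD, inner_smul_left]
        conv_rhs => rw [hw, inner_sub_right, inner_smul_right, ← hw]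
        simp
      have h3 : ‖w‖ ^ 2 ≤ ‖P n (sqz M (l : ℂ) v)‖ * ‖v‖ := by
        have h4 := norm_inner_le_norm (𝕜 := ℂ) (P n (sqz M (l : ℂ) v)) v
        rw [h1, inner_self_eq_norm_sq_to_K] at h4
        simpa using h4
      have h5 : ‖v‖ ≤ (‖R‖ + 1) * ‖w‖ := by
        have h6 := R.le_opNorm w
        rw [hR v hvD] at h6
        nlinarith [norm_nonneg w]
      have hvp : 0 < ‖v‖ := norm_pos_iff.mpr hv0
      rw [div_le_div_iff₀ (by positivity) hvp, one_mul]
      have h7 : ‖v‖ * ‖v‖ ≤ (‖P n (sqz M (l : ℂ) v)‖ * (‖R‖ + 1) ^ 2) * ‖v‖ := by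
        calc ‖v‖ * ‖v‖ ≤ ((‖R‖ + 1) * ‖w‖) * ((‖R‖ + 1) * ‖w‖) := by gcongr
          _ = (‖R‖ + 1) ^ 2 * ‖w‖ ^ 2 := by ring
          _ ≤ (‖R‖ + 1) ^ 2 * (‖P n (sqz M (l : ℂ) v)‖ * ‖v‖) := by gcongr
          _ = _ := by ring
      exact le_of_mul_le_mul_right h7 hvp
  refine ⟨key, fun ht => ?_⟩
  obtain ⟨b, hb, hbn⟩ := key
  exact absurd (ge_of_tendsto' ht hbn) (not_le.mpr hb)

end
end

section
/- Let M be a bounded self-adjoint operator whose spectrum consists of exactly two points a < b, and let (P_n) be orthogonal projections with n-dimensional ranges L_n such that P_n x → x for all x ∈ H. Then Σ = Λ, and both sets are contained in the circle {z ∈ ℂ : |z − (a+b)/2| = (b−a)/2}. -/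
open Filter Topology

noncomputable section

variable {H : Type*} [NormedAddCommGroup H] [InnerProductSpace ℂ H] [CompleteSpace H]

/-- Lower bound for a symmetric operator in finite dimension by the nearest eigenvalue. -/
lemma aux_nearest {E : Type*} [NormedAddCommGroup E] [InnerProductSpace ℂ E]
    [FiniteDimensional ℂ E] (T : E →ₗ[ℂ] E) (hT : T.IsSymmetric) {n : ℕ} (hn1 : 1 ≤ n)
    (hn : Module.finrank ℂ E = n) (w : ℂ) :
    ∃ (l : ℝ) (v : E), v ≠ 0 ∧ T v = (l : ℂ) • v ∧
      ∀ u : E, ‖(l : ℂ) - w‖ * ‖u‖ ≤ ‖T u - w • u‖ := by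
  have : Nonempty (Fin n) := ⟨⟨0, hn1⟩⟩
  obtain ⟨i, hi⟩ := Finite.exists_min (fun i : Fin n => ‖((hT.eigenvalues hn i : ℝ) : ℂ) - w‖)
  refine ⟨hT.eigenvalues hn i, hT.eigenvectorBasis hn i, ?_, hT.apply_eigenvectorBasis hn i, ?_⟩
  · simpa using (hT.eigenvectorBasis hn).toBasis.ne_zero i
  intro u
  rw [← sq_le_sq₀ (by positivity) (by positivity), mul_pow,
    ← (hT.eigenvectorBasis hn).sum_sq_norm_inner_right u,
    ← (hT.eigenvectorBasis hn).sum_sq_norm_inner_right (T u - w • u), Finset.mul_sum]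
  refine Finset.sum_le_sum fun j _ => ?_
  have h1 : inner ℂ (hT.eigenvectorBasis hn j) (T u - w • u)
      = (((hT.eigenvalues hn j : ℝ) : ℂ) - w) * inner ℂ (hT.eigenvectorBasis hn j) u := by
    rw [inner_sub_right, inner_smul_right, ← hT, hT.apply_eigenvectorBasis hn j, inner_smul_left]
    simp
    ring
  rw [h1, norm_mul, mul_pow]
  have := hi j
  gcongr

lemma aux_quad (M : H →L[ℂ] H) (hM : IsSelfAdjoint M) (a b : ℝ)
    (hspec : spectrum ℂ M = {(a : ℂ), (b : ℂ)}) (v : H) :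
    M (M v) = ((a : ℂ) + b) • M v - ((a : ℂ) * b) • v := by
  have hN : IsStarNormal M := hM.isStarNormal
  have h := cfc_polynomial (p := IsStarNormal)
    ((Polynomial.X - Polynomial.C (a : ℂ)) * (Polynomial.X - Polynomial.C (b : ℂ))) M hN
  have h0 : cfc (Polynomial.eval · ((Polynomial.X - Polynomial.C (a : ℂ)) *
      (Polynomial.X - Polynomial.C (b : ℂ)))) M = cfc (fun _ : ℂ => (0 : ℂ)) M := by
    apply cfc_congr
    intro x hx
    rw [hspec] at hx
    rcases hx with rfl | hx
    · simp
    · simp at hx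
      simp [hx]
  rw [cfc_const_zero] at h0
  have h2 := h.symm.trans h0
  have h3 := congrArg (fun T : H →L[ℂ] H => T v) h2
  simp [Algebra.algebraMap_eq_smul_one] at h3
  linear_combination (norm := module) h3

lemma aux_sqz (M : H →L[ℂ] H) (hM : IsSelfAdjoint M) (a b : ℝ)
    (hspec : spectrum ℂ M = {(a : ℂ), (b : ℂ)}) (z : ℂ) (v : H) :
    sqz (M : H →ₗ[ℂ] H) z v = ((a : ℂ) + b - 2 * z) • M v + (z ^ 2 - (a : ℂ) * b) • v := by
  have h := aux_quad M hM a b hspec v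
  simp [sqz]
  rw [h]
  module

lemma aux_bounds (M : H →L[ℂ] H) (hM : IsSelfAdjoint M) (a b : ℝ) (hab : a < b)
    (hspec : spectrum ℂ M = {(a : ℂ), (b : ℂ)}) (v : H) (hv : v ≠ 0) (l : ℝ)
    (hl : inner ℂ v (M v) = (l : ℂ) * (‖v‖ : ℂ) ^ 2) : a ≤ l ∧ l ≤ b := by
  have hsym : ∀ x y : H, inner ℂ (M x) y = inner ℂ x (M y) := fun x y => by
    have := (ContinuousLinearMap.isSelfAdjoint_iff_isSymmetric.mp hM) x y
    simpa using this
  have hq := aux_quad M hM a b hspec v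
  have hvn : 0 < ‖v‖ ^ 2 := by positivity
  have key : ∀ c : ℝ, ‖M v - (c : ℂ) • v‖ ^ 2
      = ((a + b) * l - a * b - 2 * c * l + c ^ 2) * ‖v‖ ^ 2 := by
    intro c
    have h1 : ((‖M v - (c : ℂ) • v‖ : ℂ)) ^ 2 =
        (((a : ℂ) + b) * l - a * b - 2 * c * l + c ^ 2) * (‖v‖ : ℂ) ^ 2 := by
      have e := inner_self_eq_norm_sq_to_K (𝕜 := ℂ) (M v - (c : ℂ) • v)
      have e2 := inner_self_eq_norm_sq_to_K (𝕜 := ℂ) v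
      simp only [Complex.coe_algebraMap] at e e2
      rw [← e]
      simp only [inner_sub_left, inner_sub_right, inner_smul_left, inner_smul_right, hsym, hq, hl,
        e2, Complex.conj_ofReal]
      ring
    exact_mod_cast h1
  have ha := key a
  have hb := key b
  have ha' : 0 ≤ ‖M v - (a : ℂ) • v‖ ^ 2 := by positivity
  have hb' : 0 ≤ ‖M v - (b : ℂ) • v‖ ^ 2 := by positivity
  rw [ha] at ha'
  rw [hb] at hb'
  have ha2 := nonneg_of_mul_nonneg_left ha' hvn
  have hb2 := nonneg_of_mul_nonneg_left hb' hvn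
  constructor <;> nlinarith

lemma aux_symm (M : H →L[ℂ] H) (hM : IsSelfAdjoint M) (Q : H →L[ℂ] H)
    (hQ : IsSelfAdjoint Q) (hQi : IsIdempotentElem Q) :
    (compress Q (M : H →ₗ[ℂ] H)).IsSymmetric := by
  have hsM := ContinuousLinearMap.isSelfAdjoint_iff_isSymmetric.mp hM
  have hsQ := ContinuousLinearMap.isSelfAdjoint_iff_isSymmetric.mp hQ
  have hfix : ∀ x ∈ LinearMap.range (Q : H →ₗ[ℂ] H), Q x = x := by
    rintro _ ⟨y, rfl⟩
    have := congrArg (fun T : H →L[ℂ] H => T y) hQi.eq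
    simpa using this
  intro x y
  have h1 := hsQ (M x) y
  have h2 := hsQ x (M y)
  have h3 := hsM x y
  simp only [ContinuousLinearMap.coe_coe] at h1 h2 h3
  change inner ℂ (Q (M x)) (y : H) = inner ℂ (x : H) (Q (M y))
  rw [h1, ← h2, hfix x x.2, hfix y y.2, h3]

/-- Existence of the eigenvalue of the compression nearest to `w`. -/
lemma aux_eig (M : H →L[ℂ] H) (hM : IsSelfAdjoint M) (a b : ℝ) (hab : a < b)
    (hspec : spectrum ℂ M = {(a : ℂ), (b : ℂ)}) (Q : H →L[ℂ] H)
    (hQ : IsSelfAdjoint Q) (hQi : IsIdempotentElem Q) (n : ℕ) (hn1 : 1 ≤ n)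
    (hf : FiniteDimensional ℂ (LinearMap.range (Q : H →ₗ[ℂ] H)))
    (hn : Module.finrank ℂ (LinearMap.range (Q : H →ₗ[ℂ] H)) = n) (w : ℂ) :
    ∃ l : ℝ, a ≤ l ∧ l ≤ b ∧
      (∃ v ∈ LinearMap.range (Q : H →ₗ[ℂ] H), v ≠ 0 ∧ Q (M v) = (l : ℂ) • v) ∧
      ∀ u ∈ LinearMap.range (Q : H →ₗ[ℂ] H), ‖(l : ℂ) - w‖ * ‖u‖ ≤ ‖Q (M u) - w • u‖ := by
  obtain ⟨l, v, hv, he, hb⟩ := aux_nearest _ (aux_symm M hM Q hQ hQi) hn1 hn w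
  have he' : Q (M v) = (l : ℂ) • (v : H) := congrArg Subtype.val he
  have hv' : (v : H) ≠ 0 := by simpa using hv
  have hfix : Q (v : H) = v := by
    obtain ⟨_, ⟨y, rfl⟩⟩ := v
    have := congrArg (fun T : H →L[ℂ] H => T y) hQi.eq
    simpa using this
  have hsQ := ContinuousLinearMap.isSelfAdjoint_iff_isSymmetric.mp hQ (v : H) (M v)
  simp only [ContinuousLinearMap.coe_coe] at hsQ
  have hin : inner ℂ (v : H) (M v) = (l : ℂ) * (‖(v : H)‖ : ℂ) ^ 2 := by
    rw [hfix, he', inner_smul_right, inner_self_eq_norm_sq_to_K] at hsQ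
    exact hsQ
  obtain ⟨h1, h2⟩ := aux_bounds M hM a b hab hspec v hv' l hin
  exact ⟨l, h1, h2, ⟨v, v.2, hv', he'⟩, fun u hu => hb ⟨u, hu⟩⟩

lemma aux_fix (Q : H →L[ℂ] H) (hQi : IsIdempotentElem Q) :
    ∀ x ∈ LinearMap.range (Q : H →ₗ[ℂ] H), Q x = x := by
  rintro _ ⟨y, rfl⟩
  have := congrArg (fun T : H →L[ℂ] H => T y) hQi.eq
  simpa using this

lemma aux_Qsqz (M : H →L[ℂ] H) (hM : IsSelfAdjoint M) (a b : ℝ)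
    (hspec : spectrum ℂ M = {(a : ℂ), (b : ℂ)}) (Q : H →L[ℂ] H)
    (hQi : IsIdempotentElem Q) (z : ℂ) (v : H) (hv : v ∈ LinearMap.range (Q : H →ₗ[ℂ] H)) :
    Q (sqz (M : H →ₗ[ℂ] H) z v)
      = ((a : ℂ) + b - 2 * z) • Q (M v) + (z ^ 2 - (a : ℂ) * b) • v := by
  rw [aux_sqz M hM a b hspec, map_add, map_smul, map_smul, aux_fix Q hQi v hv]

/-- Nonzero kernel vectors give points of the second order spectrum and conversely. -/
lemma aux_spec2_iff (M : H →L[ℂ] H) (Q : H →L[ℂ] H) (z : ℂ)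
    (hf : FiniteDimensional ℂ (LinearMap.range (Q : H →ₗ[ℂ] H))) :
    z ∈ spec2 (M : H →ₗ[ℂ] H) Q ↔
      ∃ v ∈ LinearMap.range (Q : H →ₗ[ℂ] H), v ≠ 0 ∧ Q (sqz (M : H →ₗ[ℂ] H) z v) = 0 := by
  have hbij : Function.Bijective (compress Q (sqz (M : H →ₗ[ℂ] H) z)) ↔
      Function.Injective (compress Q (sqz (M : H →ₗ[ℂ] H) z)) :=
    ⟨fun h => h.1, fun h => ⟨h, LinearMap.injective_iff_surjective.mp h⟩⟩
  change ¬ _ ↔ _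
  rw [hbij, injective_iff_map_eq_zero]
  push Not
  constructor
  · rintro ⟨v, h1, h2⟩
    exact ⟨v, v.2, by simpa using h2, congrArg Subtype.val h1⟩
  · rintro ⟨v, hv, h1, h2⟩
    exact ⟨⟨v, hv⟩, Subtype.ext h2, by simpa [Subtype.ext_iff] using h1⟩

lemma aux_sigma_nonneg (M : H →L[ℂ] H) (Q : H →L[ℂ] H) (z : ℂ) :
    0 ≤ sigma2 (M : H →ₗ[ℂ] H) Q z := by
  apply Real.sInf_nonneg
  rintro _ ⟨v, _, _, rfl⟩
  positivity

lemma aux_sigma_le (M : H →L[ℂ] H) (Q : H →L[ℂ] H) (z : ℂ) (v : H)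
    (hv : v ∈ LinearMap.range (Q : H →ₗ[ℂ] H)) (hv0 : v ≠ 0) :
    sigma2 (M : H →ₗ[ℂ] H) Q z ≤ ‖Q (sqz (M : H →ₗ[ℂ] H) z v)‖ / ‖v‖ := by
  apply csInf_le
  · refine ⟨0, ?_⟩
    rintro _ ⟨v, _, _, rfl⟩
    positivity
  · exact ⟨v, hv, hv0, rfl⟩

lemma aux_le_sigma (M : H →L[ℂ] H) (Q : H →L[ℂ] H) (z : ℂ) (v : H)
    (hv : v ∈ LinearMap.range (Q : H →ₗ[ℂ] H)) (hv0 : v ≠ 0) (c : ℝ)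
    (hc : ∀ u ∈ LinearMap.range (Q : H →ₗ[ℂ] H), c * ‖u‖ ≤ ‖Q (sqz (M : H →ₗ[ℂ] H) z u)‖) :
    c ≤ sigma2 (M : H →ₗ[ℂ] H) Q z := by
  apply le_csInf
  · exact ⟨_, v, hv, hv0, rfl⟩
  · rintro _ ⟨u, hu, hu0, rfl⟩
    rw [le_div_iff₀ (by positivity)]
    exact hc u hu

lemma aux_key
    (M : H →L[ℂ] H) (hM : IsSelfAdjoint M)
    (a b : ℝ) (hab : a < b)
    (hspec : spectrum ℂ M = {(a : ℂ), (b : ℂ)})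
    (P : ℕ → H →L[ℂ] H)
    (hPsa : ∀ n, IsSelfAdjoint (P n))
    (hPidem : ∀ n, IsIdempotentElem (P n))
    (hPfin : ∀ n, FiniteDimensional ℂ (LinearMap.range (P n : H →ₗ[ℂ] H)))
    (hPdim : ∀ n, Module.finrank ℂ (LinearMap.range (P n : H →ₗ[ℂ] H)) = n)
    (z : ℂ) (hz : Tendsto (fun n => sigma2 (M : H →ₗ[ℂ] H) (P n) z) atTop (𝓝 0)) :
    ∃ (l : ℕ → ℝ) (m : ℝ), Tendsto l atTop (𝓝 m) ∧ a ≤ m ∧ m ≤ b ∧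
      z ^ 2 - (a : ℂ) * b = m * (2 * z - a - b) ∧
      ∀ n, 1 ≤ n → a ≤ l n ∧ l n ≤ b ∧
        ∃ v ∈ LinearMap.range (P n : H →ₗ[ℂ] H), v ≠ 0 ∧ P n (M v) = (l n : ℂ) • v := by
  have hex : ∀ w : ℂ, ∀ n, ∃ l : ℝ, 1 ≤ n → a ≤ l ∧ l ≤ b ∧
      (∃ v ∈ LinearMap.range (P n : H →ₗ[ℂ] H), v ≠ 0 ∧ P n (M v) = (l : ℂ) • v) ∧
      ∀ u ∈ LinearMap.range (P n : H →ₗ[ℂ] H),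
        ‖(l : ℂ) - w‖ * ‖u‖ ≤ ‖P n (M u) - w • u‖ := by
    intro w n
    by_cases hn : 1 ≤ n
    · obtain ⟨l, hl⟩ := aux_eig M hM a b hab hspec (P n) (hPsa n) (hPidem n) n hn (hPfin n)
        (hPdim n) w
      exact ⟨l, fun _ => hl⟩
    · exact ⟨0, fun h => absurd h hn⟩
  have hzc : 2 * z - a - b ≠ 0 := by
    intro h0
    have hbd : ∀ n, 1 ≤ n → ‖z ^ 2 - (a : ℂ) * b‖ ≤ sigma2 (M : H →ₗ[ℂ] H) (P n) z := by
      intro n hn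
      obtain ⟨l, hl⟩ := hex 0 n
      obtain ⟨_, _, ⟨v, hv, hv0, _⟩, _⟩ := hl hn
      apply aux_le_sigma M (P n) z v hv hv0
      intro u hu
      rw [aux_Qsqz M hM a b hspec (P n) (hPidem n) z u hu]
      have : (a : ℂ) + b - 2 * z = 0 := by linear_combination -h0
      rw [this, zero_smul, zero_add, norm_smul]
    have h1 : ‖z ^ 2 - (a : ℂ) * b‖ ≤ 0 :=
      ge_of_tendsto hz (eventually_atTop.mpr ⟨1, hbd⟩)
    have h2 : z ^ 2 - (a : ℂ) * b = 0 := by simpa using h1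
    have h3 : ((b : ℂ) - a) ^ 2 = 0 := by
      linear_combination 4 * h2 - (2 * z + a + b) * h0
    have h4 : (b - a) ^ 2 = 0 := by exact_mod_cast h3
    have : b - a = 0 := by simpa using h4
    linarith
  set w : ℂ := (z ^ 2 - (a : ℂ) * b) / (2 * z - a - b) with hw
  have hwz : w * (2 * z - a - b) = z ^ 2 - (a : ℂ) * b := div_mul_cancel₀ _ hzc
  choose l hl using hex w
  have hbd : ∀ n, 1 ≤ n →
      ‖(l n : ℂ) - w‖ ≤ sigma2 (M : H →ₗ[ℂ] H) (P n) z / ‖2 * z - a - b‖ := by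
    intro n hn
    obtain ⟨_, _, ⟨v, hv, hv0, _⟩, h⟩ := hl n hn
    rw [le_div_iff₀ (by positivity)]
    apply aux_le_sigma M (P n) z v hv hv0
    intro u hu
    rw [aux_Qsqz M hM a b hspec (P n) (hPidem n) z u hu]
    have : ((a : ℂ) + b - 2 * z) • (P n) (M u) + (z ^ 2 - (a : ℂ) * b) • u
        = (-(2 * z - a - b)) • ((P n) (M u) - w • u) := by
      rw [← hwz]
      module
    rw [this, norm_smul, norm_neg]
    have := mul_le_mul_of_nonneg_left (h u hu) (norm_nonneg (2 * z - a - b))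
    linarith
  have hlim : Tendsto (fun n => (l n : ℂ)) atTop (𝓝 w) := by
    rw [tendsto_iff_norm_sub_tendsto_zero]
    have h0 : Tendsto (fun n => sigma2 (M : H →ₗ[ℂ] H) (P n) z / ‖2 * z - a - b‖) atTop (𝓝 0) := by
      simpa using hz.div_const ‖2 * z - a - b‖
    exact squeeze_zero' (Eventually.of_forall fun n => norm_nonneg _)
      (eventually_atTop.mpr ⟨1, hbd⟩) h0
  have hre : Tendsto l atTop (𝓝 w.re) := by
    simpa [Function.comp_def] using (Complex.continuous_re.tendsto w).comp hlim
  have him : w.im = 0 := by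
    have h1 : Tendsto (fun _ : ℕ => (0 : ℝ)) atTop (𝓝 w.im) := by
      simpa [Function.comp_def] using (Complex.continuous_im.tendsto w).comp hlim
    exact tendsto_nhds_unique h1 tendsto_const_nhds
  have hwre : (w.re : ℂ) = w := Complex.ext (by simp) (by simp [him])
  refine ⟨l, w.re, hre, ?_, ?_, ?_, fun n hn => ⟨(hl n hn).1, (hl n hn).2.1, (hl n hn).2.2.1⟩⟩
  · exact ge_of_tendsto hre (eventually_atTop.mpr ⟨1, fun n hn => (hl n hn).1⟩)
  · exact le_of_tendsto hre (eventually_atTop.mpr ⟨1, fun n hn => (hl n hn).2.1⟩)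
  · rw [hwre, hwz]

lemma aux_root (a b m : ℝ) (ha : a ≤ m) (hb : m ≤ b) (z : ℂ)
    (h : z ^ 2 - (a : ℂ) * b = m * (2 * z - a - b)) :
    ∃ e : ℂ, e ^ 2 = -1 ∧ z = m + e * (√((m - a) * (b - m)) : ℝ) := by
  have hs : ((√((m - a) * (b - m)) : ℝ) : ℂ) ^ 2 = (m - a) * (b - m) := by
    have := Real.sq_sqrt (mul_nonneg (sub_nonneg.mpr ha) (sub_nonneg.mpr hb))
    exact_mod_cast this
  have h1 : (z - m) ^ 2 = (Complex.I * (√((m - a) * (b - m)) : ℝ)) ^ 2 := by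
    rw [mul_pow, hs, Complex.I_sq]
    linear_combination h
  rcases sq_eq_sq_iff_eq_or_eq_neg.mp h1 with h2 | h2
  · exact ⟨Complex.I, Complex.I_sq, by linear_combination h2⟩
  · exact ⟨-Complex.I, by simp, by linear_combination h2⟩

lemma aux_circle (a b m : ℝ) (hab : a < b) (ha : a ≤ m) (hb : m ≤ b) (z : ℂ)
    (h : z ^ 2 - (a : ℂ) * b = m * (2 * z - a - b)) :
    ‖z - (((a : ℂ) + b) / 2)‖ = (b - a) / 2 := by
  obtain ⟨e, he, hz⟩ := aux_root a b m ha hb z h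
  have hs := Real.sq_sqrt (mul_nonneg (sub_nonneg.mpr ha) (sub_nonneg.mpr hb))
  have hI : e = Complex.I ∨ e = -Complex.I :=
    sq_eq_sq_iff_eq_or_eq_neg.mp (by rw [he, Complex.I_sq])
  rw [← sq_eq_sq₀ (norm_nonneg _) (by linarith), ← Complex.normSq_eq_norm_sq, Complex.normSq_apply]
  rcases hI with rfl | rfl <;> simp [hz] <;> nlinarith

/-- If the spectrum of the bounded self-adjoint operator `M` consists of exactly two points
`a < b`, then `Σ = Λ` and both sets are contained in the circle centred at `(a+b)/2` of
radius `(b-a)/2`. -/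
theorem Sigma_eq_Lambda_subset_circle_of_two_point_spectrum
    (M : H →L[ℂ] H) (hM : IsSelfAdjoint M)
    (a b : ℝ) (hab : a < b)
    (hspec : spectrum ℂ M = {(a : ℂ), (b : ℂ)})
    (P : ℕ → H →L[ℂ] H)
    (hPsa : ∀ n, IsSelfAdjoint (P n))
    (hPidem : ∀ n, IsIdempotentElem (P n))
    (hPfin : ∀ n, FiniteDimensional ℂ (LinearMap.range (P n : H →ₗ[ℂ] H)))
    (hPdim : ∀ n, Module.finrank ℂ (LinearMap.range (P n : H →ₗ[ℂ] H)) = n)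
    (hPlim : ∀ x : H, Tendsto (fun n => P n x) atTop (𝓝 x)) :
    {z : ℂ | Tendsto (fun n => sigma2 (M : H →ₗ[ℂ] H) (P n) z) atTop (𝓝 0)} =
      {z : ℂ | ∃ zs : ℕ → ℂ, (∀ n, 1 ≤ n → zs n ∈ spec2 (M : H →ₗ[ℂ] H) (P n)) ∧
        Tendsto zs atTop (𝓝 z)} ∧
    {z : ℂ | Tendsto (fun n => sigma2 (M : H →ₗ[ℂ] H) (P n) z) atTop (𝓝 0)} ⊆
      {z : ℂ | ‖z - (((a : ℂ) + b) / 2)‖ = (b - a) / 2} := by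
  refine ⟨Set.Subset.antisymm ?_ ?_, ?_⟩
  · intro z hz
    obtain ⟨l, m, hlm, ham, hmb, hzm, hl⟩ :=
      aux_key M hM a b hab hspec P hPsa hPidem hPfin hPdim z hz
    obtain ⟨e, he, hze⟩ := aux_root a b m ham hmb z hzm
    refine ⟨fun n => l n + e * (√((l n - a) * (b - l n)) : ℝ), ?_, ?_⟩
    · intro n hn
      obtain ⟨h1, h2, v, hv, hv0, hev⟩ := hl n hn
      rw [aux_spec2_iff M (P n) _ (hPfin n)]
      refine ⟨v, hv, hv0, ?_⟩
      rw [aux_Qsqz M hM a b hspec (P n) (hPidem n) _ v hv, hev, smul_smul, ← add_smul]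
      have hs : ((√((l n - a) * (b - l n)) : ℝ) : ℂ) ^ 2 = (l n - a) * (b - l n) := by
        have := Real.sq_sqrt (mul_nonneg (sub_nonneg.mpr h1) (sub_nonneg.mpr h2))
        exact_mod_cast this
      convert zero_smul ℂ v using 2
      linear_combination ((√((l n - a) * (b - l n)) : ℝ) : ℂ) ^ 2 * he - hs
    · rw [hze]
      have hc : Continuous fun t : ℝ => (t : ℂ) + e * (√((t - a) * (b - t)) : ℝ) := by fun_prop
      exact (hc.tendsto m).comp hlm
  · rintro z ⟨zs, hzs, hlim⟩
    have hbd : ∀ n, 1 ≤ n → sigma2 (M : H →ₗ[ℂ] H) (P n) z ≤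
        ‖2 * (zs n - z)‖ * (‖M‖) + ‖z ^ 2 - zs n ^ 2‖ := by
      intro n hn
      obtain ⟨v, hv, hv0, hev⟩ := (aux_spec2_iff M (P n) _ (hPfin n)).mp (hzs n hn)
      refine (aux_sigma_le M (P n) z v hv hv0).trans ?_
      rw [div_le_iff₀ (by positivity)]
      rw [aux_Qsqz M hM a b hspec (P n) (hPidem n) _ v hv] at hev ⊢
      have h1 : ((a : ℂ) + b - 2 * z) • (P n) (M v) + (z ^ 2 - (a : ℂ) * b) • v
          = (2 * (zs n - z)) • (P n) (M v) + (z ^ 2 - zs n ^ 2) • v := by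
        linear_combination (norm := module) hev
      have hP : ‖P n (M v)‖ ≤ ‖M‖ * ‖v‖ := by
        have hs := ContinuousLinearMap.isSelfAdjoint_iff_isSymmetric.mp (hPsa n)
          (M v) (P n (M v))
        simp only [ContinuousLinearMap.coe_coe] at hs
        rw [aux_fix (P n) (hPidem n) (P n (M v)) ⟨M v, rfl⟩, inner_self_eq_norm_sq_to_K] at hs
        have h2 := norm_inner_le_norm (𝕜 := ℂ) (M v) (P n (M v))
        rw [← hs] at h2
        have h3 : ‖P n (M v)‖ ^ 2 ≤ ‖M v‖ * ‖P n (M v)‖ := by simpa using h2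
        have h4 : ‖P n (M v)‖ ≤ ‖M v‖ := by
          by_contra hcon
          push Not at hcon
          nlinarith [norm_nonneg (M v)]
        exact h4.trans (M.le_opNorm v)
      rw [h1]
      calc _ ≤ ‖2 * (zs n - z)‖ * ‖P n (M v)‖ + ‖z ^ 2 - zs n ^ 2‖ * ‖v‖ := by
            rw [← norm_smul, ← norm_smul]
            exact norm_add_le _ _
        _ ≤ ‖2 * (zs n - z)‖ * (‖M‖ * ‖v‖) + ‖z ^ 2 - zs n ^ 2‖ * ‖v‖ := by gcongr
        _ = _ := by ring
    have h0 : Tendsto (fun n => ‖2 * (zs n - z)‖ * (‖M‖) + ‖z ^ 2 - zs n ^ 2‖) atTop (𝓝 0) := by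
      have hc : Continuous fun t : ℂ => ‖2 * (t - z)‖ * (‖M‖) + ‖z ^ 2 - t ^ 2‖ := by fun_prop
      simpa [Function.comp_def] using (hc.tendsto z).comp hlim
    exact squeeze_zero' (Eventually.of_forall fun n => aux_sigma_nonneg M (P n) z)
      (eventually_atTop.mpr ⟨1, hbd⟩) h0
  · intro z hz
    obtain ⟨l, m, -, ham, hmb, hzm, -⟩ :=
      aux_key M hM a b hab hspec P hPsa hPidem hPfin hPdim z hz
    exact aux_circle a b m hab ham hmb z hzm

end
end

section
/- Let M be a bounded self-adjoint operator with M² = I (equivalently Spec M ⊆ {−1, 1}) and L_n a finite-dimensional subspace with orthogonal projection P_n. Then for z ≠ 0, z ∈ Spec₂(M|L_n) if and only if (z + z^{-1})/2 is an eigenvalue of the compression M_n = P_n M|L_n; consequently Spec₂(M|L_n) is contained in the unit circle {z : |z| = 1}. -/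
open Filter Topology

noncomputable section

variable {H : Type*} [NormedAddCommGroup H] [InnerProductSpace ℂ H] [CompleteSpace H]

theorem mem_spec2_iff_aux (M : H →L[ℂ] H) (hM2 : M * M = 1) (P : H →L[ℂ] H)
    (hPidem : IsIdempotentElem P)
    (hPfin : FiniteDimensional ℂ (LinearMap.range (P : H →ₗ[ℂ] H))) (z : ℂ) :
    z ∈ spec2 (M : H →ₗ[ℂ] H) P ↔
      ∃ v, v ∈ LinearMap.range (P : H →ₗ[ℂ] H) ∧ v ≠ 0 ∧
        (1 + z ^ 2) • v = (2 * z) • P (M v) := by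
  have hMM : ∀ v, M (M v) = v := fun v => by
    have := congrArg (fun T : H →L[ℂ] H => T v) hM2
    simpa using this
  have hPP : ∀ v ∈ LinearMap.range (P : H →ₗ[ℂ] H), P v = v := by
    rintro _ ⟨w, rfl⟩
    have := congrArg (fun T : H →L[ℂ] H => T w) hPidem.eq
    simpa using this
  have key : ∀ v : LinearMap.range (P : H →ₗ[ℂ] H),
      ((compress P (sqz (M : H →ₗ[ℂ] H) z) v : LinearMap.range (P : H →ₗ[ℂ] H)) : H)
        = (1 + z ^ 2) • (v : H) - (2 * z) • P (M v) := by
    intro v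
    have h1 : ((compress P (sqz (M : H →ₗ[ℂ] H) z) v : LinearMap.range (P : H →ₗ[ℂ] H)) : H)
        = P (M (M v - z • (v : H)) - z • (M v - z • (v : H))) := rfl
    rw [h1]
    simp only [map_sub, map_smul, hMM, hPP v v.2]
    module
  have hbij : Function.Bijective (compress P (sqz (M : H →ₗ[ℂ] H) z)) ↔
      Function.Injective (compress P (sqz (M : H →ₗ[ℂ] H) z)) :=
    ⟨fun h => h.1, fun h => ⟨h, LinearMap.injective_iff_surjective.mp h⟩⟩
  unfold spec2
  rw [Set.mem_setOf_eq, hbij, injective_iff_map_eq_zero]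
  push Not
  constructor
  · rintro ⟨v, hv, hv0⟩
    refine ⟨v, v.2, by simpa using hv0, ?_⟩
    rw [← sub_eq_zero, ← key, hv]; rfl
  · rintro ⟨v, hv, hv0, h⟩
    refine ⟨⟨v, hv⟩, ?_, by simpa using hv0⟩
    apply Subtype.ext
    rw [key]
    simpa using sub_eq_zero.mpr h

/-- For a bounded self-adjoint involution (`M² = 1`) and `z ≠ 0`, `z ∈ Spec₂(M|L)` iff
`(z + z⁻¹)/2` is an eigenvalue of the compression `M_L = P M |_L`; consequently
`Spec₂(M|L)` is contained in the unit circle. -/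
theorem spec2_of_involution
    (M : H →L[ℂ] H) (hM : IsSelfAdjoint M) (hM2 : M * M = 1)
    (P : H →L[ℂ] H)
    (hPsa : IsSelfAdjoint P)
    (hPidem : IsIdempotentElem P)
    (hPfin : FiniteDimensional ℂ (LinearMap.range (P : H →ₗ[ℂ] H))) :
    (∀ z : ℂ, z ≠ 0 →
      (z ∈ spec2 (M : H →ₗ[ℂ] H) P ↔
        ∃ v, v ∈ LinearMap.range (P : H →ₗ[ℂ] H) ∧ v ≠ 0 ∧ P (M v) = ((z + z⁻¹) / 2) • v)) ∧
    ∀ z ∈ spec2 (M : H →ₗ[ℂ] H) P, ‖z‖ = 1 := by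
  refine ⟨fun z hz => ?_, fun z hz => ?_⟩
  · rw [mem_spec2_iff_aux M hM2 P hPidem hPfin z]
    refine exists_congr fun v => and_congr_right fun _ => and_congr_right fun _ => ?_
    have e : (1 + z ^ 2) • v = (2 * z) • (((z + z⁻¹) / 2) • v) := by
      rw [smul_smul]; congr 1; field_simp; ring
    rw [e, (smul_right_injective H (mul_ne_zero two_ne_zero hz)).eq_iff, eq_comm]
  · obtain ⟨v, hv, hv0, h⟩ := (mem_spec2_iff_aux M hM2 P hPidem hPfin z).mp hz
    have hMM : M (M v) = v := by
      have := congrArg (fun T : H →L[ℂ] H => T v) hM2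
      simpa using this
    have hPv : P v = v := by
      obtain ⟨w, rfl⟩ := hv
      have := congrArg (fun T : H →L[ℂ] H => T w) hPidem.eq
      simpa using this
    have hMs : ∀ x y, inner ℂ (M x) y = inner ℂ x (M y) := fun x y => hM.isSymmetric x y
    have hPs : ∀ x y, inner ℂ (P x) y = inner ℂ x (P y) := fun x y => hPsa.isSymmetric x y
    have hnorm : ‖M v‖ = ‖v‖ := by
      have h1 := hMs v (M v)
      rw [hMM, inner_self_eq_norm_sq_to_K, inner_self_eq_norm_sq_to_K] at h1
      have h2 : ‖M v‖ ^ 2 = ‖v‖ ^ 2 := by exact_mod_cast h1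
      exact (sq_eq_sq₀ (norm_nonneg _) (norm_nonneg _)).mp h2
    have hs : 0 < ‖v‖ ^ 2 := by have := norm_pos_iff.mpr hv0; positivity
    obtain ⟨r, hr⟩ : ∃ r : ℝ, inner ℂ v (M v) = (r : ℂ) := by
      have : (starRingEnd ℂ) (inner ℂ v (M v)) = inner ℂ v (M v) := by
        rw [inner_conj_symm, hMs]
      obtain ⟨r, hr⟩ := Complex.conj_eq_iff_real.mp this
      exact ⟨r, hr⟩
    have hle : |r| ≤ ‖v‖ ^ 2 := by
      have h1 := norm_inner_le_norm (𝕜 := ℂ) v (M v)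
      rw [hr, hnorm, Complex.norm_real, Real.norm_eq_abs] at h1
      rw [sq]; exact h1
    have heq : (1 + z ^ 2) * ((‖v‖ ^ 2 : ℝ) : ℂ) = 2 * z * (r : ℂ) := by
      have h1 := congrArg (fun x => inner ℂ v x) h
      simp only [inner_smul_right] at h1
      rw [← hPs, hPv, hr, inner_self_eq_norm_sq_to_K] at h1
      push_cast
      exact h1
    set s := ‖v‖ ^ 2
    obtain ⟨t, rfl⟩ : ∃ t, r = t * s := ⟨r / s, by field_simp⟩
    have ht : t ^ 2 ≤ 1 := by
      rw [abs_mul, abs_of_pos hs] at hle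
      have : |t| ≤ 1 := by nlinarith
      exact (sq_le_one_iff_abs_le_one t).mpr this
    have hs' : (s : ℂ) ≠ 0 := by exact_mod_cast hs.ne'
    have hq : 1 + z ^ 2 = 2 * z * (t : ℂ) := by
      apply mul_right_cancel₀ hs'
      rw [heq]; push_cast; ring
    have hre := congrArg Complex.re hq
    have him := congrArg Complex.im hq
    simp [sq] at hre him
    have hn : ‖z‖ ^ 2 = 1 := by
      rw [← Complex.normSq_eq_norm_sq, Complex.normSq_apply]
      by_cases hy : z.im = 0
      · rw [hy] at hre ⊢
        have hx : z.re - t = 0 := by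
          have : (z.re - t) ^ 2 ≤ 0 := by nlinarith
          exact pow_eq_zero_iff two_ne_zero |>.mp (le_antisymm this (sq_nonneg _))
        have hx' : z.re = t := by linarith
        rw [hx'] at hre ⊢
        linarith
      · have hx : z.re = t := by
          apply mul_left_cancel₀ hy
          linarith
        rw [hx] at hre ⊢
        linarith
    exact (sq_eq_sq₀ (norm_nonneg _) zero_le_one).mp (by rw [hn]; norm_num)

end
end

section
/- Let M be a bounded self-adjoint operator, K = K* a compact self-adjoint operator, and (P_n) orthogonal projections with n-dimensional ranges L_n such that P_n x → x for all x. Then Σ(M) ∪ Spec_disc(M+K) = Σ(M+K) ∪ Spec_disc(M). In particular, Σ(M) and Σ(M+K) coincide outside the real axis. -/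
open Filter Topology

noncomputable section

variable {H : Type*} [NormedAddCommGroup H] [InnerProductSpace ℂ H] [CompleteSpace H]

/-- The limiting set `Σ(T)` of the functions `σ_n` associated with `T`. -/
def SigmaSet (T : H →L[ℂ] H) (P : ℕ → H →L[ℂ] H) : Set ℂ :=
  {z | Tendsto (fun n => sigma2 (T : H →ₗ[ℂ] H) (P n) z) atTop (𝓝 0)}

/-- The discrete spectrum of a bounded operator `T`:  the isolated points of the spectrum
that are eigenvalues of finite multiplicity. -/
def specDisc (T : H →L[ℂ] H) : Set ℂ :=
  {l | l ∈ spectrum ℂ T ∧ (∃ ε > 0, ∀ w ∈ spectrum ℂ T, w ≠ l → ε ≤ ‖w - l‖) ∧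
    LinearMap.ker ((T : H →ₗ[ℂ] H) - l • LinearMap.id) ≠ ⊥ ∧
    FiniteDimensional ℂ ↥(LinearMap.ker ((T : H →ₗ[ℂ] H) - l • LinearMap.id))}

/-- approximate eigenvalue -/
def ApproxEig (T : H →L[ℂ] H) (z : ℂ) : Prop :=
  ∀ ε > (0:ℝ), ∃ x : H, ‖x‖ = 1 ∧ ‖(T - z • (1 : H →L[ℂ] H)) x‖ < ε

lemma sqz_apply'_s11 (T : H →L[ℂ] H) (z : ℂ) (v : H) :
    sqz (T : H →ₗ[ℂ] H) z v = (T - z • (1 : H →L[ℂ] H)) ((T - z • (1 : H →L[ℂ] H)) v) := by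
  simp [sqz]

lemma bound_of_not_approxEig {T : H →L[ℂ] H} {z : ℂ} (h : ¬ ApproxEig T z) :
    ∃ c > 0, ∀ x, c * ‖x‖ ≤ ‖(T - z • (1 : H →L[ℂ] H)) x‖ := by
  unfold ApproxEig at h
  push Not at h
  obtain ⟨c, hc, h⟩ := h
  refine ⟨c, hc, fun x => ?_⟩
  rcases eq_or_ne x 0 with rfl | hx
  · simp
  have hx' : 0 < ‖x‖ := norm_pos_iff.2 hx
  have h1 := h ((‖x‖⁻¹ : ℂ) • x) (by
    rw [norm_smul, norm_inv, Complex.norm_real, norm_norm, inv_mul_cancel₀ hx'.ne'])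
  rw [map_smul, norm_smul, norm_inv, Complex.norm_real, norm_norm] at h1
  rw [inv_mul_eq_div, le_div_iff₀ hx'] at h1
  exact h1

lemma approxEig_of_spectrum {T : H →L[ℂ] H} (hT : IsSelfAdjoint T) {z : ℂ}
    (hz : z ∈ spectrum ℂ T) : ApproxEig T z := by
  by_contra h
  obtain ⟨c, hc, hb⟩ := bound_of_not_approxEig h
  have hre := hT.mem_spectrum_eq_re hz
  have hsa : IsSelfAdjoint (T - z • (1 : H →L[ℂ] H)) := by
    refine hT.sub ?_
    rw [hre]
    refine IsSelfAdjoint.smul ?_ (IsSelfAdjoint.one _)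
    simp [IsSelfAdjoint]
  rw [spectrum.mem_iff, ← neg_sub, IsUnit.neg_iff, Algebra.algebraMap_eq_smul_one] at hz
  apply hz
  set A := T - z • (1 : H →L[ℂ] H) with hA
  have hanti : AntilipschitzWith (c.toNNReal⁻¹) A := by
    refine A.antilipschitz_of_bound (fun x => ?_)
    have := hb x
    rw [NNReal.coe_inv, Real.coe_toNNReal c hc.le]
    rw [inv_mul_eq_div, le_div_iff₀ hc]
    linarith
  rw [ContinuousLinearMap.isUnit_iff_bijective,
    ContinuousLinearMap.bijective_iff_dense_range_and_antilipschitz]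
  refine ⟨?_, _, hanti⟩
  rw [Submodule.topologicalClosure_eq_top_iff, A.orthogonal_range, hsa.adjoint_eq]
  exact LinearMap.ker_eq_bot.2 hanti.injective

lemma weak_limit {ι : Type*} (U : Ultrafilter ι) (v : ι → H) (R : ℝ) (hv : ∀ i, ‖v i‖ ≤ R) :
    ∃ v0 : H, ∀ x : H, Tendsto (fun i => inner ℂ x (v i)) U (𝓝 (inner ℂ x v0)) := by
  let f : ι → WeakDual ℂ H := fun i =>
    WeakDual.toStrongDual.symm (InnerProductSpace.toDual ℂ H (v i))
  have hc := WeakDual.isCompact_closedBall (𝕜 := ℂ) (E := H) 0 R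
  obtain ⟨g, -, hg⟩ := isCompact_iff_ultrafilter_le_nhds'.1 hc (U.map f) (by
    refine Filter.mem_map.2 (Filter.univ_mem' fun i => ?_)
    simp [f, hv i])
  have hg' : Tendsto f U (𝓝 g) := hg
  refine ⟨(InnerProductSpace.toDual ℂ H).symm (WeakDual.toStrongDual g), fun x => ?_⟩
  have h1 : Tendsto (fun i => f i x) U (𝓝 (g x)) :=
    ((WeakDual.eval_continuous x).tendsto g).comp hg'
  have h2 := (Complex.continuous_conj.tendsto _).comp h1
  have e : g x = inner ℂ ((InnerProductSpace.toDual ℂ H).symm (WeakDual.toStrongDual g)) x := by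
    rw [InnerProductSpace.toDual_symm_apply]; rfl
  rw [e] at h2
  rw [← inner_conj_symm]
  refine h2.congr fun i => ?_
  rw [← inner_conj_symm x (v i)]
  rfl

lemma weak_map {ι : Type*} {U : Filter ι} {v : ι → H} {v0 : H} (A : H →L[ℂ] H)
    (h : ∀ x : H, Tendsto (fun i => inner ℂ x (v i)) U (𝓝 (inner ℂ x v0))) (x : H) :
    Tendsto (fun i => inner ℂ x (A (v i))) U (𝓝 (inner ℂ x (A v0))) := by
  simp only [← ContinuousLinearMap.adjoint_inner_left]
  exact h _

lemma compact_tendsto {ι : Type*} (U : Ultrafilter ι) (K : H →L[ℂ] H) (hK : IsCompactOperator ⇑K)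
    (v : ι → H) (R : ℝ) (hv : ∀ i, ‖v i‖ ≤ R)
    (h : ∀ x : H, Tendsto (fun i => inner ℂ x (v i)) U (𝓝 0)) :
    Tendsto (fun i => K (v i)) U (𝓝 0) := by
  have hc := IsCompactOperator.isCompact_closure_image_closedBall (f := (K : H →ₗ[ℂ] H)) hK R
  obtain ⟨y, -, hy⟩ := isCompact_iff_ultrafilter_le_nhds'.1 hc (U.map fun i => K (v i)) (by
    refine Filter.mem_map.2 (Filter.univ_mem' fun i => subset_closure ⟨v i, by simpa using hv i, rfl⟩))
  have hy' : Tendsto (fun i => K (v i)) U (𝓝 y) := hy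
  have h1 : Tendsto (fun i => inner ℂ y (K (v i))) U (𝓝 (inner ℂ y y)) :=
    tendsto_const_nhds.inner hy'
  have h2 := weak_map (v0 := 0) K (by simpa using h) y
  have h3 := tendsto_nhds_unique h1 h2
  have : y = 0 := by simpa using h3
  rwa [this] at hy'

lemma proj_norm_le {P : H →L[ℂ] H} (hs : IsSelfAdjoint P) (hi : IsIdempotentElem P) (x : H) :
    ‖P x‖ ≤ ‖x‖ := by
  have h1 : inner ℂ (P x) (P x) = inner ℂ x (P x) := by
    have := hs.isSymmetric x (P x)
    have e : P (P x) = P x := by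
      have := congrArg (fun A : H →L[ℂ] H => A x) hi
      simpa using this
    simp only [ContinuousLinearMap.coe_coe] at this
    rw [this, e]
  have h2 : ‖P x‖ * ‖P x‖ ≤ ‖x‖ * ‖P x‖ := by
    have h3 := norm_inner_le_norm (𝕜 := ℂ) x (P x)
    rw [← h1, inner_self_eq_norm_sq_to_K] at h3
    simp only [norm_pow, RCLike.norm_ofReal, abs_norm] at h3
    nlinarith
  by_contra! hlt
  have := norm_nonneg x
  nlinarith

lemma sigma2_nonneg (T : H →ₗ[ℂ] H) (P : H →L[ℂ] H) (z : ℂ) : 0 ≤ sigma2 T P z := by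
  apply Real.sInf_nonneg
  rintro r ⟨v, -, -, rfl⟩
  positivity

lemma sigma2_le (T : H →ₗ[ℂ] H) (P : H →L[ℂ] H) (z : ℂ) (v : H)
    (hv : v ∈ LinearMap.range (P : H →ₗ[ℂ] H)) (h0 : v ≠ 0) :
    sigma2 T P z ≤ ‖P (sqz T z v)‖ / ‖v‖ := by
  refine csInf_le ⟨0, ?_⟩ ⟨v, hv, h0, rfl⟩
  rintro r ⟨v, -, -, rfl⟩
  positivity

lemma approxEig_mem (T : H →L[ℂ] H) (P : ℕ → H →L[ℂ] H)
    (hPsa : ∀ n, IsSelfAdjoint (P n)) (hPidem : ∀ n, IsIdempotentElem (P n))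
    (hPlim : ∀ x : H, Tendsto (fun n => P n x) atTop (𝓝 x)) {z : ℂ} (h : ApproxEig T z) :
    z ∈ SigmaSet T P := by
  set A := T - z • (1 : H →L[ℂ] H) with hA
  show Tendsto _ _ _
  have key : ∀ x : H, ‖x‖ = 1 → ∀ a > ‖A (A x)‖,
      ∀ᶠ n in atTop, sigma2 (T : H →ₗ[ℂ] H) (P n) z < a := by
    intro x hx a ha
    have t1 : Tendsto (fun n => P n (A (A (P n x)))) atTop (𝓝 (A (A x))) := by
      have s1 : Tendsto (fun n => A (A (P n x)) - A (A x)) atTop (𝓝 0) := by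
        have := ((A.continuous.comp A.continuous).tendsto x).comp (hPlim x)
        simpa using this.sub_const (A (A x))
      have s2 : Tendsto (fun n => P n (A (A (P n x)) - A (A x))) atTop (𝓝 0) :=
        squeeze_zero_norm (fun n => proj_norm_le (hPsa n) (hPidem n) _) (by simpa using s1.norm)
      simpa using s2.add (hPlim (A (A x)))
    have t2 : Tendsto (fun n => ‖P n (A (A (P n x)))‖ / ‖P n x‖) atTop (𝓝 (‖A (A x)‖)) := by
      have := t1.norm.div (hPlim x).norm (by rw [hx]; exact one_ne_zero)
      rw [hx, div_one] at this
      exact this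
    have t3 : ∀ᶠ n in atTop, P n x ≠ 0 :=
      (hPlim x).eventually_ne (by rintro rfl; simp at hx)
    filter_upwards [t2.eventually_lt_const ha, t3] with n h1 h2
    refine (sigma2_le _ _ _ _ ⟨x, rfl⟩ h2).trans_lt ?_
    rw [ContinuousLinearMap.coe_coe, sqz_apply'_s11]
    exact h1
  refine tendsto_order.2 ⟨fun a ha => Eventually.of_forall fun n => ha.trans_le (sigma2_nonneg _ _ _),
    fun a ha => ?_⟩
  obtain ⟨x, hx, hxe⟩ := h (a / (‖A‖ + 1)) (by positivity)
  refine key x hx a ?_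
  have := A.le_opNorm (A x)
  rw [lt_div_iff₀ (by positivity)] at hxe
  have := norm_nonneg (A x)
  nlinarith

lemma eig_approx {T : H →L[ℂ] H} {z : ℂ} {v : H} (hv : v ≠ 0)
    (h : (T - z • (1 : H →L[ℂ] H)) v = 0) : ApproxEig T z := by
  intro ε hε
  have hx' : 0 < ‖v‖ := norm_pos_iff.2 hv
  refine ⟨(‖v‖⁻¹ : ℂ) • v, ?_, ?_⟩
  · rw [norm_smul, norm_inv, Complex.norm_real, norm_norm, inv_mul_cancel₀ hx'.ne']
  · rw [map_smul, h]; simpa using hε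

lemma eig_mem_spectrum {T : H →L[ℂ] H} {z : ℂ} {v : H} (hv : v ≠ 0)
    (h : (T - z • (1 : H →L[ℂ] H)) v = 0) : z ∈ spectrum ℂ T := by
  rw [spectrum.mem_iff, ← neg_sub, IsUnit.neg_iff, Algebra.algebraMap_eq_smul_one,
    ContinuousLinearMap.isUnit_iff_bijective]
  intro hb
  exact hv (hb.1 (by rw [h, map_zero]))

lemma mem_ker_iff' (T : H →L[ℂ] H) (z : ℂ) (v : H) :
    v ∈ LinearMap.ker ((T : H →ₗ[ℂ] H) - z • LinearMap.id) ↔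
      (T - z • (1 : H →L[ℂ] H)) v = 0 := by
  simp

lemma inf_ker {T K : H →L[ℂ] H} (hK : IsCompactOperator ⇑K) {z : ℂ}
    (h : ¬ FiniteDimensional ℂ ↥(LinearMap.ker ((T : H →ₗ[ℂ] H) - z • LinearMap.id))) :
    ApproxEig (T + K) z := by
  by_contra hn
  obtain ⟨c, hc, hb⟩ := bound_of_not_approxEig hn
  obtain ⟨R, f, -, hf, hsep⟩ := exists_seq_norm_le_one_le_norm_sub (𝕜 := ℂ) h
  have hcomp := IsCompactOperator.isCompact_closure_image_closedBall (f := (K : H →ₗ[ℂ] H)) hK R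
  obtain ⟨y, -, φ, hφ, hy⟩ := hcomp.tendsto_subseq (x := fun n => K (f n : H)) (fun n =>
    subset_closure ⟨f n, by simpa using hf n, rfl⟩)
  have hcs := hy.cauchySeq
  rw [Metric.cauchySeq_iff'] at hcs
  obtain ⟨N, hN⟩ := hcs c hc
  have h1 := hN (N + 1) (by omega)
  have h2 := hsep (hφ.injective.ne (show N + 1 ≠ N by omega))
  have h3 := hb ((f (φ (N+1)) - f (φ N) : ↥(LinearMap.ker ((T : H →ₗ[ℂ] H) - z • LinearMap.id))) : H)
  have h4 := (mem_ker_iff' T z _).1 (f (φ (N+1)) - f (φ N)).2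
  have h5 : (T + K - z • (1 : H →L[ℂ] H)) = (T - z • (1 : H →L[ℂ] H)) + K := by abel
  rw [h5, ContinuousLinearMap.add_apply, h4, zero_add, Submodule.coe_sub, map_sub] at h3
  rw [dist_eq_norm] at h1
  simp only [Function.comp] at h1
  have h6 : 1 ≤ ‖(f (φ (N+1)) : H) - f (φ N)‖ := h2
  nlinarith

lemma nonisolated {T K : H →L[ℂ] H} (hT : IsSelfAdjoint T) (hK : IsCompactOperator ⇑K) {z : ℂ}
    (hz : z ∈ spectrum ℂ T)
    (h : ∀ ε > (0:ℝ), ∃ w ∈ spectrum ℂ T, w ≠ z ∧ ‖w - z‖ < ε) :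
    ApproxEig (T + K) z := by
  have hpos : ∀ n : ℕ, (0:ℝ) < 1 / ((n:ℝ) + 1) := fun n => Nat.one_div_pos_of_nat
  choose w hw hwz hwn using fun n : ℕ => h _ (hpos n)
  have hd : ∀ n, 0 < ‖w n - z‖ := fun n => norm_pos_iff.2 (sub_ne_zero.2 (hwz n))
  choose x hx hxn using fun n : ℕ => approxEig_of_spectrum hT (hw n) _ (mul_pos (hpos n) (hd n))
  obtain ⟨U, hU⟩ := Ultrafilter.exists_le (atTop : Filter ℕ)
  have hlim : Tendsto (fun n : ℕ => 1 / ((n:ℝ) + 1)) U (𝓝 0) :=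
    tendsto_one_div_add_atTop_nhds_zero_nat.mono_left hU
  obtain ⟨x0, hx0⟩ := weak_limit U x 1 (fun i => (hx i).le)
  set A := T - z • (1 : H →L[ℂ] H) with hA
  have hAx : Tendsto (fun n => A (x n)) U (𝓝 0) := by
    refine squeeze_zero_norm (a := fun n : ℕ => 2 * (1 / ((n:ℝ)+1))) (fun n => ?_)
      (by simpa using hlim.const_mul 2)
    have e : A (x n) = (T - w n • (1 : H →L[ℂ] H)) (x n) + (w n - z) • x n := by
      simp [hA, sub_smul]
    have h1 := norm_add_le ((T - w n • (1 : H →L[ℂ] H)) (x n)) ((w n - z) • x n)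
    rw [← e, norm_smul, hx n, mul_one] at h1
    have h2 := hxn n
    have h3 := hwn n
    have h4 : 1 / ((n:ℝ)+1) ≤ 1 := by
      rw [div_le_one (by positivity)]; linarith [(Nat.cast_nonneg n : (0:ℝ) ≤ n)]
    have h5 : 1 / ((n:ℝ)+1) * ‖w n - z‖ ≤ 1 * ‖w n - z‖ :=
      mul_le_mul_of_nonneg_right h4 (hd n).le
    linarith
  have hAx0 : A x0 = 0 := by
    have h1 := weak_map A hx0 (A x0)
    have h2 : Tendsto (fun n => inner ℂ (A x0) (A (x n))) U (𝓝 (inner ℂ (A x0) 0)) :=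
      tendsto_const_nhds.inner hAx
    have h3 := tendsto_nhds_unique h1 h2
    simpa using h3
  have hre : z = z.re := hT.mem_spectrum_eq_re hz
  have hx00 : x0 = 0 := by
    have h1 := hx0 x0
    have h2 : Tendsto (fun n => inner ℂ x0 (x n)) U (𝓝 0) := by
      refine squeeze_zero_norm (a := fun n : ℕ => ‖x0‖ * (1 / ((n:ℝ)+1))) (fun n => ?_)
        (by simpa using hlim.const_mul ‖x0‖)
      have hTx : T x0 = z • x0 := by simpa [hA, sub_eq_zero] using hAx0
      have e : inner ℂ x0 ((T - w n • (1 : H →L[ℂ] H)) (x n)) = -(w n - z) * inner ℂ x0 (x n) := by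
        have hs : inner ℂ (T x0) (x n) = inner ℂ x0 (T (x n)) := hT.isSymmetric x0 (x n)
        have hc : (starRingEnd ℂ) z = z := by rw [hre, Complex.conj_ofReal]
        rw [hTx, inner_smul_left, hc] at hs
        simp only [ContinuousLinearMap.sub_apply, inner_sub_right, ← hs,
          ContinuousLinearMap.smul_apply, inner_smul_right, ContinuousLinearMap.one_apply]
        ring
      have h3 := norm_inner_le_norm (𝕜 := ℂ) x0 ((T - w n • (1 : H →L[ℂ] H)) (x n))
      rw [e, norm_mul, norm_neg] at h3
      have h4 : ‖x0‖ * ‖(T - w n • (1 : H →L[ℂ] H)) (x n)‖ ≤ ‖x0‖ * (1 / ((n:ℝ)+1) * ‖w n - z‖) :=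
        mul_le_mul_of_nonneg_left (hxn n).le (norm_nonneg _)
      refine le_of_mul_le_mul_left ?_ (hd n)
      linarith
    simpa using tendsto_nhds_unique h1 h2
  have hKx := compact_tendsto U K hK x 1 (fun i => (hx i).le) (by simpa [hx00] using hx0)
  intro ε hε
  have h1 := (hAx.add hKx).norm
  rw [add_zero, norm_zero] at h1
  obtain ⟨n, hn⟩ := (h1.eventually_lt_const hε).exists
  refine ⟨x n, hx n, ?_⟩
  have h5 : (T + K - z • (1 : H →L[ℂ] H)) = A + K := by rw [hA]; abel
  rw [h5]
  exact hn

lemma half {M K : H →L[ℂ] H} (hM : IsSelfAdjoint M) (hKcomp : IsCompactOperator ⇑K)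
    (P : ℕ → H →L[ℂ] H)
    (hPsa : ∀ n, IsSelfAdjoint (P n))
    (hPidem : ∀ n, IsIdempotentElem (P n))
    (hPdim : ∀ n, Module.finrank ℂ (LinearMap.range (P n : H →ₗ[ℂ] H)) = n)
    (hPlim : ∀ x : H, Tendsto (fun n => P n x) atTop (𝓝 x)) {z : ℂ}
    (hz : z ∈ SigmaSet M P) (hd : z ∉ specDisc M) : z ∈ SigmaSet (M + K) P := by
  set A := M - z • (1 : H →L[ℂ] H) with hA
  by_cases hker : ∃ v : H, v ≠ 0 ∧ A v = 0
  · obtain ⟨v, hv, hAv⟩ := hker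
    apply approxEig_mem _ P hPsa hPidem hPlim
    have hsp := eig_mem_spectrum hv hAv
    by_cases hfin : FiniteDimensional ℂ ↥(LinearMap.ker ((M : H →ₗ[ℂ] H) - z • LinearMap.id))
    · refine nonisolated hM hKcomp hsp ?_
      by_contra! hcon
      refine hd ⟨hsp, hcon, ?_, hfin⟩
      exact (Submodule.ne_bot_iff _).2 ⟨v, (mem_ker_iff' M z v).2 hAv, hv⟩
    · exact inf_ker hKcomp hfin
  push Not at hker
  have hz' : Tendsto (fun n => sigma2 (M : H →ₗ[ℂ] H) (P n) z) atTop (𝓝 0) := hz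
  have hex : ∀ n : ℕ, ∃ v : H, v ∈ LinearMap.range (P n : H →ₗ[ℂ] H) ∧ ‖v‖ ≤ 1 ∧
      (n ≠ 0 → ‖v‖ = 1) ∧
      ‖P n (A (A v))‖ ≤ sigma2 (M : H →ₗ[ℂ] H) (P n) z + 1 / ((n:ℝ) + 1) := by
    intro n
    have hp : (0:ℝ) < 1 / ((n:ℝ) + 1) := Nat.one_div_pos_of_nat
    rcases eq_or_ne n 0 with rfl | hn
    · refine ⟨0, Submodule.zero_mem _, by simp, by simp, ?_⟩
      have := sigma2_nonneg (M : H →ₗ[ℂ] H) (P 0) z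
      simp only [map_zero, norm_zero]
      linarith
    · have hne : LinearMap.range (P n : H →ₗ[ℂ] H) ≠ ⊥ := by
        intro hb
        have := hPdim n
        rw [hb, finrank_bot] at this
        exact hn this.symm
      obtain ⟨u, hu, hu0⟩ := (Submodule.ne_bot_iff _).1 hne
      obtain ⟨r, ⟨v, hv, hv0, rfl⟩, hr⟩ := exists_lt_of_csInf_lt
        (s := {r : ℝ | ∃ v, v ∈ LinearMap.range (P n : H →ₗ[ℂ] H) ∧ v ≠ 0 ∧
          r = ‖P n (sqz (M : H →ₗ[ℂ] H) z v)‖ / ‖v‖}) ⟨_, u, hu, hu0, rfl⟩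
        (lt_add_of_pos_right (sigma2 (M : H →ₗ[ℂ] H) (P n) z) hp)
      have hx' : 0 < ‖v‖ := norm_pos_iff.2 hv0
      have h1 : ‖(‖v‖⁻¹ : ℂ) • v‖ = 1 := by
        rw [norm_smul, norm_inv, Complex.norm_real, norm_norm, inv_mul_cancel₀ hx'.ne']
      refine ⟨(‖v‖⁻¹ : ℂ) • v, Submodule.smul_mem _ _ hv, h1.le, fun _ => h1, ?_⟩
      rw [map_smul, map_smul, map_smul, norm_smul, norm_inv, Complex.norm_real, norm_norm,
        inv_mul_eq_div]
      rw [sqz_apply'_s11] at hr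
      exact hr.le
  choose v hvr hv1 hvn hvs using hex
  have hPA : Tendsto (fun n => P n (A (A (v n)))) atTop (𝓝 0) := by
    refine squeeze_zero_norm hvs ?_
    simpa using hz'.add tendsto_one_div_add_atTop_nhds_zero_nat
  show Tendsto _ _ _
  rw [tendsto_iff_ultrafilter]
  intro U hU
  show Tendsto _ _ _
  obtain ⟨v0, hv0⟩ := weak_limit U v 1 hv1
  have hPA' := hPA.mono_left hU
  have hzero : A (A v0) = 0 := by
    set y := A (A v0)
    have h1 := weak_map A (weak_map A hv0) y
    have h2 : Tendsto (fun n => inner ℂ y (A (A (v n)))) U (𝓝 0) := by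
      have s1 : Tendsto (fun n => inner ℂ y (P n (A (A (v n))))) U (𝓝 (inner ℂ y 0)) :=
        tendsto_const_nhds.inner hPA'
      have s2 : Tendsto (fun n => inner ℂ (y - P n y) (A (A (v n)))) U (𝓝 0) := by
        have t : Tendsto (fun n => ‖y - P n y‖ * (‖A‖ * ‖A‖)) U (𝓝 0) := by
          have := ((hPlim y).mono_left hU).const_sub y
          simpa using this.norm.mul_const (‖A‖ * ‖A‖)
        refine squeeze_zero_norm (fun n => ?_) t
        refine (norm_inner_le_norm _ _).trans (mul_le_mul_of_nonneg_left ?_ (norm_nonneg _))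
        refine (A.le_opNorm _).trans (mul_le_mul_of_nonneg_left ?_ (norm_nonneg _))
        exact A.le_opNorm_of_le (hv1 n) |>.trans (by simp)
      have s3 := s1.add s2
      simp only [inner_zero_right, add_zero] at s3
      refine s3.congr fun n => ?_
      have hs : inner ℂ (P n y) (A (A (v n))) = inner ℂ y (P n (A (A (v n)))) :=
        (hPsa n).isSymmetric y _
      rw [← hs, inner_sub_left]
      ring
    have h3 : inner ℂ y y = 0 := tendsto_nhds_unique h1 h2
    exact inner_self_eq_zero.1 h3
  have hv00 : v0 = 0 := by
    by_contra hne
    exact hker _ (hker v0 hne) hzero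
  have hw : ∀ x : H, Tendsto (fun i => inner ℂ x (v i)) U (𝓝 0) := by simpa [hv00] using hv0
  have hwA : ∀ x : H, Tendsto (fun i => inner ℂ x (A (v i))) U (𝓝 0) := by
    simpa [hv00] using weak_map A hv0
  have k1 := compact_tendsto U K hKcomp v 1 hv1 hw
  have k2 := compact_tendsto U K hKcomp (fun n => A (v n)) ‖A‖
    (fun n => (A.le_opNorm_of_le (hv1 n)).trans (by simp)) hwA
  have k3 : Tendsto (fun n => A (K (v n))) U (𝓝 0) := by
    simpa [Function.comp_def] using (A.continuous.tendsto 0).comp k1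
  have k4 : Tendsto (fun n => K (K (v n))) U (𝓝 0) := by
    simpa [Function.comp_def] using (K.continuous.tendsto 0).comp k1
  have k5 : Tendsto (fun n => A (K (v n)) + K (A (v n)) + K (K (v n))) U (𝓝 0) := by
    simpa using (k3.add k2).add k4
  have k6 : Tendsto (fun n => ‖P n (A (A (v n)))‖ + ‖A (K (v n)) + K (A (v n)) + K (K (v n))‖) U
      (𝓝 0) := by
    simpa using hPA'.norm.add k5.norm
  refine tendsto_of_tendsto_of_tendsto_of_le_of_le' tendsto_const_nhds k6
    (Eventually.of_forall fun n => sigma2_nonneg _ _ _) ?_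
  have hne : ∀ᶠ n in (U : Filter ℕ), n ≠ 0 := hU (eventually_ne_atTop 0)
  filter_upwards [hne] with n hn
  have hn1 := hvn n hn
  refine (sigma2_le _ _ _ (v n) (hvr n) (by rintro h0; rw [h0] at hn1; simp at hn1)).trans ?_
  have h5 : (M + K - z • (1 : H →L[ℂ] H)) = A + K := by rw [hA]; abel
  rw [hn1, div_one, sqz_apply'_s11, h5]
  have e : (A + K) ((A + K) (v n)) = A (A (v n)) +
      (A (K (v n)) + K (A (v n)) + K (K (v n))) := by
    simp only [ContinuousLinearMap.add_apply, map_add]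
    abel
  rw [e, map_add]
  exact (norm_add_le _ _).trans (add_le_add le_rfl (proj_norm_le (hPsa n) (hPidem n) _))

lemma disc_mem {T : H →L[ℂ] H} (P : ℕ → H →L[ℂ] H)
    (hPsa : ∀ n, IsSelfAdjoint (P n)) (hPidem : ∀ n, IsIdempotentElem (P n))
    (hPlim : ∀ x : H, Tendsto (fun n => P n x) atTop (𝓝 x)) {z : ℂ} (h : z ∈ specDisc T) :
    z ∈ SigmaSet T P := by
  obtain ⟨-, -, h, -⟩ := h
  obtain ⟨v, hv, hv0⟩ := (Submodule.ne_bot_iff _).1 h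
  exact approxEig_mem T P hPsa hPidem hPlim (eig_approx hv0 ((mem_ker_iff' T z v).1 hv))

lemma disc_im {T : H →L[ℂ] H} (hT : IsSelfAdjoint T) {z : ℂ} (hz : z.im ≠ 0) :
    z ∉ specDisc T := by
  rintro ⟨h, -⟩
  apply hz
  rw [hT.mem_spectrum_eq_re h, Complex.ofReal_im]

/-- For a bounded self-adjoint `M` and a compact self-adjoint perturbation `K`,
`Σ(M) ∪ Spec_disc(M+K) = Σ(M+K) ∪ Spec_disc(M)`; in particular `Σ(M)` and `Σ(M+K)`
coincide outside the real axis. -/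
theorem SigmaSet_compact_perturbation
    (M : H →L[ℂ] H) (hM : IsSelfAdjoint M)
    (K : H →L[ℂ] H) (hK : IsSelfAdjoint K) (hKcomp : IsCompactOperator ⇑K)
    (P : ℕ → H →L[ℂ] H)
    (hPsa : ∀ n, IsSelfAdjoint (P n))
    (hPidem : ∀ n, IsIdempotentElem (P n))
    (hPfin : ∀ n, FiniteDimensional ℂ (LinearMap.range (P n : H →ₗ[ℂ] H)))
    (hPdim : ∀ n, Module.finrank ℂ (LinearMap.range (P n : H →ₗ[ℂ] H)) = n)
    (hPlim : ∀ x : H, Tendsto (fun n => P n x) atTop (𝓝 x)) :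
    SigmaSet M P ∪ specDisc (M + K) = SigmaSet (M + K) P ∪ specDisc M ∧
    ∀ z : ℂ, z.im ≠ 0 → (z ∈ SigmaSet M P ↔ z ∈ SigmaSet (M + K) P) := by
  have hMK : IsSelfAdjoint (M + K) := hM.add hK
  have f1 : ∀ z, z ∈ SigmaSet M P → z ∉ specDisc M → z ∈ SigmaSet (M + K) P := fun z h1 h2 =>
    half hM hKcomp P hPsa hPidem hPdim hPlim h1 h2
  have f2 : ∀ z, z ∈ SigmaSet (M + K) P → z ∉ specDisc (M + K) → z ∈ SigmaSet M P := by
    intro z h1 h2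
    have hKn : IsCompactOperator ⇑(-K) := hKcomp.neg
    have := half hMK hKn P hPsa hPidem hPdim hPlim h1 h2
    rwa [add_neg_cancel_right] at this
  refine ⟨?_, fun z hz => ⟨fun h => f1 z h (disc_im hM hz), fun h => f2 z h (disc_im hMK hz)⟩⟩
  ext z
  constructor
  · rintro (h | h)
    · by_cases hd : z ∈ specDisc M
      · exact Or.inr hd
      · exact Or.inl (f1 z h hd)
    · exact Or.inl (disc_mem P hPsa hPidem hPlim h)
  · rintro (h | h)
    · by_cases hd : z ∈ specDisc (M + K)
      · exact Or.inr hd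
      · exact Or.inl (f2 z h hd)
    · exact Or.inl (disc_mem P hPsa hPidem hPlim h)

end
end

section
/- Let M be a self-adjoint operator, (P_n) orthogonal projections with ranges L_n ⊆ Dom(M²), and suppose λ is an eigenvalue of M with eigenvector ψ ≠ 0 for which condition (H) holds: ‖P_n M P_n ψ − λψ‖ → 0 and ‖P_n M² P_n ψ − λ²ψ‖ → 0, and P_n ψ → ψ. Then σ_n(λ) → 0 as n → ∞. -/
open Filter Topology

noncomputable section

variable {H : Type*} [NormedAddCommGroup H] [InnerProductSpace ℂ H] [CompleteSpace H]

/-- If `λ` is an eigenvalue of the self-adjoint operator `M` with eigenvector `ψ ≠ 0`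
satisfying condition (H) (and `P_n ψ → ψ`), then `σ_n(λ) → 0`. -/
theorem sigma_tendsto_zero_at_eigenvalue
    (D : Submodule ℂ H) (M : H →ₗ[ℂ] H)
    -- `M` restricted to `D` is a (densely defined) self-adjoint operator:
    (hdense : Dense (D : Set H))
    (hsym : ∀ u ∈ D, ∀ v ∈ D, (inner ℂ (M u) v : ℂ) = inner ℂ u (M v))
    (hsa : ∀ x y : H, (∀ u ∈ D, (inner ℂ (M u) x : ℂ) = inner ℂ u y) → x ∈ D ∧ M x = y)
    -- `P n` is an orthogonal projection with finite-dimensional range contained in `Dom M²`: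
    (P : ℕ → H →L[ℂ] H)
    (hPsa : ∀ n, IsSelfAdjoint (P n))
    (hPidem : ∀ n, IsIdempotentElem (P n))
    (hPfin : ∀ n, FiniteDimensional ℂ (LinearMap.range (P n : H →ₗ[ℂ] H)))
    (hPdom : ∀ n, ∀ v ∈ LinearMap.range (P n : H →ₗ[ℂ] H), v ∈ D ∧ M v ∈ D)
    -- the eigenpair `(λ, ψ)` and condition (H):
    (l : ℝ) (ψ : H) (hψ0 : ψ ≠ 0) (hψD : ψ ∈ D) (heig : M ψ = (l : ℂ) • ψ)
    (hH1 : Tendsto (fun n => ‖P n (M (P n ψ)) - (l : ℂ) • ψ‖) atTop (𝓝 0))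
    (hH2 : Tendsto (fun n => ‖P n (M (M (P n ψ))) - ((l : ℂ) ^ 2) • ψ‖) atTop (𝓝 0))
    (hPψ : Tendsto (fun n => P n ψ) atTop (𝓝 ψ)) :
    Tendsto (fun n => sigma2 M (P n) (l : ℂ)) atTop (𝓝 0) := by
  have h1 : Tendsto (fun n => P n (M (P n ψ))) atTop (𝓝 ((l : ℂ) • ψ)) :=
    tendsto_iff_norm_sub_tendsto_zero.2 hH1
  have h2 : Tendsto (fun n => P n (M (M (P n ψ)))) atTop (𝓝 (((l : ℂ) ^ 2) • ψ)) :=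
    tendsto_iff_norm_sub_tendsto_zero.2 hH2
  have hPP : ∀ n, P n (P n ψ) = P n ψ := fun n =>
    congrArg (fun T : H →L[ℂ] H => T ψ) (hPidem n)
  have hexp : ∀ n, P n (sqz M (l : ℂ) (P n ψ)) =
      P n (M (M (P n ψ))) - (2 * (l : ℂ)) • P n (M (P n ψ)) + ((l : ℂ) ^ 2) • P n ψ := by
    intro n
    simp only [sqz, LinearMap.comp_apply, LinearMap.sub_apply, LinearMap.smul_apply,
      LinearMap.id_apply, map_sub, map_smul, hPP]
    module
  have h3 : Tendsto (fun n => P n (sqz M (l : ℂ) (P n ψ))) atTop (𝓝 0) := by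
    simp only [hexp]
    have h := (h2.sub (h1.const_smul (2 * (l : ℂ)))).add (hPψ.const_smul ((l : ℂ) ^ 2))
    have h0 : ((l : ℂ) ^ 2) • ψ - (2 * (l : ℂ)) • ((l : ℂ) • ψ) + ((l : ℂ) ^ 2) • ψ = 0 := by
      module
    rwa [h0] at h
  have h4 : Tendsto (fun n => ‖P n (sqz M (l : ℂ) (P n ψ))‖ / ‖P n ψ‖) atTop (𝓝 0) := by
    have h := h3.norm.div hPψ.norm (norm_ne_zero_iff.2 hψ0)
    rw [norm_zero, zero_div] at h
    exact h
  refine tendsto_of_tendsto_of_tendsto_of_le_of_le' tendsto_const_nhds h4 ?_ ?_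
  · refine Eventually.of_forall fun n => Real.sInf_nonneg ?_
    rintro r ⟨v, -, -, rfl⟩
    positivity
  · filter_upwards [hPψ.eventually_ne hψ0] with n hn
    refine csInf_le ⟨0, ?_⟩ ⟨P n ψ, ⟨ψ, rfl⟩, hn, rfl⟩
    rintro r ⟨v, -, -, rfl⟩
    positivity

end
end

section
/- Let H be a bounded self-adjoint operator with Spec H = Spec_ess H, let ψ be a unit vector, a > 0, and K := a⟨·, ψ⟩ψ. Then every isolated eigenvalue λ of H + K of finite multiplicity is non-degenerate (has multiplicity one), and for λ ∉ Spec H one has: λ is an eigenvalue of H + K if and only if ⟨(λ − H)^{-1}ψ, ψ⟩ = a^{-1}. -/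
open Filter Topology

noncomputable section

variable {H : Type*} [NormedAddCommGroup H] [InnerProductSpace ℂ H] [CompleteSpace H]

lemma aux_mul_apply (S T : H →L[ℂ] H) (x : H) : (S * T) x = S (T x) := rfl

lemma aux_cfc (T : H →L[ℂ] H) (hT : IsStarNormal T) (l : ℂ)
    (hiso : ∃ ε > 0, ∀ w ∈ spectrum ℂ T, w ≠ l → ε ≤ ‖w - l‖) :
    ∃ P G : H →L[ℂ] H, (T - algebraMap ℂ _ l) * G = 1 - P ∧ G * (T - algebraMap ℂ _ l) = 1 - P ∧
      (T - algebraMap ℂ _ l) * P = 0 ∧ P * (T - algebraMap ℂ _ l) = 0 ∧ P * G = 0 ∧ G * P = 0 := by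
  obtain ⟨ε, hε, hw⟩ := hiso
  set f : ℂ → ℂ := fun x => if x = l then 1 else 0 with hf
  set g : ℂ → ℂ := fun x => if x = l then 0 else (x - l)⁻¹ with hg
  have key : ∀ x ∈ spectrum ℂ T, (x = l → ∀ᶠ y in 𝓝[spectrum ℂ T] x, y = l) ∧
      (x ≠ l → ∀ᶠ y in 𝓝[spectrum ℂ T] x, y ≠ l) := by
    intro x hx
    constructor
    · rintro rfl
      filter_upwards [self_mem_nhdsWithin, mem_nhdsWithin_of_mem_nhds (Metric.ball_mem_nhds x hε)]
        with y hy hy2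
      by_contra hne
      have := hw y hy hne
      rw [Metric.mem_ball, dist_eq_norm] at hy2
      linarith
    · intro hne
      exact mem_nhdsWithin_of_mem_nhds (isOpen_ne.mem_nhds hne)
  have hfc : ContinuousOn f (spectrum ℂ T) := by
    intro x hx
    by_cases h : x = l
    · refine (continuousWithinAt_const (b := (1:ℂ))).congr_of_eventuallyEq ?_ (by simp [hf, h])
      filter_upwards [(key x hx).1 h] with y hy
      simp [hf, hy]
    · refine (continuousWithinAt_const (b := (0:ℂ))).congr_of_eventuallyEq ?_ (by simp [hf, h])
      filter_upwards [(key x hx).2 h] with y hy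
      simp [hf, hy]
  have hgc : ContinuousOn g (spectrum ℂ T) := by
    intro x hx
    by_cases h : x = l
    · refine (continuousWithinAt_const (b := (0:ℂ))).congr_of_eventuallyEq ?_ (by simp [hg, h])
      filter_upwards [(key x hx).1 h] with y hy
      simp [hg, hy]
    · have : ContinuousWithinAt (fun y : ℂ => (y - l)⁻¹) (spectrum ℂ T) x :=
        ContinuousWithinAt.inv₀ (by fun_prop) (sub_ne_zero.2 h)
      refine this.congr_of_eventuallyEq ?_ (by simp [hg, h])
      filter_upwards [(key x hx).2 h] with y hy
      simp [hg, hy]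
  have hic : ContinuousOn (fun x : ℂ => x - l) (spectrum ℂ T) := by fun_prop
  have hB : T - algebraMap ℂ _ l = cfc (fun x : ℂ => x - l) T := by
    rw [cfc_sub (fun x : ℂ => x) (fun _ => l) T, cfc_id' ℂ T, cfc_const l T]
  have h1P : (1 : H →L[ℂ] H) - cfc f T = cfc (fun x => 1 - f x) T := by
    rw [cfc_sub (fun _ => (1:ℂ)) f T, cfc_const_one ℂ T]
  refine ⟨cfc f T, cfc g T, ?_⟩
  rw [hB, h1P, ← cfc_mul _ g T, ← cfc_mul g _ T, ← cfc_mul _ f T, ← cfc_mul f _ T, ← cfc_mul f g T,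
    ← cfc_mul g f T]
  have hz : ∀ k : ℂ → ℂ, (∀ x, k x = 0) → cfc k T = 0 := by
    intro k hk
    rw [show k = fun _ => 0 from funext hk]
    exact cfc_const_zero ℂ T
  refine ⟨?_, ?_, hz _ ?_, hz _ ?_, hz _ ?_, hz _ ?_⟩
  · congr 1; funext x; by_cases h : x = l
    · simp [hf, hg, h]
    · simp [hf, hg, h, sub_ne_zero.2 h]
  · congr 1; funext x; by_cases h : x = l
    · simp [hf, hg, h]
    · simp [hf, hg, h, sub_ne_zero.2 h]
  all_goals intro x; by_cases h : x = l <;> simp [hf, hg, h]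

/-- Rank one perturbation keeps isolation. -/
lemma aux_iso (A : H →L[ℂ] H) (ψ : H) (hψ : ψ ≠ 0) (a : ℂ) (l : ℂ) (hl : l.im = 0)
    (hA : IsSelfAdjoint A) (P G B : H →L[ℂ] H)
    (hB : B = A + a • (innerSL ℂ ψ).smulRight ψ - algebraMap ℂ _ l)
    (h1 : B * G = 1 - P) (h2 : G * B = 1 - P) (h3 : B * P = 0) (h4 : P * B = 0)
    (h5 : P * G = 0) (h6 : G * P = 0) :
    ∀ᶠ w in 𝓝[≠] (0 : ℂ), IsUnit (A - algebraMap ℂ _ (l + w)) := by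
  set K : H →L[ℂ] H := a • (innerSL ℂ ψ).smulRight ψ with hK
  have hKx : ∀ x, K x = (a * inner ℂ ψ x) • ψ := by
    intro x; simp [hK, smul_smul]
  set S : ℂ → (H →L[ℂ] H) := fun w => Ring.inverse (1 - w • G) with hS
  have hSan : AnalyticAt ℂ S 0 := by
    have := analyticAt_inverse (𝕜 := ℂ) (A := H →L[ℂ] H) 1
    have h' : AnalyticAt ℂ (fun w : ℂ => (1 : H →L[ℂ] H) - w • G) 0 := by fun_prop
    refine AnalyticAt.fun_comp (g := Ring.inverse) ?_ h'
    simpa using this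
  set R : ℂ → (H →L[ℂ] H) := fun w => G * S w - w⁻¹ • P with hR
  set F : ℂ → ℂ := fun w => w + a * inner ℂ ψ (P ψ) - a * w * inner ℂ ψ (G (S w ψ)) with hF
  have hFan : AnalyticAt ℂ F 0 := by
    have h7 : AnalyticAt ℂ (fun w => inner ℂ ψ (G (S w ψ))) 0 := by
      have := (((innerSL ℂ ψ).comp (G.comp (ContinuousLinearMap.apply ℂ H ψ))).analyticAt (S 0)).fun_comp hSan
      simpa using this
    have h8 : AnalyticAt ℂ (fun w : ℂ => w) 0 := analyticAt_id
    exact (h8.add analyticAt_const).sub ((analyticAt_const.mul h8).mul h7)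
  have hunit : ∀ᶠ w in 𝓝 (0:ℂ), IsUnit (1 - w • G) := by
    have hc : ContinuousAt (fun w : ℂ => (1 : H →L[ℂ] H) - w • G) 0 := by fun_prop
    exact hc.eventually (Units.isOpen.mem_nhds (by simp))
  have hFR : ∀ w ≠ 0, F w = w * (1 - a * inner ℂ ψ (R w ψ)) := by
    intro w hw
    simp only [hF, hR, sub_apply, aux_mul_apply,
      smul_apply, inner_sub_right, inner_smul_right]
    field_simp
    ring
  have hinv : ∀ w ≠ 0, IsUnit (1 - w • G) →
      (B - algebraMap ℂ _ w) * R w = 1 ∧ R w * (B - algebraMap ℂ _ w) = 1 := by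
    intro w hw hu
    have e1 : (1 - w • G) * S w = 1 := Ring.mul_inverse_cancel _ hu
    have e2 : S w * (1 - w • G) = 1 := Ring.inverse_mul_cancel _ hu
    have e3 : P * S w = P := by
      have : P * ((1 - w • G) * S w) = P := by rw [e1, mul_one]
      rwa [← mul_assoc, mul_sub, mul_smul_comm, h5, smul_zero, sub_zero, mul_one] at this
    have e4 : S w * G = G * S w := by
      have hc : Commute (1 - w • G) G :=
        (Commute.one_left G).sub_left ((Commute.refl G).smul_left w)
      calc S w * G = S w * (G * ((1 - w • G) * S w)) := by rw [e1, mul_one]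
        _ = S w * ((1 - w • G) * G) * S w := by rw [hc.eq]; simp only [mul_assoc]
        _ = (S w * (1 - w • G)) * (G * S w) := by simp only [mul_assoc]
        _ = G * S w := by rw [e2, one_mul]
    have e5 : S w * P = P := by
      have : S w * ((1 - w • G) * P) = P := by rw [← mul_assoc, e2, one_mul]
      rwa [sub_mul, smul_mul_assoc, h6, smul_zero, sub_zero, one_mul] at this
    have e6 : S w - w • (G * S w) = 1 := by
      rw [← e1, sub_mul, one_mul, smul_mul_assoc]
    constructor
    · simp only [hR]
      rw [Algebra.algebraMap_eq_smul_one, sub_mul, mul_sub, mul_sub, ← mul_assoc, h1, sub_mul, e3, one_mul,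
        mul_smul_comm, h3, smul_mul_assoc, smul_mul_assoc, one_mul, one_mul, smul_smul,
        mul_inv_cancel₀ hw, smul_zero, one_smul, ← e6]
      abel
    · simp only [hR]
      rw [Algebra.algebraMap_eq_smul_one, mul_sub, sub_mul, sub_mul, ← e4, mul_assoc, h2, mul_sub, e5, mul_one,
        smul_mul_assoc, h4, mul_smul_comm, mul_smul_comm, mul_one, mul_one, smul_smul,
        mul_inv_cancel₀ hw, smul_zero, one_smul, e4, ← e6]
      abel
  have hAB : ∀ w, A - algebraMap ℂ _ (l + w) = (B - algebraMap ℂ _ w) - K := by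
    intro w; rw [hB, map_add]; abel
  rcases hFan.eventually_eq_zero_or_eventually_ne_zero with h0 | h0
  · exfalso
    have hboth := h0.and hunit
    rw [Metric.eventually_nhds_iff] at hboth
    obtain ⟨δ, hδ, hb⟩ := hboth
    set w : ℂ := ((δ / 2 : ℝ) : ℂ) * Complex.I with hwd
    have hw0 : w ≠ 0 := by
      simp [hwd, hδ.ne']
    have hwn : dist w 0 < δ := by
      rw [dist_zero_right, hwd, norm_mul, Complex.norm_I, mul_one, Complex.norm_real, Real.norm_eq_abs,
        abs_of_pos (by positivity)]
      linarith
    obtain ⟨hFw, huw⟩ := hb hwn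
    obtain ⟨r1, r2⟩ := hinv w hw0 huw
    rw [hFR w hw0] at hFw
    have hs : 1 - a * inner ℂ ψ (R w ψ) = 0 := (mul_eq_zero.1 hFw).resolve_left hw0
    have hker : (A - algebraMap ℂ _ (l + w)) (R w ψ) = 0 := by
      rw [hAB, sub_apply, hKx, ← sub_eq_zero.1 hs, one_smul]
      have := congrArg (fun X : H →L[ℂ] H => X ψ) r1
      simp only [aux_mul_apply, one_apply_eq_self] at this
      rw [this, sub_self]
    have hne : R w ψ ≠ 0 := by
      intro h
      have := congrArg (fun X : H →L[ℂ] H => X ψ) r1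
      simp only [aux_mul_apply, one_apply_eq_self] at this
      rw [h, map_zero] at this
      exact hψ this.symm
    have hmem : l + w ∈ spectrum ℂ A := by
      rw [spectrum.mem_iff]
      intro hu
      rw [← IsUnit.neg_iff, neg_sub] at hu
      obtain ⟨u, hu⟩ := hu
      apply hne
      have h9 : ((↑u⁻¹ : H →L[ℂ] H) * (u : H →L[ℂ] H)) (R w ψ) = 0 := by
        rw [aux_mul_apply, hu, hker, map_zero]
      rwa [Units.inv_mul, one_apply_eq_self] at h9
    have him := hA.im_eq_zero_of_mem_spectrum hmem
    rw [Complex.add_im, hl, hwd] at him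
    simp at him
    linarith
  · filter_upwards [h0, self_mem_nhdsWithin, mem_nhdsWithin_of_mem_nhds hunit] with w hw hw0 hu
    have hw0 : w ≠ 0 := hw0
    obtain ⟨r1, r2⟩ := hinv w hw0 hu
    rw [hFR w hw0] at hw
    set c := 1 - a * inner ℂ ψ (R w ψ) with hc
    have hc0 : c ≠ 0 := (mul_ne_zero_iff.1 hw).2
    have hKRK : K * R w * K = (1 - c) • K := by
      ext x
      simp only [aux_mul_apply, smul_apply, hKx, map_smul,
        inner_smul_right, smul_smul, hc]
      congr 1; ring
    set D := B - algebraMap ℂ (H →L[ℂ] H) w with hD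
    rw [hAB]
    have hcc : (1:ℂ) - c⁻¹ + c⁻¹ * (1 - c) = 0 := by field_simp; ring
    rw [← hD]
    clear_value c D K
    refine isUnit_iff_exists.2 ⟨R w + c⁻¹ • (R w * K * R w), ?_, ?_⟩
    · calc (D - K) * (R w + c⁻¹ • (R w * K * R w))
          = D * R w + c⁻¹ • ((D * R w) * (K * R w)) - K * R w - c⁻¹ • ((K * R w * K) * R w) := by
            simp only [sub_mul, mul_add, mul_smul_comm, mul_assoc]; module
        _ = 1 - ((1:ℂ) - c⁻¹ + c⁻¹ * (1 - c)) • (K * R w) := by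
            rw [r1, hKRK, one_mul, smul_mul_assoc, smul_smul]
            module
        _ = 1 := by rw [hcc, zero_smul, sub_zero]
    · calc (R w + c⁻¹ • (R w * K * R w)) * (D - K)
          = R w * D + c⁻¹ • ((R w * K) * (R w * D)) - R w * K - c⁻¹ • (R w * (K * R w * K)) := by
            simp only [mul_sub, add_mul, smul_mul_assoc, mul_assoc]; module
        _ = 1 - ((1:ℂ) - c⁻¹ + c⁻¹ * (1 - c)) • (R w * K) := by
            rw [r2, hKRK, mul_one, mul_smul_comm, smul_smul]
            module
        _ = 1 := by rw [hcc, zero_smul, sub_zero]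

/-- Let `H₀` be bounded self-adjoint with `Spec H₀ = Spec_ess H₀` (no discrete spectrum),
`‖ψ‖ = 1`, `a > 0` and `K = a⟨·,ψ⟩ψ`.  Then every isolated eigenvalue of finite
multiplicity of `H₀ + K` is non-degenerate, and for `λ ∉ Spec H₀`, `λ` is an eigenvalue of
`H₀ + K` iff `⟨(λ - H₀)⁻¹ ψ, ψ⟩ = a⁻¹`. -/
theorem rank_one_perturbation_eigenvalues
    (H₀ : H →L[ℂ] H) (hH₀ : IsSelfAdjoint H₀)
    (hess : specDisc H₀ = ∅)
    (ψ : H) (hψ : ‖ψ‖ = 1) (a : ℝ) (ha : 0 < a) :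
    (∀ l : ℂ, l ∈ specDisc (H₀ + (a : ℂ) • (innerSL ℂ ψ).smulRight ψ) →
      Module.finrank ℂ
        ↥(LinearMap.ker (((H₀ + (a : ℂ) • (innerSL ℂ ψ).smulRight ψ) : H →ₗ[ℂ] H)
            - l • LinearMap.id)) = 1) ∧
    ∀ l : ℂ, l ∉ spectrum ℂ H₀ →
      ((∃ φ : H, φ ≠ 0 ∧ (H₀ + (a : ℂ) • (innerSL ℂ ψ).smulRight ψ) φ = l • φ) ↔
        (inner ℂ ψ (Ring.inverse (algebraMap ℂ (H →L[ℂ] H) l - H₀) ψ) : ℂ) = (a : ℂ)⁻¹) := by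
  have hψ0 : ψ ≠ 0 := by rintro rfl; simp at hψ
  have ha0 : (a : ℂ) ≠ 0 := by exact_mod_cast ha.ne'
  constructor
  · rintro l ⟨hlT, hiso, hbot, hfin⟩
    set T : H →L[ℂ] H := H₀ + (a : ℂ) • (innerSL ℂ ψ).smulRight ψ with hT
    have hTx : ∀ x, T x = H₀ x + ((a:ℂ) * inner ℂ ψ x) • ψ := by
      intro x; rw [mul_smul]; rfl
    have hTsa : IsSelfAdjoint T := by
      rw [ContinuousLinearMap.isSelfAdjoint_iff_isSymmetric] at hH₀ ⊢
      intro x y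
      have := hH₀ x y
      simp only [ContinuousLinearMap.coe_coe] at this ⊢
      rw [hTx, hTx, inner_add_left, inner_add_right, this, inner_smul_left, inner_smul_right]
      simp
      ring
    change Module.finrank ℂ ↥(LinearMap.ker ((T : H →ₗ[ℂ] H) - l • LinearMap.id)) = 1
    set N := LinearMap.ker ((T : H →ₗ[ℂ] H) - l • LinearMap.id) with hN
    have hmemN : ∀ x, x ∈ N ↔ T x = l • x := by
      intro x; simp [hN, sub_eq_zero]
    set q : H →ₗ[ℂ] ℂ := (innerSL ℂ ψ : H →L[ℂ] ℂ).toLinearMap with hq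
    have hqx : ∀ x, q x = inner ℂ ψ x := fun x => by simp [hq]
    by_cases hinj : ∀ x ∈ N, inner ℂ ψ x = 0 → x = 0
    · have hle : Module.finrank ℂ N ≤ Module.finrank ℂ ℂ := by
        apply LinearMap.finrank_le_finrank_of_injective (f := q.comp N.subtype)
        rw [← LinearMap.ker_eq_bot, LinearMap.ker_eq_bot']
        rintro ⟨x, hx⟩ h
        have := hinj x hx (by simpa [hqx] using h)
        simpa using this
      have hpos : Module.finrank ℂ N ≠ 0 := by
        rwa [Ne, Submodule.finrank_eq_zero]
      rw [Module.finrank_self] at hle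
      exact le_antisymm hle (Nat.one_le_iff_ne_zero.2 hpos)
    · exfalso
      push Not at hinj
      obtain ⟨φ, hφN, hφ, hφ0⟩ := hinj
      have hφe : H₀ φ = l • φ := by
        have := (hmemN φ).1 hφN
        rwa [hTx, hφ, mul_zero, zero_smul, add_zero] at this
      have hlim : l.im = 0 := hTsa.im_eq_zero_of_mem_spectrum hlT
      obtain ⟨P, G, h1, h2, h3, h4, h5, h6⟩ := aux_cfc T hTsa.isStarNormal l hiso
      have hev := aux_iso H₀ ψ hψ0 a l hlim hH₀ P G _ rfl h1 h2 h3 h4 h5 h6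
      have hmem0 : ∀ x, x ∈ LinearMap.ker ((H₀ : H →ₗ[ℂ] H) - l • LinearMap.id) ↔ H₀ x = l • x := by
        intro x; simp [sub_eq_zero]
      have : l ∈ specDisc H₀ := by
        refine ⟨?_, ?_, ?_, ?_⟩
        · rw [spectrum.mem_iff]
          intro hu
          obtain ⟨u, hu⟩ := hu
          apply hφ0
          have h9 : ((↑u⁻¹ : H →L[ℂ] H) * (u : H →L[ℂ] H)) φ = 0 := by
            rw [aux_mul_apply, hu]
            simp [Algebra.algebraMap_eq_smul_one, hφe]
          rwa [Units.inv_mul, one_apply_eq_self] at h9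
        · rw [eventually_nhdsWithin_iff, Metric.eventually_nhds_iff] at hev
          obtain ⟨ε, hε, he⟩ := hev
          refine ⟨ε, hε, fun w hw hne => ?_⟩
          by_contra hlt
          push Not at hlt
          have := he (y := w - l) (by simpa using hlt) (sub_ne_zero.2 hne)
          rw [add_sub_cancel, ← IsUnit.neg_iff, neg_sub] at this
          exact hw this
        · intro hb
          apply hφ0
          have := (hmem0 φ).2 hφe
          rw [hb] at this
          simpa using this
        · refine Module.Finite.iff_fg.2 ?_
          refine Submodule.fg_of_fg_map_of_fg_inf_ker q (IsNoetherian.noetherian _) ?_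
          have hle : LinearMap.ker ((H₀ : H →ₗ[ℂ] H) - l • LinearMap.id) ⊓ LinearMap.ker q ≤ N := by
            rintro x ⟨hx1, hx2⟩
            have hx1 := (hmem0 x).1 hx1
            have hx2 : inner ℂ ψ x = 0 := by rw [← hqx]; exact hx2
            rw [hmemN, hTx, hx1, hx2, mul_zero, zero_smul, add_zero]
          have := Submodule.finiteDimensional_of_le hle
          exact Module.Finite.iff_fg.1 this
      rw [hess] at this
      exact this
  · intro l hl
    have hu : IsUnit (algebraMap ℂ (H →L[ℂ] H) l - H₀) := by
      simpa [spectrum.mem_iff] using hl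
    set R := Ring.inverse (algebraMap ℂ (H →L[ℂ] H) l - H₀) with hR
    have r1 : ∀ x, l • R x - H₀ (R x) = x := by
      intro x
      have := congrArg (fun X : H →L[ℂ] H => X x) (Ring.mul_inverse_cancel _ hu)
      exact this
    have r2 : ∀ x, R (l • x - H₀ x) = x := by
      intro x
      have := congrArg (fun X : H →L[ℂ] H => X x) (Ring.inverse_mul_cancel _ hu)
      exact this
    have hTx : ∀ x, (H₀ + (a : ℂ) • (innerSL ℂ ψ).smulRight ψ) x
        = H₀ x + ((a:ℂ) * inner ℂ ψ x) • ψ := by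
      intro x; rw [mul_smul]; rfl
    constructor
    · rintro ⟨φ, hφ0, hφ⟩
      rw [hTx] at hφ
      have e1 : φ = ((a:ℂ) * inner ℂ ψ φ) • R ψ := by
        have e0 : l • φ - H₀ φ = ((a:ℂ) * inner ℂ ψ φ) • ψ := by rw [← hφ]; abel
        rw [← map_smul, ← e0, r2]
      have hs : inner ℂ ψ φ ≠ 0 := by
        intro h
        rw [h] at e1
        simp at e1
        exact hφ0 e1
      have e2 : inner ℂ ψ φ = ((a:ℂ) * inner ℂ ψ φ) * inner ℂ ψ (R ψ) := by
        conv_lhs => rw [e1]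
        rw [inner_smul_right]
      have e3 : (a:ℂ) * inner ℂ ψ (R ψ) = 1 := by
        apply mul_left_cancel₀ hs
        rw [mul_one]
        conv_rhs => rw [e2]
        ring
      exact eq_inv_of_mul_eq_one_right e3
    · intro h
      refine ⟨R ψ, ?_, ?_⟩
      · intro h0
        rw [h0, inner_zero_right] at h
        exact inv_ne_zero ha0 h.symm
      · rw [hTx, h, mul_inv_cancel₀ ha0, one_smul]
        nth_rewrite 2 [← r1 ψ]
        abel

end
end
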